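/- arXiv:2407.08450 — 4 statements merged into one kernel-verified Lean document; each statement's English description precedes it below -/
import Mathlib

section
/- Let L be a hermitian linear matrix pencil of size d in noncommuting variables x₁,…,xₙ, and let ℓ = α₀ + α₁x₁ + ⋯ + αₙxₙ with α₀,…,αₙ ∈ ℝ. Then ℓ vanishes on the free spectrahedron D_L (i.e., for every k and every X ∈ D_L(k), α₀I_k + α₁X₁ + ⋯ + αₙXₙ = 0) if and only if ℓ vanishes on the first level D_L(1) (i.e., α₀ + α₁x₁ + ⋯ + αₙxₙ = 0 for every point x ∈ D_L(1) ⊆ ℝⁿ). -/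
open scoped Kronecker Matrix ComplexOrder

/-- Noncommutative polynomials: the free `ℂ`-algebra `ℂ⟨x₁,…,xₙ⟩` on `n` generators. -/
abbrev FreeAlg (n : ℕ) := FreeAlgebra ℂ (Fin n)

/-- Evaluation of a matrix of noncommutative polynomials at an `n`-tuple of `k × k` complex
matrices, i.e. the image under `id ⊗ ev_X`. -/
noncomputable def evalM {n k : ℕ} {I J : Type*} (f : Matrix I J (FreeAlg n))
    (X : Fin n → Matrix (Fin k) (Fin k) ℂ) : Matrix (I × Fin k) (J × Fin k) ℂ :=
  fun p q => FreeAlgebra.lift ℂ X (f p.1 q.1) p.2 q.2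

/-- The conjugate-linear involutive anti-automorphism on `ℂ⟨x⟩` fixing the generators:
reverse each word and conjugate each coefficient. -/
noncomputable def nstar {n : ℕ} (a : FreeAlg n) : FreeAlg n :=
  (FreeAlgebra.equivMonoidAlgebraFreeMonoid).symm
    (MonoidAlgebra.ofCoeff (Finsupp.mapDomain FreeMonoid.reverse
      (Finsupp.mapRange (starRingEnd ℂ) (map_zero _)
        ((FreeAlgebra.equivMonoidAlgebraFreeMonoid) a).coeff)))

/-- Conjugate-transpose of a matrix over `ℂ⟨x⟩`. -/
noncomputable def adjM {n : ℕ} {I J : Type*} (f : Matrix I J (FreeAlg n)) :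
    Matrix J I (FreeAlg n) :=
  fun i j => nstar (f j i)

/-- A matrix `f` over `ℂ⟨x⟩` is hermitian if `f = f*`. -/
def IsHermPoly {n : ℕ} {I : Type*} (f : Matrix I I (FreeAlg n)) : Prop :=
  ∀ i j, f i j = nstar (f j i)

/-- Evaluation `L(X) = A₀ ⊗ I + ∑ⱼ Aⱼ ⊗ Xⱼ` of a linear matrix pencil at a matrix tuple. -/
noncomputable def pencilK {n d k : ℕ} (A0 : Matrix (Fin d) (Fin d) ℂ)
    (A : Fin n → Matrix (Fin d) (Fin d) ℂ) (X : Fin n → Matrix (Fin k) (Fin k) ℂ) :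
    Matrix (Fin d × Fin k) (Fin d × Fin k) ℂ :=
  A0 ⊗ₖ (1 : Matrix (Fin k) (Fin k) ℂ) + ∑ j, A j ⊗ₖ X j

/-- Evaluation `L(X) = I ⊗ I + ∑ⱼ Aⱼ ⊗ Xⱼ` of a monic linear matrix pencil. -/
noncomputable def monicK {n d k : ℕ} (A : Fin n → Matrix (Fin d) (Fin d) ℂ)
    (X : Fin n → Matrix (Fin k) (Fin k) ℂ) : Matrix (Fin d × Fin k) (Fin d × Fin k) ℂ :=
  1 + ∑ j, A j ⊗ₖ X j

/-- The monic pencil `I + ∑ⱼ Aⱼ xⱼ` as a matrix of noncommutative polynomials. -/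
noncomputable def monicPoly {n e : ℕ} (A : Fin n → Matrix (Fin e) (Fin e) ℂ) :
    Matrix (Fin e) (Fin e) (FreeAlg n) :=
  1 + ∑ j, (A j).map (fun c => c • FreeAlgebra.ι ℂ j)

/-- The subspace of noncommutative polynomials of degree at most `δ`:
the `ℂ`-linear span of products of at most `δ` generators. -/
noncomputable def degLE (n δ : ℕ) : Submodule ℂ (FreeAlg n) :=
  Submodule.span ℂ
    {a | ∃ w : List (Fin n), w.length ≤ δ ∧ a = (w.map (FreeAlgebra.ι ℂ)).prod}

/-- A matrix over `ℂ⟨x⟩` has degree at most `δ` if each entry does. -/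
def matDegLE {n : ℕ} {I J : Type*} (f : Matrix I J (FreeAlg n)) (δ : ℕ) : Prop :=
  ∀ i j, f i j ∈ degLE n δ

/-- The degree of a matrix of noncommutative polynomials: the least `δ` such that every entry
lies in the span of words of length at most `δ`. -/
noncomputable def matDeg {n : ℕ} {I J : Type*} (f : Matrix I J (FreeAlg n)) : ℕ :=
  sInf {δ | matDegLE f δ}

/-- Evaluation of `f` at the zero scalar tuple, `f(0) ∈ M_d(ℂ)`. -/
noncomputable def evalZero {n : ℕ} {I J : Type*} (f : Matrix I J (FreeAlg n)) :
    Matrix I J ℂ :=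
  f.map (⇑(FreeAlgebra.lift ℂ (fun _ : Fin n => (0 : ℂ))))

/-- Compression of the pencil by a vector. -/
theorem compress_posSemidef {n d k : ℕ}
    (A0 : Matrix (Fin d) (Fin d) ℂ) (A : Fin n → Matrix (Fin d) (Fin d) ℂ)
    (X : Fin n → Matrix (Fin k) (Fin k) ℂ) (h : (pencilK A0 A X).PosSemidef)
    (v : Fin k → ℂ) :
    ((star v ⬝ᵥ v) • A0 + ∑ j, (star v ⬝ᵥ (X j *ᵥ v)) • A j).PosSemidef := by
  have h1 := h.conjTranspose_mul_mul_same
    ((1 : Matrix (Fin d) (Fin d) ℂ) ⊗ₖ Matrix.replicateCol Unit v)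
  have h2 := h1.submatrix (fun i : Fin d => (i, ()))
  convert h2 using 1
  have key : ∀ (B : Matrix (Fin d) (Fin d) ℂ) (Y : Matrix (Fin k) (Fin k) ℂ),
      (((1 : Matrix (Fin d) (Fin d) ℂ) ⊗ₖ Matrix.replicateCol Unit v)ᴴ * (B ⊗ₖ Y) *
        ((1 : Matrix (Fin d) (Fin d) ℂ) ⊗ₖ Matrix.replicateCol Unit v)).submatrix
        (fun i : Fin d => (i, ())) (fun i : Fin d => (i, ())) = (star v ⬝ᵥ (Y *ᵥ v)) • B := by
    intro B Y
    rw [Matrix.conjTranspose_kronecker, ← Matrix.mul_kronecker_mul, ← Matrix.mul_kronecker_mul]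
    ext i j
    simp only [Matrix.submatrix_apply, Matrix.kroneckerMap_apply, Matrix.conjTranspose_one,
      Matrix.one_mul, Matrix.mul_one, Matrix.smul_apply, smul_eq_mul]
    rw [mul_comm, Matrix.mul_assoc]
    rfl
  unfold pencilK
  rw [Matrix.mul_add, Matrix.add_mul, Matrix.mul_sum, Matrix.sum_mul, Matrix.submatrix_add]
  simp only [Pi.add_apply]
  rw [key, Matrix.one_mulVec]
  congr 1
  ext i j
  simp only [← key, Matrix.sum_apply, Matrix.submatrix_apply]

theorem linear_vanishes_on_freeSpectrahedron_iff_level_one {n d : ℕ}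
    (A0 : Matrix (Fin d) (Fin d) ℂ) (A : Fin n → Matrix (Fin d) (Fin d) ℂ)
    (hA0 : A0.IsHermitian) (hA : ∀ j, (A j).IsHermitian)
    (α0 : ℝ) (α : Fin n → ℝ) :
    (∀ (k : ℕ) (X : Fin n → Matrix (Fin k) (Fin k) ℂ), (∀ j, (X j).IsHermitian) →
        (pencilK A0 A X).PosSemidef →
        (α0 : ℂ) • (1 : Matrix (Fin k) (Fin k) ℂ) + ∑ j, (α j : ℂ) • X j = 0) ↔
      (∀ x : Fin n → ℝ, (A0 + ∑ j, (x j : ℂ) • A j).PosSemidef →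
        α0 + ∑ j, α j * x j = 0) := by
  constructor
  · intro H x hx
    have h := H 1 (fun j => (x j : ℂ) • (1 : Matrix (Fin 1) (Fin 1) ℂ)) ?_ ?_
    · have h0 := congrFun (congrFun h 0) 0
      simp [Matrix.sum_apply] at h0
      exact_mod_cast h0
    · intro j
      ext a b
      fin_cases a; fin_cases b
      simp
    · have h2 := hx.submatrix (fun p : Fin d × Fin 1 => p.1)
      convert h2 using 1
      ext ⟨i, a⟩ ⟨j, b⟩
      fin_cases a; fin_cases b
      simp [pencilK, Matrix.sum_apply, mul_comm]
  · intro H k X hX hP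
    set M : Matrix (Fin k) (Fin k) ℂ :=
      (α0 : ℂ) • (1 : Matrix (Fin k) (Fin k) ℂ) + ∑ j, (α j : ℂ) • X j with hM
    have hq : ∀ v : Fin k → ℂ, star v ⬝ᵥ (M *ᵥ v) = 0 := by
      intro v
      by_cases hv : v = 0
      · simp [hv]
      have hpos : 0 < star v ⬝ᵥ v := Matrix.dotProduct_star_self_pos_iff.mpr hv
      obtain ⟨hre, him⟩ := Complex.pos_iff.mp hpos
      set c : ℝ := (star v ⬝ᵥ v).re with hc
      have hcc : star v ⬝ᵥ v = (c : ℂ) := by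
        apply Complex.ext <;> simp [hc, ← him]
      have hx : ∀ j, star v ⬝ᵥ (X j *ᵥ v) = ((star v ⬝ᵥ (X j *ᵥ v)).re : ℂ) := by
        intro j
        apply Complex.ext
        · simp
        · simpa using (hX j).im_star_dotProduct_mulVec_self v
      have hcne : (c : ℂ) ≠ 0 := by exact_mod_cast hre.ne'
      have h1 := (compress_posSemidef A0 A X hP v).smul
        (show (0 : ℝ) ≤ c⁻¹ from (inv_pos.mpr hre).le)
      have h2 := H (fun j => c⁻¹ * (star v ⬝ᵥ (X j *ᵥ v)).re) (by
        convert h1 using 1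
        rw [smul_add, Finset.smul_sum, hcc]
        congr 1
        · ext i j
          simp [hcne]
        · refine Finset.sum_congr rfl fun l _ => ?_
          rw [hx l]
          ext i j
          simp [mul_assoc])
      have h3 : star v ⬝ᵥ (M *ᵥ v)
          = (α0 : ℂ) * (c : ℂ) + ∑ j, (α j : ℂ) * ((star v ⬝ᵥ (X j *ᵥ v)).re : ℂ) := by
        rw [hM, Matrix.add_mulVec, dotProduct_add, Matrix.smul_mulVec, Matrix.one_mulVec,
          dotProduct_smul, hcc, Matrix.sum_mulVec, dotProduct_sum, smul_eq_mul]
        congr 1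
        refine Finset.sum_congr rfl fun l _ => ?_
        rw [Matrix.smul_mulVec, dotProduct_smul, ← hx l, smul_eq_mul]
      have h4 : α0 * c + ∑ j, α j * (star v ⬝ᵥ (X j *ᵥ v)).re = 0 := by
        have : α0 * c + ∑ j, α j * (star v ⬝ᵥ (X j *ᵥ v)).re
            = c * (α0 + ∑ j, α j * (c⁻¹ * (star v ⬝ᵥ (X j *ᵥ v)).re)) := by
          rw [mul_add, Finset.mul_sum, mul_comm]
          congr 1
          refine Finset.sum_congr rfl fun l _ => ?_
          field_simp
        rw [this, h2, mul_zero]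
      rw [h3]
      exact_mod_cast h4
    have hMh : M.IsHermitian := by
      rw [hM]
      unfold Matrix.IsHermitian
      rw [Matrix.conjTranspose_add, Matrix.conjTranspose_sum]
      simp [Matrix.conjTranspose_smul, fun j => (hX j).eq]
    have hMp : M.PosSemidef :=
      Matrix.PosSemidef.of_dotProduct_mulVec_nonneg hMh fun v => (hq v).ge
    have hz : ∀ v, M *ᵥ v = 0 := fun v => (hMp.dotProduct_mulVec_zero_iff v).mp (hq v)
    ext i j
    have := congrFun (hz (Pi.single j 1)) i
    simpa using this
end

section
/- Uniqueness of minimal LMI representations: let L = I + A₁x₁ + ⋯ + Aₙxₙ (size d) and M = I + B₁x₁ + ⋯ + Bₙxₙ (size e) be monic hermitian linear matrix pencils, each minimal in the sense that every monic hermitian pencil N with D_N = D_L has size ≥ d, and every monic hermitian pencil N with D_N = D_M has size ≥ e. Then D_L = D_M if and only if d = e and there exists a unitary U ∈ M_d(ℂ) with Bⱼ = U Aⱼ U* for all j = 1,…,n. -/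
open scoped Kronecker Matrix ComplexOrder

/-- Two monic pencils define the same free spectrahedron. -/
def SameFreeSpectrahedron {n d e : ℕ} (A : Fin n → Matrix (Fin d) (Fin d) ℂ)
    (B : Fin n → Matrix (Fin e) (Fin e) ℂ) : Prop :=
  ∀ (k : ℕ) (X : Fin n → Matrix (Fin k) (Fin k) ℂ), (∀ j, (X j).IsHermitian) →
    ((monicK A X).PosSemidef ↔ (monicK B X).PosSemidef)

/-- The real quadratic form of a complex matrix. -/
noncomputable def qf {ι : Type*} [Fintype ι] (G : Matrix ι ι ℂ) (x : ι → ℂ) : ℝ :=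
  (star x ⬝ᵥ G *ᵥ x).re

section qfbasics
variable {ι κ τ : Type*} [Fintype ι] [Fintype κ] [Fintype τ]

lemma qf_add (G H : Matrix ι ι ℂ) (x : ι → ℂ) : qf (G + H) x = qf G x + qf H x := by
  simp [qf, Matrix.add_mulVec]

lemma qf_sub (G H : Matrix ι ι ℂ) (x : ι → ℂ) : qf (G - H) x = qf G x - qf H x := by
  simp [qf, Matrix.sub_mulVec]

lemma qf_sum (G : κ → Matrix ι ι ℂ) (x : ι → ℂ) : qf (∑ l, G l) x = ∑ l, qf (G l) x := by
  simp [qf, Matrix.sum_mulVec, dotProduct_sum]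

lemma qf_conj (G : Matrix κ κ ℂ) (V : Matrix κ ι ℂ) (x : ι → ℂ) :
    qf (Vᴴ * G * V) x = qf G (V *ᵥ x) := by
  simp only [qf, Matrix.star_mulVec, ← Matrix.mulVec_mulVec, Matrix.dotProduct_mulVec,
    Matrix.vecMul_vecMul]

lemma qf_gram [DecidableEq κ] (V : Matrix κ ι ℂ) (x : ι → ℂ) :
    qf (Vᴴ * V) x = qf 1 (V *ᵥ x) := by
  rw [← qf_conj, Matrix.mul_one]

lemma qf_smul (G : Matrix ι ι ℂ) (c : ℝ) (x : ι → ℂ) :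
    qf G ((c : ℂ) • x) = c ^ 2 * qf G x := by
  simp only [qf, Matrix.mulVec_smul, star_smul, smul_dotProduct, dotProduct_smul, smul_eq_mul]
  simp [← mul_assoc, pow_two]

lemma qf_one_eq [DecidableEq ι] (x : ι → ℂ) : qf 1 x = ∑ i, ‖x i‖ ^ 2 := by
  simp [qf, dotProduct, Complex.sq_norm, Complex.normSq_apply]

lemma qf_one_nonneg [DecidableEq ι] (x : ι → ℂ) : 0 ≤ qf 1 x := by
  rw [qf_one_eq]; positivity

lemma qf_one_eq_zero [DecidableEq ι] {x : ι → ℂ} (h : qf 1 x = 0) : x = 0 := by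
  rw [qf_one_eq, Finset.sum_eq_zero_iff_of_nonneg (fun _ _ => by positivity)] at h
  ext i
  simpa using h i (Finset.mem_univ _)

lemma qf_zero (G : Matrix ι ι ℂ) : qf G 0 = 0 := by simp [qf]

lemma qf_continuous (G : Matrix ι ι ℂ) : Continuous (qf G) := by
  unfold qf
  fun_prop

lemma psd_iff_qf {G : Matrix ι ι ℂ} (hG : G.IsHermitian) :
    G.PosSemidef ↔ ∀ x, 0 ≤ qf G x := by
  constructor
  · intro h x
    exact (Complex.le_def.1 (h.dotProduct_mulVec_nonneg x)).1
  · intro h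
    refine Matrix.PosSemidef.of_dotProduct_mulVec_nonneg hG fun x => ?_
    refine Complex.le_def.2 ⟨h x, ?_⟩
    have := hG.im_star_dotProduct_mulVec_self x
    simpa using this.symm

lemma isCompact_unit [DecidableEq ι] : IsCompact {x : ι → ℂ | qf 1 x = 1} := by
  refine Metric.isCompact_of_isClosed_isBounded (isClosed_eq (qf_continuous _) continuous_const) ?_
  refine (Metric.isBounded_closedBall (x := 0) (r := 1)).subset ?_
  intro x hx
  rw [mem_closedBall_zero_iff, pi_norm_le_iff_of_nonneg zero_le_one]
  intro i
  have h1 : ‖x i‖ ^ 2 ≤ 1 := by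
    rw [← (show qf 1 x = 1 from hx), qf_one_eq]
    exact Finset.single_le_sum (f := fun i => ‖x i‖ ^ 2) (fun _ _ => by positivity)
      (Finset.mem_univ i)
  nlinarith [norm_nonneg (x i)]

/-- homogeneous quadratic inequality from the unit sphere -/
lemma exists_unit [DecidableEq ι] {x : ι → ℂ} (hx : x ≠ 0) :
    ∃ c : ℝ, 0 < c ∧ c ^ 2 * qf 1 x = 1 := by
  have h0 : 0 < qf 1 x := lt_of_le_of_ne (qf_one_nonneg x) fun h => hx (qf_one_eq_zero h.symm)
  refine ⟨(Real.sqrt (qf 1 x))⁻¹, by positivity, ?_⟩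
  rw [inv_pow, Real.sq_sqrt h0.le, inv_mul_cancel₀ h0.ne']

lemma core [DecidableEq ι] (G : Matrix ι ι ℂ) (V : κ → Matrix ι ι ℂ) (A : τ → Matrix ι ι ℂ)
    (hA : ∀ j, (A j).IsHermitian)
    (hV : ∀ x, ∑ l, qf 1 (V l *ᵥ x) ≤ qf 1 x)
    (hVA : ∀ j, ∑ l, (V l)ᴴ * A j * V l = A j)
    (hG : ∀ x, ∑ l, qf G (V l *ᵥ x) ≤ qf G x)
    (x0 : ι → ℂ) (hx0 : qf G x0 < 0) :
    ∃ h, qf G h < 0 ∧ ∑ l, qf 1 (V l *ᵥ h) = qf 1 h ∧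
      ∀ j l, A j *ᵥ (V l *ᵥ h) = V l *ᵥ (A j *ᵥ h) := by
  -- minimise `qf G` on the unit sphere
  have hx0' : x0 ≠ 0 := by rintro rfl; simp [qf_zero] at hx0
  obtain ⟨c0, hc0, hc0'⟩ := exists_unit hx0'
  obtain ⟨y, hy, hymin⟩ := (isCompact_unit (ι := ι)).exists_isMinOn
    ⟨(c0 : ℂ) • x0, (qf_smul _ _ _).trans hc0'⟩ (qf_continuous G).continuousOn
  set lam := qf G y with hlam
  have hlow : ∀ x, lam * qf 1 x ≤ qf G x := by
    intro x
    by_cases hx : x = 0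
    · simp [hx, qf_zero]
    obtain ⟨c, hc, hc'⟩ := exists_unit hx
    have := hymin (show (c : ℂ) • x ∈ {x : ι → ℂ | qf 1 x = 1} from (qf_smul _ _ _).trans hc')
    simp only [Set.mem_ofPred_eq, qf_smul] at this
    have h2 : 0 < c ^ 2 := by positivity
    have : c ^ 2 * (lam * qf 1 x) ≤ c ^ 2 * qf G x := by
      calc _ = lam * (c ^ 2 * qf 1 x) := by ring
        _ = lam := by rw [hc', mul_one]
        _ ≤ _ := this
    exact le_of_mul_le_mul_left this h2
  have hneg : lam < 0 := by
    by_contra hcon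
    have := hlow x0
    nlinarith [qf_one_nonneg x0]
  -- maximise `∑ |A_j y|^2` among minimisers
  let s : (ι → ℂ) → ℝ := fun x => ∑ j, qf (A j * A j) x
  have hs : Continuous s := continuous_finsetSum _ fun j _ => qf_continuous _
  have hcomp : IsCompact ({x : ι → ℂ | qf 1 x = 1} ∩ {x | qf G x = lam}) :=
    isCompact_unit.inter_right (isClosed_eq (qf_continuous _) continuous_const)
  obtain ⟨h, ⟨hh1, hhG⟩, hmax⟩ := hcomp.exists_isMaxOn ⟨y, hy, rfl⟩ hs.continuousOn
  simp only [Set.mem_ofPred_eq] at hh1 hhG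
  have hupp : ∀ x, qf G x = lam * qf 1 x → s x ≤ s h * qf 1 x := by
    intro x hx'
    by_cases hx : x = 0
    · simp [hx, qf_zero, s]
    obtain ⟨c, hc, hc'⟩ := exists_unit hx
    have hmem : (c : ℂ) • x ∈ ({x : ι → ℂ | qf 1 x = 1} ∩ {x | qf G x = lam}) := by
      refine ⟨(qf_smul _ _ _).trans hc', ?_⟩
      simp only [Set.mem_ofPred_eq, qf_smul, hx']
      calc _ = lam * (c ^ 2 * qf 1 x) := by ring
        _ = lam := by rw [hc', mul_one]
    have := hmax hmem
    simp only [Set.mem_ofPred_eq, s, qf_smul, ← Finset.mul_sum] at this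
    have h2 : 0 < c ^ 2 := by positivity
    have : c ^ 2 * s x ≤ c ^ 2 * (s h * qf 1 x) := by
      calc _ ≤ s h := this
        _ = s h * (c ^ 2 * qf 1 x) := by rw [hc', mul_one]
        _ = _ := by ring
    exact le_of_mul_le_mul_left this h2
  -- isometry and invariance
  have e1 : lam * ∑ l, qf 1 (V l *ᵥ h) ≤ ∑ l, qf G (V l *ᵥ h) := by
    rw [Finset.mul_sum]; exact Finset.sum_le_sum fun l _ => hlow _
  have e2 := hG h
  have e3 := hV h
  have hiso : ∑ l, qf 1 (V l *ᵥ h) = 1 := by nlinarith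
  have e4 : ∑ l, lam * qf 1 (V l *ᵥ h) = ∑ l, qf G (V l *ᵥ h) := by
    rw [← Finset.mul_sum]
    apply le_antisymm e1
    rw [hiso]; linarith
  have e5 := (Finset.sum_eq_sum_iff_of_le (fun l _ => hlow (V l *ᵥ h))).1 e4
  have e6 : ∑ l, s (V l *ᵥ h) ≤ s h := by
    calc _ ≤ ∑ l, s h * qf 1 (V l *ᵥ h) :=
          Finset.sum_le_sum fun l hl => hupp _ (e5 l hl).symm
      _ = s h := by rw [← Finset.mul_sum, hiso, mul_one]
  have e7 : ∀ j, ∑ l, qf 1 ((A j * V l - V l * A j) *ᵥ h) ≤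
      ∑ l, qf (A j * A j) (V l *ᵥ h) - qf (A j * A j) h := by
    intro j
    have hAj : (A j)ᴴ = A j := hA j
    have hmat : ∑ l, (A j * V l - V l * A j)ᴴ * (A j * V l - V l * A j) =
        ∑ l, (V l)ᴴ * (A j * A j) * V l - A j * A j - A j * A j
          + ∑ l, (V l * A j)ᴴ * (V l * A j) := by
      have h1 : ∑ l, (V l)ᴴ * A j * V l * A j = A j * A j := by rw [← Finset.sum_mul, hVA]
      have h2 : ∑ l, A j * ((V l)ᴴ * A j * V l) = A j * A j := by rw [← Finset.mul_sum, hVA]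
      conv_rhs =>
        enter [1]
        rw [sub_sub]
        enter [2]
        rw [← h1]
        enter [2]
        rw [h1, ← h2]
      rw [← Finset.sum_add_distrib, ← Finset.sum_sub_distrib, ← Finset.sum_add_distrib]
      refine Finset.sum_congr rfl fun l _ => ?_
      simp only [Matrix.conjTranspose_sub, Matrix.conjTranspose_mul, hAj]
      noncomm_ring
    have := congrArg (fun M => qf M h) hmat
    simp only [qf_add, qf_sub, qf_sum, qf_conj, qf_gram] at this
    have h3 := hV (A j *ᵥ h)
    have h4 : qf 1 (A j *ᵥ h) = qf (A j * A j) h := by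
      rw [← qf_gram, hAj]
    have h5 : ∑ l, qf 1 ((V l * A j) *ᵥ h) = ∑ l, qf 1 (V l *ᵥ (A j *ᵥ h)) := by
      simp only [Matrix.mulVec_mulVec]
    rw [this, h5]
    linarith
  have e8 : ∑ j, ∑ l, qf 1 ((A j * V l - V l * A j) *ᵥ h) ≤ 0 := by
    refine (Finset.sum_le_sum fun j _ => e7 j).trans ?_
    rw [Finset.sum_sub_distrib, Finset.sum_comm]
    simp only [s] at e6
    linarith
  refine ⟨h, by rw [hhG]; exact hneg, by rw [hiso, hh1], fun j l => ?_⟩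
  have e9 : ∑ j, ∑ l, qf 1 ((A j * V l - V l * A j) *ᵥ h) = 0 :=
    le_antisymm e8 (Finset.sum_nonneg fun j _ => Finset.sum_nonneg fun l _ => qf_one_nonneg _)
  rw [Finset.sum_eq_zero_iff_of_nonneg
    (fun j _ => Finset.sum_nonneg fun l _ => qf_one_nonneg _)] at e9
  have e10 := e9 j (Finset.mem_univ _)
  rw [Finset.sum_eq_zero_iff_of_nonneg (fun l _ => qf_one_nonneg _)] at e10
  have e11 := qf_one_eq_zero (e10 l (Finset.mem_univ _))
  rw [Matrix.sub_mulVec, sub_eq_zero] at e11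
  simpa using e11

end qfbasics
section pencils

lemma exists_isometry {d : ℕ} (M : Submodule ℂ (Fin d → ℂ)) :
    ∃ J : Matrix (Fin d) (Fin (Module.finrank ℂ M)) ℂ, Jᴴ * J = 1 ∧
      ∀ x, x ∈ M ↔ ∃ z, x = J *ᵥ z := by
  let L := (WithLp.linearEquiv 2 ℂ (Fin d → ℂ)).symm
  let M' : Submodule ℂ (EuclideanSpace ℂ (Fin d)) := M.map L.toLinearMap
  have hfr : Module.finrank ℂ M' = Module.finrank ℂ M := LinearEquiv.finrank_map_eq L M
  let b := (stdOrthonormalBasis ℂ M').reindex (finCongr hfr)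
  refine ⟨Matrix.of fun i a => (b a : EuclideanSpace ℂ (Fin d)) i, ?_, ?_⟩
  · ext a c
    have h := orthonormal_iff_ite.1 b.orthonormal a c
    rw [Submodule.coe_inner, PiLp.inner_apply] at h
    simp only [Matrix.mul_apply, Matrix.conjTranspose_apply, Matrix.of_apply, Matrix.one_apply]
    rw [← h]
    refine Finset.sum_congr rfl fun i _ => ?_
    simp [mul_comm]
  · intro x
    have hmul : ∀ z : Fin (Module.finrank ℂ M) → ℂ,
        (Matrix.of fun i a => (b a : EuclideanSpace ℂ (Fin d)) i) *ᵥ z =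
        WithLp.ofLp ((∑ a, z a • b a : M') : EuclideanSpace ℂ (Fin d)) := by
      intro z
      ext i
      simp [Matrix.mulVec, dotProduct, mul_comm]
    constructor
    · intro hx
      have hx' : L x ∈ M' := Submodule.mem_map_of_mem hx
      refine ⟨fun a => b.repr ⟨L x, hx'⟩ a, ?_⟩
      rw [hmul, b.sum_repr]
      rfl
    · rintro ⟨z, rfl⟩
      rw [hmul]
      obtain ⟨y, hy, hy'⟩ := (∑ a, z a • b a : M').2
      rw [← hy']
      exact hy

lemma monicK_herm {n d k : ℕ} {A : Fin n → Matrix (Fin d) (Fin d) ℂ}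
    (hA : ∀ j, (A j).IsHermitian) {X : Fin n → Matrix (Fin k) (Fin k) ℂ}
    (hX : ∀ j, (X j).IsHermitian) : (monicK A X).IsHermitian := by
  unfold monicK Matrix.IsHermitian
  rw [Matrix.conjTranspose_add, Matrix.conjTranspose_one, Matrix.conjTranspose_sum]
  congr 1
  refine Finset.sum_congr rfl fun j _ => ?_
  rw [Matrix.conjTranspose_kronecker, hA j, hX j]

lemma kron_one_mulVec {d e k : ℕ} (V : Matrix (Fin e) (Fin d) ℂ) (y : Fin d × Fin k → ℂ)
    (i : Fin e) (a : Fin k) :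
    ((V ⊗ₖ (1 : Matrix (Fin k) (Fin k) ℂ)) *ᵥ y) (i, a) = (V *ᵥ fun p => y (p, a)) i := by
  simp [Matrix.mulVec, dotProduct, Fintype.sum_prod_type, Matrix.one_apply]

lemma conj_monicK {n d e k : ℕ} (B : Fin n → Matrix (Fin e) (Fin e) ℂ)
    (J : Matrix (Fin e) (Fin d) ℂ) (X : Fin n → Matrix (Fin k) (Fin k) ℂ) :
    (J ⊗ₖ (1 : Matrix (Fin k) (Fin k) ℂ))ᴴ * monicK B X * (J ⊗ₖ (1 : Matrix (Fin k) (Fin k) ℂ))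
      = (Jᴴ * J) ⊗ₖ (1 : Matrix (Fin k) (Fin k) ℂ) + ∑ j, (Jᴴ * B j * J) ⊗ₖ X j := by
  unfold monicK
  simp only [Matrix.conjTranspose_kronecker, Matrix.conjTranspose_one, Matrix.mul_add,
    Matrix.add_mul, Matrix.mul_sum, Matrix.sum_mul, Matrix.mul_one, ← Matrix.mul_kronecker_mul,
    Matrix.one_mul]

lemma intertwine_monicK {n d e k : ℕ} {A : Fin n → Matrix (Fin d) (Fin d) ℂ}
    {B : Fin n → Matrix (Fin e) (Fin e) ℂ}
    {T : Matrix (Fin e) (Fin d) ℂ} (hT : ∀ j, T * A j = B j * T)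
    (X : Fin n → Matrix (Fin k) (Fin k) ℂ) :
    (T ⊗ₖ (1 : Matrix (Fin k) (Fin k) ℂ)) * monicK A X =
      monicK B X * (T ⊗ₖ (1 : Matrix (Fin k) (Fin k) ℂ)) := by
  unfold monicK
  simp only [Matrix.mul_add, Matrix.add_mul, Matrix.mul_one, Matrix.one_mul, Matrix.mul_sum,
    Matrix.sum_mul, ← Matrix.mul_kronecker_mul, hT]

/-- If negativity of the pencil is always witnessed by vectors with columns in `M`, then
`M` is everything, by minimality. -/
lemma compress {n d : ℕ} {A : Fin n → Matrix (Fin d) (Fin d) ℂ}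
    (hA : ∀ j, (A j).IsHermitian)
    (hAmin : ∀ (e' : ℕ) (C : Fin n → Matrix (Fin e') (Fin e') ℂ),
      (∀ j, (C j).IsHermitian) → SameFreeSpectrahedron A C → d ≤ e')
    (M : Submodule ℂ (Fin d → ℂ))
    (hM : ∀ (k : ℕ) (X : Fin n → Matrix (Fin k) (Fin k) ℂ), (∀ j, (X j).IsHermitian) →
      ¬ (monicK A X).PosSemidef →
      ∃ y : Fin d × Fin k → ℂ, (∀ a, (fun i => y (i, a)) ∈ M) ∧ qf (monicK A X) y < 0) :
    M = ⊤ := by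
  obtain ⟨J, hJ, hJM⟩ := exists_isometry M
  have hC : ∀ j, (Jᴴ * A j * J).IsHermitian := fun j =>
    Matrix.isHermitian_conjTranspose_mul_mul J (hA j)
  have hle := hAmin _ (fun j => Jᴴ * A j * J) hC (by
    intro k X hX
    have hconj : (J ⊗ₖ (1 : Matrix (Fin k) (Fin k) ℂ))ᴴ * monicK A X *
        (J ⊗ₖ (1 : Matrix (Fin k) (Fin k) ℂ)) = monicK (fun j => Jᴴ * A j * J) X := by
      rw [conj_monicK, hJ, Matrix.one_kronecker_one, monicK]
    constructor
    · intro h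
      rw [← hconj]
      exact h.conjTranspose_mul_mul_same _
    · intro h
      by_contra hcon
      obtain ⟨y, hy, hneg⟩ := hM k X hX hcon
      choose z hz using fun a => (hJM _).1 (hy a)
      have hyz : y = (J ⊗ₖ (1 : Matrix (Fin k) (Fin k) ℂ)) *ᵥ (fun p => z p.2 p.1) := by
        ext ⟨i, a⟩
        rw [kron_one_mulVec]
        exact congrFun (hz a) i
      rw [hyz, ← qf_conj, hconj] at hneg
      exact absurd ((psd_iff_qf (monicK_herm hC hX)).1 h _) (not_le.2 hneg))
  apply Submodule.eq_top_of_finrank_eq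
  refine le_antisymm (Submodule.finrank_le M) ?_
  simpa using hle

/-- Rigidity of minimal pencils. -/
lemma rigidity {n d : ℕ} {A : Fin n → Matrix (Fin d) (Fin d) ℂ}
    (hA : ∀ j, (A j).IsHermitian)
    (hAmin : ∀ (e' : ℕ) (C : Fin n → Matrix (Fin e') (Fin e') ℂ),
      (∀ j, (C j).IsHermitian) → SameFreeSpectrahedron A C → d ≤ e')
    {κ : Type*} [Fintype κ] (V : κ → Matrix (Fin d) (Fin d) ℂ)
    (hVA : ∀ j, ∑ l, (V l)ᴴ * A j * V l = A j)
    (hV : (1 - ∑ l, (V l)ᴴ * V l).PosSemidef) :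
    ∑ l, (V l)ᴴ * V l = 1 ∧ ∀ j l, A j * V l = V l * A j := by
  let M : Submodule ℂ (Fin d → ℂ) :=
    LinearMap.ker (Matrix.mulVecLin (1 - ∑ l, (V l)ᴴ * V l)) ⊓
      ⨅ j, ⨅ l, LinearMap.ker (Matrix.mulVecLin (A j * V l - V l * A j))
  have hMmem : ∀ x, x ∈ M ↔ (1 - ∑ l, (V l)ᴴ * V l) *ᵥ x = 0 ∧
      ∀ j l, (A j * V l - V l * A j) *ᵥ x = 0 := by
    intro x
    simp only [M, Submodule.mem_inf, Submodule.mem_iInf, LinearMap.mem_ker,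
      Matrix.mulVecLin_apply]
  have hM : M = ⊤ := by
    refine compress hA hAmin M fun k X hX hnot => ?_
    rw [psd_iff_qf (monicK_herm hA hX)] at hnot
    push Not at hnot
    obtain ⟨x0, hx0⟩ := hnot
    let E : Matrix (Fin k) (Fin k) ℂ := 1
    have hP : ((1 - ∑ l, (V l)ᴴ * V l) ⊗ₖ E).PosSemidef :=
      hV.kronecker Matrix.PosSemidef.one
    have hPeq : (1 - ∑ l, (V l)ᴴ * V l) ⊗ₖ E = 1 - ∑ l, (V l ⊗ₖ E)ᴴ * (V l ⊗ₖ E) := by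
      have : (∑ l, (V l)ᴴ * V l) ⊗ₖ E = ∑ l, (V l ⊗ₖ E)ᴴ * (V l ⊗ₖ E) := by
        simp only [Matrix.conjTranspose_kronecker, ← Matrix.mul_kronecker_mul, E,
          Matrix.conjTranspose_one, one_mul]
        ext ⟨i, a⟩ ⟨j, b⟩
        simp [Matrix.sum_apply, Finset.sum_mul]
      rw [← this]
      ext ⟨i, a⟩ ⟨j, b⟩
      simp only [E, Matrix.kroneckerMap_apply, Matrix.sub_apply, Matrix.one_apply, Prod.ext_iff]
      by_cases h1 : i = j <;> by_cases h2 : a = b <;> simp [h1, h2]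
    have hqP : ∀ x, qf ((1 - ∑ l, (V l)ᴴ * V l) ⊗ₖ E) x =
        qf 1 x - ∑ l, qf 1 ((V l ⊗ₖ E) *ᵥ x) := by
      intro x
      rw [hPeq, qf_sub, qf_sum]
      simp only [qf_gram]
    have hAk : ∀ (j) (F : Matrix (Fin k) (Fin k) ℂ),
        ∑ l, (V l ⊗ₖ E)ᴴ * (A j ⊗ₖ F) * (V l ⊗ₖ E) = A j ⊗ₖ F := by
      intro j F
      conv_rhs => rw [← hVA j]
      simp only [Matrix.conjTranspose_kronecker, ← Matrix.mul_kronecker_mul, E,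
          Matrix.conjTranspose_one, one_mul, mul_one]
      ext ⟨i, a⟩ ⟨j, b⟩
      simp [Matrix.sum_apply, Finset.sum_mul]
    obtain ⟨h, hneg, hiso, hcomm⟩ := core (monicK A X) (fun l => V l ⊗ₖ E) (fun j => A j ⊗ₖ E)
      (fun j => by
        unfold Matrix.IsHermitian
        rw [Matrix.conjTranspose_kronecker, hA j, Matrix.conjTranspose_one])
      (fun x => by
        have := (psd_iff_qf hP.1).1 hP x
        rw [hqP] at this
        linarith)
      (fun j => hAk j E)
      (fun x => by
        have h1 := (psd_iff_qf hP.1).1 hP x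
        rw [hqP] at h1
        have h2 : ∑ l, (V l ⊗ₖ E)ᴴ * (∑ j, A j ⊗ₖ X j) * (V l ⊗ₖ E) = ∑ j, A j ⊗ₖ X j := by
          simp only [Finset.mul_sum, Finset.sum_mul]
          rw [Finset.sum_comm]
          exact Finset.sum_congr rfl fun j _ => hAk j (X j)
        have h3 := congrArg (fun Q => qf Q x) h2
        simp only [qf_sum, qf_conj] at h3
        simp only [monicK, qf_add, Finset.sum_add_distrib, qf_sum]
        linarith)
      x0 hx0
    refine ⟨h, fun a => ?_, hneg⟩
    have hz : ((1 - ∑ l, (V l)ᴴ * V l) ⊗ₖ E) *ᵥ h = 0 := by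
      rw [← hP.dotProduct_mulVec_zero_iff]
      apply Complex.ext
      · have := hqP h
        rw [hiso, sub_self] at this
        exact this
      · simpa using hP.1.im_star_dotProduct_mulVec_self h
    rw [hMmem]
    constructor
    · ext i
      rw [← kron_one_mulVec, hz]
      rfl
    · intro j l
      ext i
      rw [← kron_one_mulVec]
      have : (A j * V l - V l * A j) ⊗ₖ E = (A j ⊗ₖ E) * (V l ⊗ₖ E) - (V l ⊗ₖ E) * (A j ⊗ₖ E) := by
        simp only [← Matrix.mul_kronecker_mul, E, one_mul]
        ext ⟨i, a⟩ ⟨j, b⟩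
        simp [sub_mul]
      rw [this, Matrix.sub_mulVec, ← Matrix.mulVec_mulVec, ← Matrix.mulVec_mulVec, hcomm, sub_self]
      rfl
  have hall : ∀ x, (1 - ∑ l, (V l)ᴴ * V l) *ᵥ x = 0 ∧
      ∀ j l, (A j * V l - V l * A j) *ᵥ x = 0 := fun x => (hMmem x).1 (hM ▸ Submodule.mem_top)
  constructor
  · symm
    rw [← sub_eq_zero]
    apply Matrix.mulVec_injective
    ext1 x
    rw [(hall x).1, Matrix.zero_mulVec]
  · intro j l
    rw [← sub_eq_zero]
    apply Matrix.mulVec_injective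
    ext1 x
    rw [(hall x).2, Matrix.zero_mulVec]

end pencils
section psatz

lemma exists_invsqrt {ι : Type*} [Fintype ι] [DecidableEq ι] {P : Matrix ι ι ℂ} (hP : P.PosDef) :
    ∃ Q : Matrix ι ι ℂ, Qᴴ = Q ∧ Q * P * Q = 1 ∧ ∀ A, A * P = P * A → A * Q = Q * A := by
  let W : Matrix ι ι ℂ := hP.1.eigenvectorUnitary
  let lam := hP.1.eigenvalues
  have hlam : ∀ i, 0 < lam i := hP.eigenvalues_pos
  have hW1 : Wᴴ * W = 1 := Unitary.coe_star_mul_self hP.1.eigenvectorUnitary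
  have hW2 : W * Wᴴ = 1 := Unitary.coe_mul_star_self hP.1.eigenvectorUnitary
  let D : Matrix ι ι ℂ := Matrix.diagonal fun i => (lam i : ℂ)
  let S : Matrix ι ι ℂ := Matrix.diagonal fun i => (((Real.sqrt (lam i))⁻¹ : ℝ) : ℂ)
  have hPD : P = W * D * Wᴴ := by
    have := hP.1.spectral_theorem
    rw [Unitary.conjStarAlgAut_apply] at this
    exact this
  have hS : Sᴴ = S := by
    simp only [S, Matrix.diagonal_conjTranspose]
    congr 1
    ext i
    simp
  have hSDS : S * D * S = 1 := by
    simp only [S, D, Matrix.diagonal_mul_diagonal]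
    rw [← Matrix.diagonal_one]
    congr 1
    ext i
    rw [← Complex.ofReal_mul, ← Complex.ofReal_mul, ← Complex.ofReal_one]
    congr 1
    have h1 := Real.sqrt_pos.2 (hlam i)
    have h2 := Real.mul_self_sqrt (hlam i).le
    field_simp
    nlinarith
  refine ⟨W * S * Wᴴ, ?_, ?_, ?_⟩
  · simp [Matrix.conjTranspose_mul, hS, Matrix.mul_assoc]
  · calc W * S * Wᴴ * P * (W * S * Wᴴ) = W * S * (Wᴴ * W) * D * (Wᴴ * W) * S * Wᴴ := by
          rw [hPD]; simp only [Matrix.mul_assoc]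
      _ = W * (S * D * S) * Wᴴ := by
          rw [hW1]; simp only [Matrix.mul_assoc, Matrix.one_mul]
      _ = 1 := by rw [hSDS, Matrix.mul_one, hW2]
  · intro A hA
    have h1 : (Wᴴ * A * W) * D = D * (Wᴴ * A * W) := by
      calc (Wᴴ * A * W) * D = Wᴴ * (A * (W * D * Wᴴ)) * W := by
            simp only [Matrix.mul_assoc, hW1, Matrix.mul_one]
        _ = Wᴴ * ((W * D * Wᴴ) * A) * W := by rw [← hPD, hA]
        _ = (Wᴴ * W) * D * (Wᴴ * A * W) := by simp only [Matrix.mul_assoc]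
        _ = _ := by rw [hW1, Matrix.one_mul]
    have h2 : (Wᴴ * A * W) * S = S * (Wᴴ * A * W) := by
      ext i j
      have h3 := congrFun (congrFun h1 i) j
      simp only [D, S, Matrix.mul_diagonal, Matrix.diagonal_mul] at h3 ⊢
      by_cases h0 : (Wᴴ * A * W) i j = 0
      · simp [h0]
      · have : (lam j : ℂ) = lam i := by
          rw [mul_comm] at h3
          exact mul_right_cancel₀ h0 h3
        have h4 : lam j = lam i := by exact_mod_cast this
        rw [h4, mul_comm]
    calc A * (W * S * Wᴴ) = (W * Wᴴ) * A * (W * S * Wᴴ) := by rw [hW2, Matrix.one_mul]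
      _ = W * ((Wᴴ * A * W) * S) * Wᴴ := by simp only [Matrix.mul_assoc]
      _ = W * S * Wᴴ * A * (W * Wᴴ) := by rw [h2]; simp only [Matrix.mul_assoc]
      _ = _ := by rw [hW2, Matrix.mul_one]

lemma isCompact_hull {E : Type*} [NormedAddCommGroup E] [NormedSpace ℝ E] [FiniteDimensional ℝ E]
    {K : Set E} (hK : IsCompact K) : IsCompact (convexHull ℝ K) := by
  rcases K.eq_empty_or_nonempty with rfl | ⟨k0, hk0⟩
  · simp
  let N := Module.finrank ℝ E + 1
  have hc : IsCompact (stdSimplex ℝ (Fin N) ×ˢ (Set.univ.pi fun _ : Fin N => K)) :=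
    (isCompact_stdSimplex ℝ (Fin N)).prod (isCompact_univ_pi fun _ => hK)
  have hf : Continuous fun p : (Fin N → ℝ) × (Fin N → E) => ∑ i, p.1 i • p.2 i := by fun_prop
  convert hc.image hf using 1
  apply Set.Subset.antisymm
  · intro x hx
    obtain ⟨ι, hι, z, w, hz, hind, hw, hw1, hsum⟩ := eq_pos_convex_span_of_mem_convexHull hx
    have hcard : Fintype.card ι ≤ Fintype.card (Fin N) := by
      rw [Fintype.card_fin]
      refine hind.card_le_finrank_succ.trans ?_
      exact Nat.succ_le_succ (Submodule.finrank_le _)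
    obtain ⟨g⟩ := Function.Embedding.nonempty_of_card_le hcard
    have key : ∀ {F : Type _} [AddCommMonoid F] (u : ι → F),
        ∑ i, Function.extend g u 0 i = ∑ i, u i := by
      intro F _ u
      rw [← Finset.sum_subset (Finset.subset_univ (Finset.univ.map g))]
      · rw [Finset.sum_map]
        exact Finset.sum_congr rfl fun i _ => g.injective.extend_apply _ _ _
      · intro i _ hi
        rw [Function.extend_apply']
        · rfl
        · rintro ⟨a, rfl⟩
          exact hi (by simp)
    refine ⟨(Function.extend g w 0, Function.extend g z fun _ => k0), ⟨⟨?_, ?_⟩, ?_⟩, ?_⟩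
    · intro i
      show 0 ≤ Function.extend g w 0 i
      by_cases h : ∃ a, g a = i
      · obtain ⟨a, rfl⟩ := h
        rw [g.injective.extend_apply]
        exact (hw a).le
      · rw [Function.extend_apply' _ _ _ h]
        simp
    · rw [← hw1]
      exact key w
    · intro i _
      by_cases h : ∃ a, g a = i
      · obtain ⟨a, rfl⟩ := h
        simp only [g.injective.extend_apply]
        exact hz ⟨a, rfl⟩
      · simp only [Function.extend_apply' _ _ _ h]
        exact hk0
    · simp only
      rw [← hsum, ← Finset.sum_subset (Finset.subset_univ (Finset.univ.map g))]
      · rw [Finset.sum_map]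
        exact Finset.sum_congr rfl fun i _ => by
          rw [g.injective.extend_apply, g.injective.extend_apply]
      · intro i _ hi
        rw [Function.extend_apply' w]
        · simp
        · rintro ⟨a, rfl⟩
          exact hi (by simp)
  · rintro _ ⟨⟨w, z⟩, ⟨hw, hz⟩, rfl⟩
    exact (convex_convexHull ℝ K).sum_mem (fun i _ => hw.1 i) hw.2
      fun i _ => subset_convexHull ℝ K (hz i (Set.mem_univ i))


/-- The homogenized tuple `(1, B₁, …, Bₙ)`. -/
noncomputable def bo {n e : ℕ} (B : Fin n → Matrix (Fin e) (Fin e) ℂ) :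
    Option (Fin n) → Matrix (Fin e) (Fin e) ℂ := fun o => o.elim 1 B

/-- Extremal elements of the cone used in the separation argument. -/
noncomputable def Lam {n e : ℕ} (d : ℕ) (B : Fin n → Matrix (Fin e) (Fin e) ℂ)
    (x : (Fin e × Fin d) ⊕ Fin d → ℂ) : Option (Fin n) → Fin d → Fin d → ℂ :=
  fun o a b => (∑ p, ∑ q, star (x (Sum.inl (p, a))) * bo B o p q * x (Sum.inl (q, b))) +
    if o = none then star (x (Sum.inr a)) * x (Sum.inr b) else 0

/-- The bilinear pairing. -/
noncomputable def pr {n d : ℕ} (H : Option (Fin n) → Matrix (Fin d) (Fin d) ℂ)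
    (Y : Option (Fin n) → Fin d → Fin d → ℂ) : ℂ := ∑ o, ∑ a, ∑ b, Y o a b * H o a b

lemma bo_herm {n e : ℕ} {B : Fin n → Matrix (Fin e) (Fin e) ℂ} (hB : ∀ j, (B j).IsHermitian)
    (o : Option (Fin n)) : (bo B o).IsHermitian := by
  cases o with
  | none => exact Matrix.isHermitian_one
  | some j => exact hB j

lemma Lam_continuous {n e d : ℕ} (B : Fin n → Matrix (Fin e) (Fin e) ℂ) :
    Continuous (Lam d B) := by
  unfold Lam
  refine continuous_pi fun o => continuous_pi fun a => continuous_pi fun b => ?_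
  split_ifs <;> fun_prop

lemma Lam_smul {n e d : ℕ} (B : Fin n → Matrix (Fin e) (Fin e) ℂ) (c : ℝ)
    (x : (Fin e × Fin d) ⊕ Fin d → ℂ) : Lam d B ((c : ℂ) • x) = ((c ^ 2 : ℝ) : ℂ) • Lam d B x := by
  ext o a b
  simp only [Lam, Pi.smul_apply, smul_eq_mul, star_mul', mul_add, Finset.mul_sum, mul_ite, mul_zero]
  congr 1
  · refine Finset.sum_congr rfl fun p _ => Finset.sum_congr rfl fun q _ => ?_
    simp
    ring
  · split_ifs
    · simp
      ring
    · rfl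

lemma Lam_herm {n e d : ℕ} {B : Fin n → Matrix (Fin e) (Fin e) ℂ} (hB : ∀ j, (B j).IsHermitian)
    (x : (Fin e × Fin d) ⊕ Fin d → ℂ) (o a b) : star (Lam d B x o a b) = Lam d B x o b a := by
  simp only [Lam, star_add, star_sum]
  congr 1
  · rw [Finset.sum_comm]
    refine Finset.sum_congr rfl fun p _ => Finset.sum_congr rfl fun q _ => ?_
    rw [← (bo_herm hB o).apply p q]
    simp
    ring
  · split_ifs
    · simp [mul_comm]
    · simp

lemma pr_re {n d : ℕ} (X : Option (Fin n) → Matrix (Fin d) (Fin d) ℂ)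
    (Y : Option (Fin n) → Fin d → Fin d → ℂ) (hY : ∀ o a b, star (Y o a b) = Y o b a) :
    (pr X Y).re = (pr (fun o => (2⁻¹ : ℂ) • (X o + (X o)ᴴ)) Y).re := by
  have h1 : pr (fun o => (X o)ᴴ) Y = star (pr X Y) := by
    simp only [pr, star_sum, star_mul', hY]
    refine Finset.sum_congr rfl fun o _ => ?_
    rw [Finset.sum_comm]
    rfl
  have h2 : pr (fun o => (2⁻¹ : ℂ) • (X o + (X o)ᴴ)) Y =
      2⁻¹ * (pr X Y + pr (fun o => (X o)ᴴ) Y) := by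
    simp only [pr, mul_add, Finset.mul_sum, ← Finset.sum_add_distrib]
    refine Finset.sum_congr rfl fun o _ => Finset.sum_congr rfl fun a _ =>
      Finset.sum_congr rfl fun b _ => ?_
    simp
    ring
  rw [h2, h1]
  simp
  ring

lemma pr_kron {n d e : ℕ} (B : Fin n → Matrix (Fin e) (Fin e) ℂ)
    (H : Option (Fin n) → Matrix (Fin d) (Fin d) ℂ) (v : Fin e × Fin d → ℂ) :
    qf (∑ o, bo B o ⊗ₖ H o) v = (pr H (Lam d B (Sum.elim v 0))).re := by
  rw [qf_sum]
  simp only [pr, Complex.re_sum (Finset.univ : Finset (Option (Fin n)))]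
  refine Finset.sum_congr rfl fun o _ => ?_
  unfold qf
  congr 1
  simp only [Lam, dotProduct, Matrix.mulVec, Fintype.sum_prod_type, Finset.mul_sum, Sum.elim_inl,
    Sum.elim_inr, Finset.sum_mul, Pi.zero_apply, mul_zero, ite_self, add_zero, Pi.star_apply,
    Matrix.kroneckerMap_apply]
  rw [Finset.sum_comm]
  refine Finset.sum_congr rfl fun a _ => ?_
  have : ∀ p : Fin e, (∑ q, ∑ b, star (v (p, a)) * (bo B o p q * H o a b * v (q, b))) =
    ∑ b, ∑ q, star (v (p, a)) * (bo B o p q * H o a b * v (q, b)) := fun p => Finset.sum_comm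
  simp only [this]
  rw [Finset.sum_comm]
  refine Finset.sum_congr rfl fun b _ => Finset.sum_congr rfl fun p _ =>
    Finset.sum_congr rfl fun q _ => ?_
  ring

lemma pr_none {n d e : ℕ} (B : Fin n → Matrix (Fin e) (Fin e) ℂ)
    (H : Option (Fin n) → Matrix (Fin d) (Fin d) ℂ) (w : Fin d → ℂ) :
    qf (H none) w = (pr H (Lam d B (Sum.elim 0 w))).re := by
  simp only [qf, pr, Lam, dotProduct, Matrix.mulVec, Fintype.sum_option, Finset.mul_sum]
  simp only [Sum.elim_inl, Sum.elim_inr, Pi.zero_apply, mul_zero, Finset.sum_const_zero, zero_add,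
    if_true, reduceCtorEq, if_false, zero_mul, add_zero, Pi.star_apply]
  congr 1
  refine Finset.sum_congr rfl fun b _ => Finset.sum_congr rfl fun p _ => ?_
  ring

lemma pr_delta {n d : ℕ} (A : Fin n → Matrix (Fin d) (Fin d) ℂ)
    (H : Option (Fin n) → Matrix (Fin d) (Fin d) ℂ) :
    qf (∑ o, bo A o ⊗ₖ H o) (fun p => if p.1 = p.2 then 1 else 0) = (pr H (bo A)).re := by
  rw [pr_kron]
  congr 2
  ext o a b
  simp [Lam]

lemma Lam_trace {n e d : ℕ} (B : Fin n → Matrix (Fin e) (Fin e) ℂ)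
    (x : (Fin e × Fin d) ⊕ Fin d → ℂ) : ((∑ a, Lam d B x none a a) : ℂ).re = qf 1 x := by
  rw [qf_one_eq, Fintype.sum_sum_type, Fintype.sum_prod_type_right, ← Finset.sum_add_distrib,
    Complex.re_sum]
  refine Finset.sum_congr rfl fun a _ => ?_
  simp [Lam, bo, Matrix.one_apply, Complex.sq_norm, Complex.normSq_apply]

lemma separation {n d e : ℕ} {A : Fin n → Matrix (Fin d) (Fin d) ℂ}
    {B : Fin n → Matrix (Fin e) (Fin e) ℂ}
    (hA : ∀ j, (A j).IsHermitian) (hB : ∀ j, (B j).IsHermitian)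
    (hAB : ∀ (k : ℕ) (X : Fin n → Matrix (Fin k) (Fin k) ℂ), (∀ j, (X j).IsHermitian) →
      (monicK B X).PosSemidef → (monicK A X).PosSemidef)
    (X : Option (Fin n) → Matrix (Fin d) (Fin d) ℂ)
    (hpos : ∀ x, qf 1 x = 1 → 0 < (pr X (Lam d B x)).re) : 0 ≤ (pr X (bo A)).re := by
  rw [pr_re X _ (fun o a b => (bo_herm hA o).apply b a)]
  have hpos' : ∀ x, x ≠ 0 →
      0 < (pr (fun o => (2⁻¹ : ℂ) • (X o + (X o)ᴴ)) (Lam d B x)).re := by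
    intro x hx
    rw [← pr_re X _ (Lam_herm hB x)]
    obtain ⟨c, hc, h⟩ := exists_unit hx
    rw [← qf_smul] at h
    have h1 := hpos _ h
    rw [Lam_smul] at h1
    have h2 : pr X (((c ^ 2 : ℝ) : ℂ) • Lam d B x) = ((c ^ 2 : ℝ) : ℂ) * pr X (Lam d B x) := by
      simp only [pr, Finset.mul_sum, Pi.smul_apply, smul_eq_mul, mul_assoc]
    rw [h2, Complex.re_ofReal_mul] at h1
    exact pos_of_mul_pos_right h1 (by positivity)
  have hH : ∀ o, ((fun o => (2⁻¹ : ℂ) • (X o + (X o)ᴴ)) o).IsHermitian := by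
    intro o
    show ((2⁻¹ : ℂ) • (X o + (X o)ᴴ)).IsHermitian
    unfold Matrix.IsHermitian
    rw [Matrix.conjTranspose_smul, Matrix.conjTranspose_add, Matrix.conjTranspose_conjTranspose,
      add_comm]
    simp
  generalize (fun o => (2⁻¹ : ℂ) • (X o + (X o)ᴴ)) = H at *
  have hP : (H none).PosDef := by
    refine Matrix.PosDef.of_dotProduct_mulVec_pos (hH none) fun w hw => ?_
    have h1 : 0 < qf (H none) w := by
      rw [pr_none B]
      refine hpos' _ fun h => hw ?_
      ext a
      exact congrFun h (Sum.inr a)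
    have h2 := (hH none).im_star_dotProduct_mulVec_self w
    rw [Complex.lt_def]
    exact ⟨h1, by simpa using h2.symm⟩
  obtain ⟨Q, hQ, hQP, -⟩ := exists_invsqrt hP
  have hconj : ∀ {m : ℕ} (C : Fin n → Matrix (Fin m) (Fin m) ℂ),
      ((1 : Matrix (Fin m) (Fin m) ℂ) ⊗ₖ Q)ᴴ * (∑ o, bo C o ⊗ₖ H o) *
        ((1 : Matrix (Fin m) (Fin m) ℂ) ⊗ₖ Q) = monicK C (fun j => Q * H (some j) * Q) := by
    intro m C
    unfold monicK
    simp only [Fintype.sum_option, Matrix.conjTranspose_kronecker, Matrix.conjTranspose_one, hQ,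
      Matrix.mul_add, Matrix.add_mul, Matrix.mul_sum, Matrix.sum_mul, ← Matrix.mul_kronecker_mul,
      Matrix.mul_one, Matrix.one_mul]
    congr 1
    rw [hQP]
    simp [bo]
  have hZ : ∀ j, (Q * H (some j) * Q).IsHermitian := by
    intro j
    unfold Matrix.IsHermitian
    rw [Matrix.conjTranspose_mul, Matrix.conjTranspose_mul, hQ, (hH _).eq, Matrix.mul_assoc]
  have hBpsd : (monicK B (fun j => Q * H (some j) * Q)).PosSemidef := by
    rw [psd_iff_qf (monicK_herm hB hZ)]
    intro x
    rw [← hconj, qf_conj, pr_kron]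
    by_cases h0 : (Sum.elim (((1 : Matrix (Fin e) (Fin e) ℂ) ⊗ₖ Q) *ᵥ x) 0 :
        (Fin e × Fin d) ⊕ Fin d → ℂ) = 0
    · rw [h0]
      simp [pr, Lam]
    · exact (hpos' _ h0).le
  have hApsd := hAB d _ hZ hBpsd
  rw [psd_iff_qf (monicK_herm hA hZ)] at hApsd
  have h1 := hApsd (((1 : Matrix (Fin d) (Fin d) ℂ) ⊗ₖ (H none * Q)) *ᵥ
    (fun p => if p.1 = p.2 then 1 else 0))
  rw [← hconj, qf_conj, Matrix.mulVec_mulVec, ← Matrix.mul_kronecker_mul, ← Matrix.mul_assoc, hQP,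
    Matrix.one_mul, Matrix.one_kronecker_one, Matrix.one_mulVec, pr_delta] at h1
  exact h1

lemma psatz {n d e : ℕ} {A : Fin n → Matrix (Fin d) (Fin d) ℂ}
    {B : Fin n → Matrix (Fin e) (Fin e) ℂ}
    (hA : ∀ j, (A j).IsHermitian) (hB : ∀ j, (B j).IsHermitian)
    (hAB : ∀ (k : ℕ) (X : Fin n → Matrix (Fin k) (Fin k) ℂ), (∀ j, (X j).IsHermitian) →
      (monicK B X).PosSemidef → (monicK A X).PosSemidef) :
    ∃ (κ : Type) (_ : Fintype κ) (V : κ → Matrix (Fin e) (Fin d) ℂ),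
      (∀ j, ∑ l, (V l)ᴴ * B j * V l = A j) ∧ (1 - ∑ l, (V l)ᴴ * V l).PosSemidef := by
  rcases Nat.eq_zero_or_pos d with rfl | hd
  · refine ⟨Empty, inferInstance, fun l => l.elim, fun j => Subsingleton.elim _ _, ?_⟩
    simpa using Matrix.PosSemidef.one
  let K0 : Set (Option (Fin n) → Fin d → Fin d → ℂ) := Lam d B '' {x | qf 1 x = 1}
  have hK0 : IsCompact K0 := isCompact_unit.image (Lam_continuous B)
  have hne : K0.Nonempty := by
    refine ⟨_, Pi.single (Sum.inr ⟨0, hd⟩) 1, ?_, rfl⟩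
    show qf 1 _ = 1
    rw [qf_one_eq, Finset.sum_eq_single (Sum.inr ⟨0, hd⟩)]
    · simp
    · intro i _ hi
      simp [hi]
    · simp
  let a0 : Option (Fin n) → Fin d → Fin d → ℂ := bo A
  have hK : IsCompact (convexHull ℝ (insert (-a0) K0)) := isCompact_hull (hK0.insert _)
  by_cases h0 : (0 : Option (Fin n) → Fin d → Fin d → ℂ) ∈ convexHull ℝ (insert (-a0) K0)
  · rw [convexHull_insert hne, convexJoin_singleton_left, Set.mem_iUnion₂] at h0
    obtain ⟨k, hk, s, t, hs, ht, hst, h0⟩ := h0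
    rw [mem_convexHull_iff_exists_fintype] at hk
    obtain ⟨ι, hι, w, z, hw, hw1, hz, hsum⟩ := hk
    choose x hx hxz using hz
    have hk : ∀ o a b, k o a b = ∑ i, (w i : ℂ) * Lam d B (x i) o a b := by
      intro o a b
      rw [← hsum]
      simp [Finset.sum_apply, ← hxz]
    have h0' : ∀ o a b, (s : ℂ) * bo A o a b = t * k o a b := by
      intro o a b
      have : (s : ℂ) * (-(bo A o a b)) + t * k o a b = 0 := by
        rw [← Complex.real_smul, ← Complex.real_smul]
        exact congrFun (congrFun (congrFun h0 o) a) b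
      linear_combination -this
    have hs0 : s ≠ 0 := by
      rintro rfl
      have ht1 : t = 1 := by linarith
      subst ht1
      have h1 : ∑ a, k none a a = 0 := by
        refine Finset.sum_eq_zero fun a _ => ?_
        have := h0' none a a
        simpa using this.symm
      have h2 : (∑ a, k none a a).re = 1 := by
        simp only [hk]
        rw [Finset.sum_comm]
        simp only [← Finset.mul_sum]
        rw [Complex.re_sum]
        simp only [Complex.re_ofReal_mul, Lam_trace]
        rw [← hw1]
        exact Finset.sum_congr rfl fun i _ => by rw [show qf 1 (x i) = 1 from hx i, mul_one]
      rw [h1] at h2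
      simp at h2
    have hsC : (s : ℂ) ≠ 0 := by exact_mod_cast hs0
    let c : ι → ℝ := fun i => Real.sqrt (t * w i / s)
    have hc : ∀ i, (c i : ℂ) * c i = t * w i / s := by
      intro i
      rw [← Complex.ofReal_mul, Real.mul_self_sqrt]
      · simp
      · have := hw i
        positivity
    let V : ι → Matrix (Fin e) (Fin d) ℂ := fun i p a => c i * x i (Sum.inl (p, a))
    have hV : ∀ i (C : Matrix (Fin e) (Fin e) ℂ) a b, ((V i)ᴴ * C * V i) a b =
        t * w i / s * ∑ p, ∑ q, star (x i (Sum.inl (p, a))) * C p q * x i (Sum.inl (q, b)) := by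
      intro i C a b
      have hVe : ∀ p a, V i p a = c i * x i (Sum.inl (p, a)) := fun _ _ => rfl
      simp only [Matrix.mul_apply, Finset.sum_mul, Finset.mul_sum, ← hc, hVe,
        Matrix.conjTranspose_apply]
      rw [Finset.sum_comm]
      refine Finset.sum_congr rfl fun p _ => Finset.sum_congr rfl fun q _ => ?_
      simp
      ring
    have hbo : ∀ o a b, bo A o a b = ∑ i, (t * w i / s : ℂ) * Lam d B (x i) o a b := by
      intro o a b
      have := h0' o a b
      rw [hk, Finset.mul_sum] at this
      apply mul_left_cancel₀ hsC
      rw [this, Finset.mul_sum]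
      refine Finset.sum_congr rfl fun i _ => ?_
      field_simp
    refine ⟨ι, hι, V, ?_, ?_⟩
    · intro j
      ext a b
      have := hbo (some j) a b
      simp only [Lam, reduceCtorEq, if_false, add_zero] at this
      rw [Matrix.sum_apply]
      simp only [hV]
      exact this.symm
    · have : (1 : Matrix (Fin d) (Fin d) ℂ) - ∑ i, (V i)ᴴ * V i =
          ∑ i, Matrix.vecMulVec (star fun a => (c i : ℂ) * x i (Sum.inr a))
            (fun a => (c i : ℂ) * x i (Sum.inr a)) := by
        rw [sub_eq_iff_eq_add, ← Finset.sum_add_distrib]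
        ext a b
        have h1 := hbo none a b
        rw [Matrix.sum_apply]
        refine h1.trans (Finset.sum_congr rfl fun i _ => ?_)
        have h2 := hV i 1 a b
        rw [Matrix.mul_one] at h2
        rw [Matrix.add_apply, h2, ← hc]
        simp [Lam, Matrix.vecMulVec_apply, bo]
        ring
      rw [this]
      exact Matrix.posSemidef_sum _ fun i _ => Matrix.posSemidef_vecMulVec_star_self _
  · exfalso
    obtain ⟨F, u, hu1, hu2⟩ := RCLike.geometric_hahn_banach_point_closed (𝕜 := ℂ)
      (convex_convexHull ℝ (insert (-a0) K0)) hK.isClosed h0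
    rw [map_zero] at hu1
    let X : Option (Fin n) → Matrix (Fin d) (Fin d) ℂ :=
      fun o a b => F (Pi.single o (Pi.single a (Pi.single b 1)))
    have hF : ∀ Y, F Y = pr X Y := by
      intro Y
      have hY : Y = ∑ o, ∑ a, ∑ b, Y o a b •
          (Pi.single o (Pi.single a (Pi.single b (1 : ℂ))) :
            Option (Fin n) → Fin d → Fin d → ℂ) := by
        ext o a b
        simp only [Finset.sum_apply, Pi.smul_apply, smul_eq_mul]
        rw [Finset.sum_eq_single o, Finset.sum_eq_single a, Finset.sum_eq_single b]
        · simp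
        · intro b' _ h
          simp [h.symm]
        · simp
        · intro b' _ h
          simp [h.symm]
        · simp
        · intro b' _ h
          simp [h.symm]
        · simp
      conv_lhs => rw [hY]
      simp only [map_sum, map_smul, smul_eq_mul]
      rfl
    simp only [hF] at hu2
    have h1 := separation hA hB hAB X fun x hx => by
      have := hu2 (Lam d B x) (subset_convexHull _ _ (Set.mem_insert_of_mem _ ⟨x, hx, rfl⟩))
      exact lt_trans (by simpa using hu1) this
    have h2 := hu2 (-a0) (subset_convexHull _ _ (Set.mem_insert _ _))
    rw [← hF, map_neg, hF] at h2
    have h3 : (0 : ℝ) < u := by simpa using hu1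
    simp only [map_neg] at h2
    have h4 : RCLike.re (pr X a0) = (pr X (bo A)).re := rfl
    rw [h4] at h2
    linarith

end psatz
section final

lemma neg_eigen {ι : Type*} [Fintype ι] [DecidableEq ι] {G : Matrix ι ι ℂ} (hG : G.IsHermitian)
    (hn : ¬ G.PosSemidef) : ∃ (r : ℝ) (h : ι → ℂ), r < 0 ∧ h ≠ 0 ∧ G *ᵥ h = (r : ℂ) • h := by
  rw [hG.posSemidef_iff_eigenvalues_nonneg, Pi.le_def] at hn
  push Not at hn
  obtain ⟨i, hi⟩ := hn
  refine ⟨hG.eigenvalues i, (hG.eigenvectorBasis i : EuclideanSpace ℂ ι), hi, ?_, ?_⟩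
  · intro h
    have h1 : hG.eigenvectorBasis i = 0 := by
      ext j
      exact congrFun h j
    exact hG.eigenvectorBasis.orthonormal.ne_zero i h1
  · rw [hG.mulVec_eigenvectorBasis]
    ext j
    simp

lemma qf_eigen {ι : Type*} [Fintype ι] [DecidableEq ι] {G : Matrix ι ι ℂ} {r : ℝ} {y : ι → ℂ}
    (hr : r < 0) (hy : y ≠ 0) (h : G *ᵥ y = (r : ℂ) • y) : qf G y < 0 := by
  have h1 : qf G y = r * qf 1 y := by
    simp [qf, h]
  rw [h1]
  have h0 : 0 < qf 1 y := lt_of_le_of_ne (qf_one_nonneg y) fun h => hy (qf_one_eq_zero h.symm)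
  exact mul_neg_of_neg_of_pos hr h0

lemma mat_ext {m n : ℕ} {S T : Matrix (Fin m) (Fin n) ℂ} (h : ∀ x, S *ᵥ x = T *ᵥ x) : S = T := by
  apply Matrix.toLin'.injective
  exact LinearMap.ext h

lemma intertwiners {n d e : ℕ} {A : Fin n → Matrix (Fin d) (Fin d) ℂ}
    {B : Fin n → Matrix (Fin e) (Fin e) ℂ}
    (hA : ∀ j, (A j).IsHermitian)
    (hAmin : ∀ (e' : ℕ) (C : Fin n → Matrix (Fin e') (Fin e') ℂ),
      (∀ j, (C j).IsHermitian) → SameFreeSpectrahedron A C → d ≤ e')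
    {κ μ : Type} [Fintype κ] [Fintype μ] (V : κ → Matrix (Fin e) (Fin d) ℂ)
    (W : μ → Matrix (Fin d) (Fin e) ℂ)
    (hV1 : ∀ j, ∑ l, (V l)ᴴ * B j * V l = A j) (hV2 : (1 - ∑ l, (V l)ᴴ * V l).PosSemidef)
    (hW1 : ∀ j, ∑ l, (W l)ᴴ * A j * W l = B j) (hW2 : (1 - ∑ l, (W l)ᴴ * W l).PosSemidef) :
    ∑ l, (V l)ᴴ * V l = 1 ∧ ∀ j l, V l * A j = B j * V l := by
  have hC : ∀ C : Matrix (Fin d) (Fin d) ℂ,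
      ∑ p : κ × μ, (W p.2 * V p.1)ᴴ * C * (W p.2 * V p.1) =
      ∑ l, (V l)ᴴ * (∑ m, (W m)ᴴ * C * W m) * V l := by
    intro C
    rw [Fintype.sum_prod_type]
    simp only [Matrix.mul_sum, Matrix.sum_mul, Matrix.conjTranspose_mul, Matrix.mul_assoc]
  have hpsd : ∀ l, ((V l)ᴴ * (1 - ∑ m, (W m)ᴴ * W m) * V l).PosSemidef := fun l =>
    hW2.conjTranspose_mul_mul_same (V l)
  have hdec : (1 : Matrix (Fin d) (Fin d) ℂ) -
      ∑ p : κ × μ, (W p.2 * V p.1)ᴴ * (W p.2 * V p.1) =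
      (1 - ∑ l, (V l)ᴴ * V l) + ∑ l, (V l)ᴴ * (1 - ∑ m, (W m)ᴴ * W m) * V l := by
    have := hC 1
    simp only [Matrix.mul_one] at this
    rw [this]
    simp only [Matrix.mul_sub, Matrix.sub_mul, Finset.sum_sub_distrib, Matrix.mul_one]
    abel
  obtain ⟨h1, h2⟩ := rigidity hA hAmin (fun p : κ × μ => W p.2 * V p.1)
    (fun j => by rw [hC]; simp only [hW1, hV1])
    (by rw [hdec]; exact hV2.add (Matrix.posSemidef_sum _ fun l _ => hpsd l))
  rw [h1, sub_self] at hdec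
  have hq : ∀ x, 0 = qf (1 - ∑ l, (V l)ᴴ * V l) x +
      ∑ l, qf ((V l)ᴴ * (1 - ∑ m, (W m)ᴴ * W m) * V l) x := by
    intro x
    rw [← qf_sum, ← qf_add, ← hdec]
    simp [qf]
  have hq1 : ∀ x, 0 ≤ qf (1 - ∑ l, (V l)ᴴ * V l) x := (psd_iff_qf hV2.1).1 hV2
  have hq2 : ∀ l x, 0 ≤ qf ((V l)ᴴ * (1 - ∑ m, (W m)ᴴ * W m) * V l) x := fun l =>
    (psd_iff_qf (hpsd l).1).1 (hpsd l)
  have hz : ∀ {m : ℕ} {G : Matrix (Fin m) (Fin m) ℂ} (hG : G.PosSemidef) (x : Fin m → ℂ),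
      qf G x = 0 → G *ᵥ x = 0 := by
    intro m G hG x hx
    rw [← hG.dotProduct_mulVec_zero_iff]
    apply Complex.ext
    · exact hx
    · exact hG.1.im_star_dotProduct_mulVec_self x
  have hV3 : 1 - ∑ l, (V l)ᴴ * V l = 0 := by
    apply mat_ext
    intro x
    rw [Matrix.zero_mulVec]
    apply hz hV2
    have := hq x
    have h3 := Finset.sum_nonneg fun l (_ : l ∈ Finset.univ) => hq2 l x
    have h4 := hq1 x
    linarith
  have hW3 : ∀ l, (1 - ∑ m, (W m)ᴴ * W m) * V l = 0 := by
    intro l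
    apply mat_ext
    intro x
    rw [Matrix.zero_mulVec, ← Matrix.mulVec_mulVec]
    apply hz hW2
    rw [← qf_conj]
    have := hq x
    have h3 := Finset.single_le_sum (fun l _ => hq2 l x) (Finset.mem_univ l)
    have h4 := hq1 x
    have h5 := hq2 l x
    linarith
  refine ⟨(sub_eq_zero.1 hV3).symm, fun j l => ?_⟩
  have h3 : ∑ m, (W m)ᴴ * W m * V l = V l := by
    have := hW3 l
    rw [Matrix.sub_mul, Matrix.one_mul, sub_eq_zero, Matrix.sum_mul] at this
    exact this.symm
  conv_lhs => rw [← h3]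
  rw [← hW1 j, Matrix.sum_mul, Matrix.sum_mul]
  refine Finset.sum_congr rfl fun m _ => ?_
  have := h2 j (l, m)
  simp only at this
  rw [Matrix.mul_assoc, Matrix.mul_assoc, ← Matrix.mul_assoc (W m), ← this]
  simp only [Matrix.mul_assoc]

lemma range_claim {n d e : ℕ} {A : Fin n → Matrix (Fin d) (Fin d) ℂ}
    {B : Fin n → Matrix (Fin e) (Fin e) ℂ} (hB : ∀ j, (B j).IsHermitian)
    (T V : Matrix (Fin e) (Fin d) ℂ) (hT : ∀ j, T * A j = B j * T) (hV : ∀ j, V * A j = B j * V)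
    (hmin : ∀ T' : Matrix (Fin e) (Fin d) ℂ, (∀ j, T' * A j = B j * T') →
      Module.finrank ℂ (LinearMap.ker T.mulVecLin) ≤ Module.finrank ℂ (LinearMap.ker T'.mulVecLin))
    (x : Fin d → ℂ) (hx : T *ᵥ x = 0) : ∃ z, V *ᵥ x = T *ᵥ z := by
  obtain ⟨J, hJ, hJR⟩ := exists_isometry (LinearMap.range T.mulVecLin)
  have hTR : ∀ y, ∃ z, T *ᵥ y = J *ᵥ z := fun y => (hJR _).1 ⟨y, rfl⟩
  have hJT : ∀ z, ∃ y, J *ᵥ z = T *ᵥ y := fun z => by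
    obtain ⟨y, hy⟩ := (hJR (J *ᵥ z)).2 ⟨z, rfl⟩
    exact ⟨y, hy.symm⟩
  obtain ⟨P, hP⟩ : ∃ P, P = J * Jᴴ := ⟨_, rfl⟩
  have hPT' : ∀ y, P *ᵥ (T *ᵥ y) = T *ᵥ y := by
    intro y
    obtain ⟨z, hz⟩ := hTR y
    rw [hz, Matrix.mulVec_mulVec]
    rw [hP, Matrix.mul_assoc, hJ, Matrix.mul_one]
  have hPh : Pᴴ = P := by simp [hP]
  have hPB1 : ∀ j, P * B j * P = B j * P := by
    intro j
    apply mat_ext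
    intro y
    obtain ⟨u, hu⟩ := hJT (Jᴴ *ᵥ y)
    have hPy : P *ᵥ y = T *ᵥ u := by rw [← hu, Matrix.mulVec_mulVec, hP]
    rw [← Matrix.mulVec_mulVec, ← Matrix.mulVec_mulVec, ← Matrix.mulVec_mulVec, hPy,
      Matrix.mulVec_mulVec u (B j), ← hT, ← Matrix.mulVec_mulVec, hPT']
  have hPB : ∀ j, P * B j = B j * P := by
    intro j
    have := congrArg Matrix.conjTranspose (hPB1 j)
    rw [Matrix.conjTranspose_mul, Matrix.conjTranspose_mul, Matrix.conjTranspose_mul, hPh,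
      (hB j).eq, ← Matrix.mul_assoc, hPB1] at this
    exact this.symm
  have hPT : P * T = T := mat_ext fun y => by rw [← Matrix.mulVec_mulVec, hPT']
  have hTP : Tᴴ * P = Tᴴ := by
    have := congrArg Matrix.conjTranspose hPT
    rwa [Matrix.conjTranspose_mul, hPh] at this
  let T' := T + (1 - P) * V
  have hT' : ∀ j, T' * A j = B j * T' := by
    intro j
    simp only [T', Matrix.add_mul, Matrix.mul_add, Matrix.sub_mul, Matrix.mul_sub, Matrix.one_mul]
    rw [hT, hV, Matrix.mul_assoc, hV, ← Matrix.mul_assoc, hPB, Matrix.mul_assoc]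
  have hTT' : Tᴴ * T' = Tᴴ * T := by
    simp only [T', Matrix.mul_add, Matrix.sub_mul, Matrix.mul_sub, Matrix.one_mul,
      ← Matrix.mul_assoc]
    rw [hTP, sub_self, add_zero]
  have hker : LinearMap.ker T'.mulVecLin ≤ LinearMap.ker T.mulVecLin := by
    intro y hy
    rw [LinearMap.mem_ker, Matrix.mulVecLin_apply] at hy ⊢
    rw [← Matrix.conjTranspose_mul_self_mulVec_eq_zero, ← hTT', ← Matrix.mulVec_mulVec, hy,
      Matrix.mulVec_zero]
  have heq := Submodule.eq_of_le_of_finrank_le hker (hmin T' hT')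
  have hx' : x ∈ LinearMap.ker T'.mulVecLin := by
    rw [heq]
    exact hx
  rw [LinearMap.mem_ker, Matrix.mulVecLin_apply] at hx'
  simp only [T'] at hx'
  rw [Matrix.add_mulVec, hx, zero_add, Matrix.sub_mul, Matrix.sub_mulVec, Matrix.one_mul,
    sub_eq_zero] at hx'
  obtain ⟨u, hu⟩ := hJT (Jᴴ *ᵥ (V *ᵥ x))
  refine ⟨u, ?_⟩
  rw [hx', ← hu]
  simp only [hP, Matrix.mulVec_mulVec, Matrix.mul_assoc]

lemma exists_inj {n d e : ℕ} {A : Fin n → Matrix (Fin d) (Fin d) ℂ}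
    {B : Fin n → Matrix (Fin e) (Fin e) ℂ}
    (hA : ∀ j, (A j).IsHermitian) (hB : ∀ j, (B j).IsHermitian)
    (hAmin : ∀ (e' : ℕ) (C : Fin n → Matrix (Fin e') (Fin e') ℂ),
      (∀ j, (C j).IsHermitian) → SameFreeSpectrahedron A C → d ≤ e')
    {κ : Type} [Fintype κ] (V : κ → Matrix (Fin e) (Fin d) ℂ)
    (hV1 : ∑ l, (V l)ᴴ * V l = 1) (hV2 : ∀ j l, V l * A j = B j * V l) :
    ∃ T : Matrix (Fin e) (Fin d) ℂ, (∀ j, T * A j = B j * T) ∧ Function.Injective T.mulVec := by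
  obtain ⟨T, hT, hmin⟩ := (measure fun T : Matrix (Fin e) (Fin d) ℂ =>
    Module.finrank ℂ (LinearMap.ker T.mulVecLin)).wf.has_min {T | ∀ j, T * A j = B j * T}
      ⟨0, fun j => by simp⟩
  have hT : ∀ j, T * A j = B j * T := hT
  have hmin : ∀ T' : Matrix (Fin e) (Fin d) ℂ, (∀ j, T' * A j = B j * T') →
      Module.finrank ℂ (LinearMap.ker T.mulVecLin) ≤
        Module.finrank ℂ (LinearMap.ker T'.mulVecLin) :=
    fun T' h => not_lt.1 (hmin T' h)
  have hTs : ∀ j, Tᴴ * B j = A j * Tᴴ := by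
    intro j
    have := congrArg Matrix.conjTranspose (hT j)
    rw [Matrix.conjTranspose_mul, Matrix.conjTranspose_mul, (hA j).eq, (hB j).eq] at this
    exact this.symm
  refine ⟨T, hT, ?_⟩
  have htop := compress hA hAmin (LinearMap.range (Tᴴ).mulVecLin) (by
    intro k X hX hneg
    obtain ⟨r, h, hr, hh, heig⟩ := neg_eigen (monicK_herm hA hX) hneg
    have hcol : ∀ v : Fin e × Fin k → ℂ, ∀ a, (fun i =>
        ((Tᴴ ⊗ₖ (1 : Matrix (Fin k) (Fin k) ℂ)) *ᵥ v) (i, a)) ∈ LinearMap.range (Tᴴ).mulVecLin := by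
      intro v a
      refine ⟨fun p => v (p, a), ?_⟩
      ext i
      rw [kron_one_mulVec]
      rfl
    have heig2 : ∀ S : Matrix (Fin e) (Fin d) ℂ, (∀ j, S * A j = B j * S) →
        monicK A X *ᵥ ((Tᴴ ⊗ₖ (1 : Matrix (Fin k) (Fin k) ℂ)) *ᵥ
          ((S ⊗ₖ (1 : Matrix (Fin k) (Fin k) ℂ)) *ᵥ h)) = (r : ℂ) •
        ((Tᴴ ⊗ₖ (1 : Matrix (Fin k) (Fin k) ℂ)) *ᵥ
          ((S ⊗ₖ (1 : Matrix (Fin k) (Fin k) ℂ)) *ᵥ h)) := by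
      intro S hS
      rw [Matrix.mulVec_mulVec, ← intertwine_monicK hTs, ← Matrix.mulVec_mulVec,
        Matrix.mulVec_mulVec h (monicK B X), ← intertwine_monicK hS, ← Matrix.mulVec_mulVec, heig,
        Matrix.mulVec_smul, Matrix.mulVec_smul]
    have hTT : (T ⊗ₖ (1 : Matrix (Fin k) (Fin k) ℂ))ᴴ =
        Tᴴ ⊗ₖ (1 : Matrix (Fin k) (Fin k) ℂ) := by
      rw [Matrix.conjTranspose_kronecker, Matrix.conjTranspose_one]
    by_cases h0 : (T ⊗ₖ (1 : Matrix (Fin k) (Fin k) ℂ)) *ᵥ h = 0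
    · have hl : ∃ l, (V l ⊗ₖ (1 : Matrix (Fin k) (Fin k) ℂ)) *ᵥ h ≠ 0 := by
        by_contra hcon
        push Not at hcon
        apply hh
        ext ⟨i, a⟩
        have h1 : ∀ l, V l *ᵥ (fun p => h (p, a)) = 0 := by
          intro l
          ext p
          rw [← kron_one_mulVec, hcon]
          rfl
        have h2 : (fun p => h (p, a)) = 0 := by
          rw [← Matrix.one_mulVec (fun p => h (p, a)), ← hV1, Matrix.sum_mulVec]
          refine Finset.sum_eq_zero fun l _ => ?_
          rw [← Matrix.mulVec_mulVec, h1, Matrix.mulVec_zero]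
        exact congrFun h2 i
      obtain ⟨l, hl⟩ := hl
      refine ⟨_, hcol _, qf_eigen hr ?_ (heig2 (V l) fun j => hV2 j l)⟩
      intro hcon
      apply hl
      have hker : ∀ a, T *ᵥ (fun p => h (p, a)) = 0 := by
        intro a
        ext p
        rw [← kron_one_mulVec, h0]
        rfl
      choose z hz using fun a => range_claim hB T (V l) hT (fun j => hV2 j l) hmin _ (hker a)
      have hVz : (V l ⊗ₖ (1 : Matrix (Fin k) (Fin k) ℂ)) *ᵥ h =
          (T ⊗ₖ (1 : Matrix (Fin k) (Fin k) ℂ)) *ᵥ (fun p => z p.2 p.1) := by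
        ext ⟨p, a⟩
        rw [kron_one_mulVec, kron_one_mulVec, hz]
      rw [hVz, Matrix.mulVec_mulVec, ← hTT, Matrix.conjTranspose_mul_self_mulVec_eq_zero] at hcon
      rw [hVz, hcon]
    · refine ⟨_, hcol _, qf_eigen hr ?_ (heig2 T hT)⟩
      intro hcon
      rw [Matrix.mulVec_mulVec, ← hTT, Matrix.conjTranspose_mul_self_mulVec_eq_zero] at hcon
      exact h0 hcon)
  rw [← Matrix.coe_mulVecLin, ← LinearMap.ker_eq_bot, LinearMap.ker_eq_bot']
  intro x hx
  rw [Matrix.mulVecLin_apply] at hx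
  have : x ∈ LinearMap.range (Tᴴ).mulVecLin := by rw [htop]; trivial
  obtain ⟨y, rfl⟩ := this
  rw [Matrix.mulVecLin_apply] at hx ⊢
  have h2 := Matrix.conjTranspose_mul_self_mulVec_eq_zero Tᴴ y
  rw [Matrix.conjTranspose_conjTranspose, ← Matrix.mulVec_mulVec] at h2
  exact h2.1 hx

end final

/-- minimal monic hermitian pencils define the same free spectrahedron
iff they are unitarily similar. -/
theorem minimal_monic_hermitian_pencils_unique {n d e : ℕ}
    (A : Fin n → Matrix (Fin d) (Fin d) ℂ) (B : Fin n → Matrix (Fin e) (Fin e) ℂ)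
    (hAherm : ∀ j, (A j).IsHermitian) (hBherm : ∀ j, (B j).IsHermitian)
    (hAmin : ∀ (e' : ℕ) (C : Fin n → Matrix (Fin e') (Fin e') ℂ),
      (∀ j, (C j).IsHermitian) → SameFreeSpectrahedron A C → d ≤ e')
    (hBmin : ∀ (e' : ℕ) (C : Fin n → Matrix (Fin e') (Fin e') ℂ),
      (∀ j, (C j).IsHermitian) → SameFreeSpectrahedron B C → e ≤ e') :
    SameFreeSpectrahedron A B ↔
      ∃ h : d = e, ∃ U ∈ Matrix.unitaryGroup (Fin e) ℂ,
        ∀ j, B j = U * (Matrix.reindex (finCongr h) (finCongr h) (A j)) * star U := by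
  constructor
  · intro h
    obtain rfl : d = e := le_antisymm (hAmin e B hBherm h)
      (hBmin d A hAherm fun k X hX => (h k X hX).symm)
    obtain ⟨κ, _, V, hV1, hV2⟩ := psatz hAherm hBherm fun k X hX => (h k X hX).2
    obtain ⟨μ, _, W, hW1, hW2⟩ := psatz hBherm hAherm fun k X hX => (h k X hX).1
    obtain ⟨hV3, hV4⟩ := intertwiners hAherm hAmin V W hV1 hV2 hW1 hW2
    obtain ⟨T, hT, hinj⟩ := exists_inj hAherm hBherm hAmin V hV3 hV4
    have hP : (Tᴴ * T).PosDef := Matrix.PosDef.conjTranspose_mul_self T hinj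
    obtain ⟨Q, hQ, hQP, hQc⟩ := exists_invsqrt hP
    have hTs : ∀ j, Tᴴ * B j = A j * Tᴴ := by
      intro j
      have := congrArg Matrix.conjTranspose (hT j)
      rw [Matrix.conjTranspose_mul, Matrix.conjTranspose_mul, (hAherm j).eq, (hBherm j).eq] at this
      exact this.symm
    have hAQ : ∀ j, A j * Q = Q * A j := by
      intro j
      apply hQc
      rw [← Matrix.mul_assoc, ← hTs, Matrix.mul_assoc, ← hT, Matrix.mul_assoc]
    have hU1 : (T * Q)ᴴ * (T * Q) = 1 := by
      rw [Matrix.conjTranspose_mul, hQ, ← hQP]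
      simp only [Matrix.mul_assoc]
    have hU2 : (T * Q) * (T * Q)ᴴ = 1 := mul_eq_one_comm.1 hU1
    refine ⟨rfl, T * Q, Matrix.mem_unitaryGroup_iff.2 hU2, fun j => ?_⟩
    have : T * Q * A j = B j * (T * Q) := by
      rw [Matrix.mul_assoc, ← hAQ, ← Matrix.mul_assoc, hT, Matrix.mul_assoc]
    simp only [finCongr_refl, Matrix.reindex_refl_refl]
    rw [this, Matrix.mul_assoc, Matrix.star_eq_conjTranspose, hU2, Matrix.mul_one]
  · rintro ⟨rfl, U, hU, hBU⟩
    simp only [finCongr_refl, Matrix.reindex_refl_refl] at hBU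
    have hU1 : Uᴴ * U = 1 := Matrix.mem_unitaryGroup_iff'.1 hU
    have hU2 : U * Uᴴ = 1 := Matrix.mem_unitaryGroup_iff.1 hU
    intro k X hX
    constructor
    · intro h
      have := h.conjTranspose_mul_mul_same (Uᴴ ⊗ₖ (1 : Matrix (Fin k) (Fin k) ℂ))
      rw [conj_monicK, Matrix.conjTranspose_conjTranspose, hU2, Matrix.one_kronecker_one] at this
      unfold monicK
      simp only [hBU]
      exact this
    · intro h
      have := h.conjTranspose_mul_mul_same (U ⊗ₖ (1 : Matrix (Fin k) (Fin k) ℂ))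
      rw [conj_monicK, hU1, Matrix.one_kronecker_one] at this
      unfold monicK
      have h2 : ∀ j, Uᴴ * B j * U = A j := by
        intro j
        rw [hBU, Matrix.star_eq_conjTranspose, Matrix.mul_assoc, Matrix.mul_assoc, hU1,
          Matrix.mul_one, ← Matrix.mul_assoc, hU1, Matrix.one_mul]
      simp only [h2] at this
      exact this
end

section
/- Helton–McCullough theorem (convexity forces an LMI representation): let f = f* ∈ M_d(ℂ⟨x⟩) with f(0) positive definite. Then the free semialgebraic set D_f is convex (i.e., for every k ∈ ℕ, D_f(k) is a convex subset of the real vector space (H_k)ⁿ) if and only if D_f is a free spectrahedron, i.e., there exists a hermitian linear matrix pencil L with D_f = D_L. -/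
open scoped Kronecker Matrix ComplexOrder

section HM
open FreeAlgebra

/-- The word as an element of the free algebra. -/
noncomputable def hmWord {n : ℕ} (w : List (Fin n)) : FreeAlg n := (w.map (FreeAlgebra.ι ℂ)).prod

/-- Evaluation at a tuple of matrices over an arbitrary finite index type. -/
noncomputable def hmEv {n : ℕ} {ι : Type} [Fintype ι] [DecidableEq ι]
    (X : Fin n → Matrix ι ι ℂ) : FreeAlg n →ₐ[ℂ] Matrix ι ι ℂ := FreeAlgebra.lift ℂ X

theorem hmEv_ι {n : ℕ} {ι : Type} [Fintype ι] [DecidableEq ι]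
    (X : Fin n → Matrix ι ι ℂ) (j : Fin n) : hmEv X (FreeAlgebra.ι ℂ j) = X j := by
  simp [hmEv]

theorem hm_equiv_symm_single {n : ℕ} (w : FreeMonoid (Fin n)) (c : ℂ) :
    (FreeAlgebra.equivMonoidAlgebraFreeMonoid (R := ℂ) (X := Fin n)).symm
      (MonoidAlgebra.single w c) = c • hmWord w.toList := by
  change (MonoidAlgebra.lift ℂ _ _ (FreeMonoid.lift (FreeAlgebra.ι ℂ))) (MonoidAlgebra.single w c) = _
  rw [MonoidAlgebra.lift_single, FreeMonoid.lift_apply]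
  rfl

theorem hm_nstar_add {n : ℕ} (a b : FreeAlg n) : nstar (a + b) = nstar a + nstar b := by
  unfold nstar
  rw [← map_add]
  congr 1
  rw [map_add, MonoidAlgebra.coeff_add, Finsupp.mapRange_add (fun _ _ => map_add _ _ _), Finsupp.mapDomain_add]
  rfl

theorem hm_nstar_word {n : ℕ} (c : ℂ) (w : List (Fin n)) :
    nstar (c • hmWord w) = star c • hmWord w.reverse := by
  have h := hm_equiv_symm_single (FreeMonoid.ofList w) c
  rw [FreeMonoid.toList_ofList] at h
  rw [← h]
  unfold nstar
  rw [AlgEquiv.apply_symm_apply]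
  have : (MonoidAlgebra.single (FreeMonoid.ofList w) c).coeff = Finsupp.single (FreeMonoid.ofList w) c := rfl
  rw [this, Finsupp.mapRange_single, Finsupp.mapDomain_single]
  exact hm_equiv_symm_single _ _

theorem hm_induction {n : ℕ} {p : FreeAlg n → Prop} (hadd : ∀ a b, p a → p b → p (a + b))
    (hw : ∀ (c : ℂ) w, p (c • hmWord w)) (a : FreeAlg n) : p a := by
  obtain ⟨b, rfl⟩ := (FreeAlgebra.equivMonoidAlgebraFreeMonoid (R := ℂ) (X := Fin n)).symm.surjective a
  induction b using MonoidAlgebra.induction_linear with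
  | zero => simpa using hw 0 []
  | add f g hf hg => rw [map_add]; exact hadd _ _ hf hg
  | single a b => rw [hm_equiv_symm_single]; exact hw _ _

theorem hmEv_word_cons {n : ℕ} {ι : Type} [Fintype ι] [DecidableEq ι]
    (X : Fin n → Matrix ι ι ℂ) (j : Fin n) (w) :
    hmEv X (hmWord (j :: w)) = X j * hmEv X (hmWord w) := by
  simp [hmWord, hmEv]

theorem hmEv_word_nil {n : ℕ} {ι : Type} [Fintype ι] [DecidableEq ι]
    (X : Fin n → Matrix ι ι ℂ) : hmEv X (hmWord []) = 1 := by
  simp [hmWord]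

theorem hmEv_word_append {n : ℕ} {ι : Type} [Fintype ι] [DecidableEq ι]
    (X : Fin n → Matrix ι ι ℂ) (u w) :
    hmEv X (hmWord (u ++ w)) = hmEv X (hmWord u) * hmEv X (hmWord w) := by
  simp [hmWord, hmEv]

theorem hmEv_star {n : ℕ} {ι : Type} [Fintype ι] [DecidableEq ι]
    (X : Fin n → Matrix ι ι ℂ) (hX : ∀ j, (X j).IsHermitian) (a : FreeAlg n) :
    hmEv X (nstar a) = (hmEv X a)ᴴ := by
  induction a using hm_induction with
  | hadd a b ha hb => rw [hm_nstar_add, map_add, map_add, ha, hb, Matrix.conjTranspose_add]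
  | hw c w =>
    rw [hm_nstar_word, map_smul, map_smul, Matrix.conjTranspose_smul]
    congr 1
    induction w with
    | nil => simp [hmEv_word_nil]
    | cons j w ih =>
      rw [List.reverse_cons, hmEv_word_append, hmEv_word_cons, hmEv_word_cons, hmEv_word_nil, ih,
        Matrix.conjTranspose_mul, (hX j).eq, mul_one]

theorem hmEv_intertwine {n : ℕ} {ι κ : Type} [Fintype ι] [DecidableEq ι] [Fintype κ] [DecidableEq κ]
    (X : Fin n → Matrix ι ι ℂ) (Y : Fin n → Matrix κ κ ℂ) (T : Matrix κ ι ℂ)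
    (h : ∀ j, Y j * T = T * X j) (a : FreeAlg n) : hmEv Y a * T = T * hmEv X a := by
  induction a using hm_induction with
  | hadd a b ha hb => simp only [map_add, Matrix.add_mul, Matrix.mul_add, ha, hb]
  | hw c w =>
    rw [map_smul, map_smul, Matrix.smul_mul, Matrix.mul_smul]
    congr 1
    induction w with
    | nil => simp [hmEv_word_nil]
    | cons j w ih => rw [hmEv_word_cons, hmEv_word_cons, Matrix.mul_assoc, ih, ← Matrix.mul_assoc, h, Matrix.mul_assoc]

/-- The quadratic form of `f(X)`. -/
noncomputable def hmQ {n d : ℕ} {ι : Type} [Fintype ι] [DecidableEq ι]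
    (f : Matrix (Fin d) (Fin d) (FreeAlg n)) (X : Fin n → Matrix ι ι ℂ) (v : Fin d → ι → ℂ) : ℂ :=
  ∑ a, ∑ b, star (v a) ⬝ᵥ (hmEv X (f a b) *ᵥ v b)

/-- Membership in the free semialgebraic set over an arbitrary finite index type. -/
def hmK {n d : ℕ} {ι : Type} [Fintype ι] [DecidableEq ι]
    (f : Matrix (Fin d) (Fin d) (FreeAlg n)) (X : Fin n → Matrix ι ι ℂ) : Prop :=
  (∀ j, (X j).IsHermitian) ∧ ∀ v : Fin d → ι → ℂ, 0 ≤ (hmQ f X v).re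

/-- The matrix `f(X)` over an arbitrary finite index type. -/
noncomputable def hmMat {n d : ℕ} {ι : Type} [Fintype ι] [DecidableEq ι]
    (f : Matrix (Fin d) (Fin d) (FreeAlg n)) (X : Fin n → Matrix ι ι ℂ) :
    Matrix (Fin d × ι) (Fin d × ι) ℂ :=
  fun p q => hmEv X (f p.1 q.1) p.2 q.2

theorem hm_eval_quad {n d : ℕ} {ι : Type} [Fintype ι] [DecidableEq ι]
    (f : Matrix (Fin d) (Fin d) (FreeAlg n))
    (X : Fin n → Matrix ι ι ℂ) (v : Fin d × ι → ℂ) :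
    star v ⬝ᵥ (hmMat f X *ᵥ v) = hmQ f X (fun a s => v (a, s)) := by
  simp only [hmQ, dotProduct, Matrix.mulVec, Fintype.sum_prod_type, hmMat, Pi.star_apply,
    Finset.mul_sum]
  refine Finset.sum_congr rfl fun a _ => ?_
  rw [Finset.sum_comm]

theorem hm_eval_herm {n d : ℕ} {ι : Type} [Fintype ι] [DecidableEq ι]
    (f : Matrix (Fin d) (Fin d) (FreeAlg n)) (hf : IsHermPoly f)
    (X : Fin n → Matrix ι ι ℂ) (hX : ∀ j, (X j).IsHermitian) :
    (hmMat f X).IsHermitian := by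
  ext p q
  have h := hmEv_star X hX (f q.1 p.1)
  rw [← hf p.1 q.1] at h
  have := congrFun (congrFun h p.2) q.2
  exact this.symm

theorem hm_psd_iff {ι : Type} [Fintype ι] (M : Matrix ι ι ℂ) (hM : M.IsHermitian) :
    M.PosSemidef ↔ ∀ v : ι → ℂ, 0 ≤ (star v ⬝ᵥ (M *ᵥ v)).re := by
  constructor
  · intro h v
    exact (Complex.le_def.1 (h.dotProduct_mulVec_nonneg v)).1
  · intro h
    refine Matrix.PosSemidef.of_dotProduct_mulVec_nonneg hM fun v => ?_
    rw [Complex.le_def]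
    refine ⟨h v, ?_⟩
    have : (starRingEnd ℂ) (star v ⬝ᵥ (M *ᵥ v)) = star v ⬝ᵥ (M *ᵥ v) := by
      have h1 : star (star v ⬝ᵥ (M *ᵥ v)) = star v ⬝ᵥ (M *ᵥ v) := by
        conv_lhs => rw [Matrix.star_dotProduct, star_star, Matrix.star_mulVec, hM.eq,
          ← Matrix.dotProduct_mulVec]
      exact h1
    rw [Complex.conj_eq_iff_im] at this
    simp [this]

theorem hmK_iff {n d : ℕ} {ι : Type} [Fintype ι] [DecidableEq ι]
    (f : Matrix (Fin d) (Fin d) (FreeAlg n)) (hf : IsHermPoly f)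
    (X : Fin n → Matrix ι ι ℂ) (hX : ∀ j, (X j).IsHermitian) :
    (hmMat f X).PosSemidef ↔ hmK f X := by
  rw [hm_psd_iff _ (hm_eval_herm f hf X hX)]
  constructor
  · intro h
    refine ⟨hX, fun v => ?_⟩
    have := h (fun p => v p.1 p.2)
    rwa [hm_eval_quad] at this
  · intro h v
    rw [hm_eval_quad]
    exact h.2 _

/-- Transport along an injective isometric change of coordinates. -/
theorem hmQ_transport {n d : ℕ} {ι κ : Type} [Fintype ι] [DecidableEq ι] [Fintype κ] [DecidableEq κ]
    (f : Matrix (Fin d) (Fin d) (FreeAlg n))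
    (X : Fin n → Matrix ι ι ℂ) (Y : Fin n → Matrix κ κ ℂ) (T : Matrix κ ι ℂ)
    (h : ∀ j, Y j * T = T * X j) (hT : Tᴴ * T = 1) (v : Fin d → ι → ℂ) :
    hmQ f Y (fun a => T *ᵥ v a) = hmQ f X v := by
  unfold hmQ
  refine Finset.sum_congr rfl fun a _ => Finset.sum_congr rfl fun b _ => ?_
  rw [Matrix.mulVec_mulVec, hmEv_intertwine X Y T h, Matrix.star_mulVec, ← Matrix.dotProduct_mulVec,
    Matrix.mulVec_mulVec, ← Matrix.mul_assoc, hT, Matrix.one_mul]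

theorem hmK_reindex {n d : ℕ} {ι κ : Type} [Fintype ι] [DecidableEq ι] [Fintype κ] [DecidableEq κ]
    (f : Matrix (Fin d) (Fin d) (FreeAlg n)) (e : ι ≃ κ)
    (X : Fin n → Matrix ι ι ℂ) (hX : hmK f X) : hmK f (fun j => (X j).submatrix e.symm e.symm) := by
  refine ⟨fun j => (hX.1 j).submatrix _, fun v => ?_⟩
  have := hmQ_transport f (fun j => (X j).submatrix e.symm e.symm) X
    ((1 : Matrix ι ι ℂ).submatrix id e.symm) (fun j => by
      rw [Matrix.submatrix_mul_equiv, Matrix.one_mul]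
      have := Matrix.submatrix_mul_equiv (X j) 1 id (Equiv.refl ι) e.symm
      simpa using this) (by
      rw [Matrix.conjTranspose_submatrix, Matrix.conjTranspose_one]
      have := Matrix.submatrix_mul_equiv (1 : Matrix ι ι ℂ) 1 e.symm (Equiv.refl ι) e.symm
      simpa using this) v
  rw [← this]
  exact hX.2 _

theorem hmK_sum {n d : ℕ} {ι κ : Type} [Fintype ι] [DecidableEq ι] [Fintype κ] [DecidableEq κ]
    (f : Matrix (Fin d) (Fin d) (FreeAlg n)) 
    (X : Fin n → Matrix ι ι ℂ) (hX : hmK f X) (Y : Fin n → Matrix κ κ ℂ) (hY : hmK f Y) :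
    hmK f (fun j => Matrix.fromBlocks (X j) 0 0 (Y j)) := by
  refine ⟨fun j => (hX.1 j).fromBlocks (by simp) (hY.1 j), fun v => ?_⟩
  have hev : ∀ a, hmEv (fun j => Matrix.fromBlocks (X j) 0 0 (Y j)) a =
      Matrix.fromBlocks (hmEv X a) 0 0 (hmEv Y a) := by
    intro a
    induction a using hm_induction with
    | hadd a b ha hb => simp only [map_add, ha, hb, Matrix.fromBlocks_add, add_zero]
    | hw c w =>
      rw [map_smul, map_smul, map_smul]
      have : hmEv (fun j => Matrix.fromBlocks (X j) 0 0 (Y j)) (hmWord w) =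
        Matrix.fromBlocks (hmEv X (hmWord w)) 0 0 (hmEv Y (hmWord w)) := by
        induction w with
        | nil => simp [hmEv_word_nil, Matrix.fromBlocks_one]
        | cons j w ih => simp [hmEv_word_cons, ih, Matrix.fromBlocks_multiply]
      rw [this, Matrix.fromBlocks_smul]; simp
  have : hmQ f (fun j => Matrix.fromBlocks (X j) 0 0 (Y j)) v =
      hmQ f X (fun a s => v a (Sum.inl s)) + hmQ f Y (fun a s => v a (Sum.inr s)) := by
    simp only [hmQ, hev, ← Finset.sum_add_distrib]
    refine Finset.sum_congr rfl fun a _ => Finset.sum_congr rfl fun b _ => ?_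
    simp [dotProduct, Matrix.mulVec]
  rw [this, Complex.add_re]
  exact add_nonneg (hX.2 _) (hY.2 _)

/-- Convexity over arbitrary finite index types. -/
def hmConv {n d : ℕ} (f : Matrix (Fin d) (Fin d) (FreeAlg n)) : Prop :=
  ∀ (ι : Type) [Fintype ι] [DecidableEq ι] (X Y : Fin n → Matrix ι ι ℂ), hmK f X → hmK f Y →
    hmK f (fun j => (2⁻¹ : ℂ) • (X j + Y j))

theorem hmK_unitary {n d : ℕ} {ι : Type} [Fintype ι] [DecidableEq ι]
    (f : Matrix (Fin d) (Fin d) (FreeAlg n)) (X : Fin n → Matrix ι ι ℂ) (hX : hmK f X)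
    (U : Matrix ι ι ℂ) (hU : U.IsHermitian) (hU2 : U * U = 1) :
    hmK f (fun j => U * X j * U) := by
  constructor
  · intro j
    have := Matrix.isHermitian_conjTranspose_mul_mul U (hX.1 j)
    rwa [hU.eq] at this
  · intro v
    rw [← hmQ_transport f (fun j => U * X j * U) X U (fun j => by
      simp only [← Matrix.mul_assoc, hU2, Matrix.one_mul]) (by rw [hU.eq, hU2]) v]
    exact hX.2 _

theorem hm_evalM_eq {n d k : ℕ} (f : Matrix (Fin d) (Fin d) (FreeAlg n))
    (X : Fin n → Matrix (Fin k) (Fin k) ℂ) : evalM f X = hmMat f X := rfl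

theorem hm_small {ι : Type} [Fintype ι] (A : ℝ → Matrix ι ι ℂ) (hc : Continuous A)
    (hA : ∀ t, (A t).IsHermitian) (h0 : (A 0).PosDef) : ∃ t : ℝ, 0 < t ∧ (A t).PosSemidef := by
  have hcont : Continuous (fun z : ℝ × (ι → ℂ) => (star z.2 ⬝ᵥ (A z.1 *ᵥ z.2)).re) := by
    fun_prop
  have hev : ∀ᶠ t in nhds (0 : ℝ), ∀ v ∈ Metric.sphere (0 : ι → ℂ) 1,
      0 < (star v ⬝ᵥ (A t *ᵥ v)).re := by
    refine (isCompact_sphere (0 : ι → ℂ) 1).eventually_forall_of_forall_eventually ?_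
    intro v hv
    refine hcont.continuousAt.eventually_const_lt ?_
    have hv0 : v ≠ 0 := by
      rintro rfl
      simp at hv
    exact (Complex.lt_def.1 (h0.dotProduct_mulVec_pos hv0)).1
  obtain ⟨ε, hε, h⟩ := Metric.eventually_nhds_iff.1 hev
  refine ⟨ε / 2, by positivity, ?_⟩
  rw [hm_psd_iff _ (hA _)]
  intro v
  by_cases hv : v = 0
  · simp [hv]
  have hn : ‖v‖ ≠ 0 := by simpa using hv
  have h1 := h (y := ε / 2) (by rw [Real.dist_eq]; rw [abs_of_pos] <;> linarith)
    (((‖v‖⁻¹ : ℝ) : ℂ) • v) (by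
      rw [mem_sphere_zero_iff_norm, norm_smul]; simp [hn])
  have h2 : (star (((‖v‖⁻¹ : ℝ) : ℂ) • v) ⬝ᵥ (A (ε / 2) *ᵥ (((‖v‖⁻¹ : ℝ) : ℂ) • v))) =
      (((‖v‖⁻¹ * ‖v‖⁻¹ : ℝ)) : ℂ) * (star v ⬝ᵥ (A (ε / 2) *ᵥ v)) := by
    rw [Matrix.mulVec_smul, star_smul, smul_dotProduct, dotProduct_smul]
    simp [mul_assoc]
  rw [h2, Complex.re_ofReal_mul] at h1
  exact (pos_of_mul_pos_right h1 (by positivity)).le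

theorem hmEv_zero {n : ℕ} {ι : Type} [Fintype ι] [DecidableEq ι] (a : FreeAlg n) :
    hmEv (fun _ => (0 : Matrix ι ι ℂ)) a =
      (FreeAlgebra.lift ℂ (fun _ : Fin n => (0 : ℂ)) a) • (1 : Matrix ι ι ℂ) := by
  induction a using hm_induction with
  | hadd a b ha hb => rw [map_add, map_add, ha, hb, add_smul]
  | hw c w =>
    rw [map_smul, map_smul]
    cases w <;> simp [hmWord, hmEv]

theorem hmK_small {n d : ℕ} {ι : Type} [Fintype ι] [DecidableEq ι]
    (f : Matrix (Fin d) (Fin d) (FreeAlg n)) (hf : IsHermPoly f) (hf0 : (evalZero f).PosDef)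
    (X : Fin n → Matrix ι ι ℂ) (hX : ∀ j, (X j).IsHermitian) :
    ∃ t : ℝ, 0 < t ∧ hmK f (fun j => (t : ℂ) • X j) := by
  have hh : ∀ t : ℝ, ∀ j, ((t : ℂ) • X j).IsHermitian := by
    intro t j
    rw [Matrix.IsHermitian, Matrix.conjTranspose_smul, (hX j).eq]
    simp
  obtain ⟨t, ht, h⟩ := hm_small (fun t : ℝ => hmMat f (fun j => (t : ℂ) • X j)) (by
      have : ∀ a, Continuous (fun t : ℝ => hmEv (fun j => (t : ℂ) • X j) a) := by
        intro a
        induction a using hm_induction with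
        | hadd a b ha hb => simp only [map_add]; exact ha.add hb
        | hw c w =>
          simp only [map_smul]
          refine Continuous.const_smul ?_ c
          induction w with
          | nil => simp only [hmEv_word_nil]; fun_prop
          | cons j w ih => simp only [hmEv_word_cons]; fun_prop
      refine continuous_matrix fun p q => ?_
      exact (this (f p.1 q.1)).matrix_elem p.2 q.2) (fun t => hm_eval_herm f hf _ (hh t)) (by
      have : hmMat f (fun j => ((0 : ℝ) : ℂ) • X j) = evalZero f ⊗ₖ (1 : Matrix ι ι ℂ) := by
        ext p q
        simp [hmMat, hmEv_zero, evalZero, Matrix.kroneckerMap_apply]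
      rw [this]
      exact hf0.kronecker Matrix.PosDef.one)
  exact ⟨t, ht, (hmK_iff f hf _ (hh t)).1 h⟩

theorem hm_psd_factor {ι : Type} [Fintype ι] [DecidableEq ι] (P : Matrix ι ι ℂ) (hP : P.PosSemidef) :
    ∃ V : Matrix ι ι ℂ, P = Vᴴ * V := by
  open scoped MatrixOrder Matrix.Norms.L2Operator in
  obtain ⟨B, h⟩ := CStarAlgebra.nonneg_iff_eq_star_mul_self.mp hP.nonneg
  exact ⟨B, h⟩

theorem hm_shift {ι : Type} [Fintype ι] [DecidableEq ι] (M : Matrix ι ι ℂ) (hM : M.PosDef)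
    (H : Matrix ι ι ℂ) (hH : H.IsHermitian) : ∃ t : ℝ, 0 < t ∧ (M - (t : ℂ) • H).PosSemidef := by
  refine hm_small (fun t : ℝ => M - (t : ℂ) • H) (by fun_prop) ?_ (by simpa using hM)
  intro t
  refine hM.1.sub ?_
  rw [Matrix.IsHermitian, Matrix.conjTranspose_smul, hH.eq]
  simp

/-- A symmetry fixing the range of `V` and negating its orthogonal complement. -/
theorem hm_symm {ι κ : Type} [Fintype ι] [DecidableEq ι] [Fintype κ] [DecidableEq κ] (V : Matrix ι κ ℂ) :
    ∃ U : Matrix ι ι ℂ, U.IsHermitian ∧ U * U = 1 ∧ U * V = V ∧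
      ∀ z : ι → ℂ, Vᴴ *ᵥ z = 0 → U *ᵥ z = - z := by
  let S : Submodule ℂ (EuclideanSpace ℂ ι) := LinearMap.range (Matrix.toEuclideanLin V)
  let P : Matrix ι ι ℂ := Matrix.toEuclideanCLM (𝕜 := ℂ).symm S.starProjection
  have hP : Matrix.toEuclideanCLM (𝕜 := ℂ) P = S.starProjection := by simp [P]
  have hinj : Function.Injective (Matrix.toEuclideanCLM (𝕜 := ℂ) (n := ι)) := EquivLike.injective _
  have hPh : Pᴴ = P := by
    apply hinj
    have := map_star (Matrix.toEuclideanCLM (𝕜 := ℂ) (n := ι)) P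
    rw [Matrix.star_eq_conjTranspose] at this
    rw [this, hP]
    exact isSelfAdjoint_starProjection S
  have hPP : P * P = P := by
    apply hinj
    rw [map_mul, hP]
    exact S.isIdempotentElem_starProjection
  have hPz : ∀ z : EuclideanSpace ℂ ι, P *ᵥ z.ofLp = (S.starProjection z).ofLp := by
    intro z
    rw [← hP]
    rfl
  have hPV : P * V = V := by
    apply Matrix.ext_of_mulVec_single
    intro i
    rw [← Matrix.mulVec_mulVec]
    have hm : WithLp.toLp 2 (V *ᵥ Pi.single i 1) ∈ S := ⟨WithLp.toLp 2 (Pi.single i 1), rfl⟩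
    have := hPz (WithLp.toLp 2 (V *ᵥ Pi.single i 1))
    rw [Submodule.starProjection_eq_self_iff.2 hm] at this
    exact this
  refine ⟨(2 : ℂ) • P - 1, ?_, ?_, ?_, ?_⟩
  · rw [Matrix.IsHermitian, Matrix.conjTranspose_sub, Matrix.conjTranspose_smul, hPh]
    simp
  · simp only [sub_mul, mul_sub, Matrix.smul_mul, Matrix.mul_smul, hPP, mul_one, one_mul]
    module
  · rw [Matrix.sub_mul, Matrix.smul_mul, hPV, Matrix.one_mul]
    module
  · intro z hz
    have hm : WithLp.toLp 2 z ∈ Sᗮ := by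
      rw [Submodule.mem_orthogonal]
      rintro _ ⟨y, rfl⟩
      rw [EuclideanSpace.inner_eq_star_dotProduct]
      change z ⬝ᵥ star (V *ᵥ y.ofLp) = 0
      rw [dotProduct_comm, Matrix.star_mulVec, ← Matrix.dotProduct_mulVec, hz, dotProduct_zero]
    have := hPz (WithLp.toLp 2 z)
    rw [(Submodule.starProjection_apply_eq_zero_iff S).2 hm] at this
    have h0 : P *ᵥ z = 0 := this
    rw [Matrix.sub_mulVec, Matrix.smul_mulVec, h0]
    simp

/-- Words of length at most `δ`. -/
abbrev HmW (n δ : ℕ) : Type := {w : List (Fin n) // w.length ≤ δ}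

noncomputable instance hmWFintype (n δ : ℕ) : Fintype (HmW n δ) :=
  (List.finite_length_le (Fin n) δ).fintype

/-- Index set of monomials: a word together with a component. -/
abbrev HmI (n d δ : ℕ) : Type := HmW n δ × Fin d

/-- The empty word. -/
def hmNil (n δ : ℕ) : HmW n δ := ⟨[], by simp⟩

/-- Prepending a letter. -/
def hmCons {n δ : ℕ} (j : Fin n) (w : HmW n δ) (h : w.1.length < δ) : HmW n δ := ⟨j :: w.1, by simp; omega⟩

theorem hm_coeff_one {n : ℕ} (a : FreeAlg n) :
    ∃ δ₀, ∀ δ, δ₀ ≤ δ → ∃ c : HmW n δ → ℂ, a = ∑ u, c u • hmWord u.1 := by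
  induction a using hm_induction with
  | hadd a b ha hb =>
    obtain ⟨m, hm⟩ := ha
    obtain ⟨m', hm'⟩ := hb
    refine ⟨max m m', fun δ hδ => ?_⟩
    obtain ⟨c, hc⟩ := hm δ (le_trans (le_max_left _ _) hδ)
    obtain ⟨c', hc'⟩ := hm' δ (le_trans (le_max_right _ _) hδ)
    refine ⟨fun u => c u + c' u, ?_⟩
    simp only [add_smul, Finset.sum_add_distrib]
    rw [← hc, ← hc']
  | hw c w =>
    refine ⟨w.length, fun δ hδ => ?_⟩
    refine ⟨fun u => if u = ⟨w, hδ⟩ then c else 0, ?_⟩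
    simp [ite_smul]

theorem hm_coeff {n d : ℕ} (f : Matrix (Fin d) (Fin d) (FreeAlg n)) :
    ∃ δ, ∃ c : Fin d → Fin d → HmW n δ → ℂ, ∀ a b, f a b = ∑ u, c a b u • hmWord u.1 := by
  choose m hm using fun a b => hm_coeff_one (f a b)
  refine ⟨∑ a, ∑ b, m a b, ?_⟩
  have hle : ∀ a b, m a b ≤ ∑ a, ∑ b, m a b := fun a b =>
    (Finset.single_le_sum (f := fun b => m a b) (fun _ _ => Nat.zero_le _) (Finset.mem_univ b)).trans
      (Finset.single_le_sum (f := fun a => ∑ b, m a b) (fun _ _ => Nat.zero_le _) (Finset.mem_univ a))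
  choose c hc using fun a b => hm a b _ (hle a b)
  exact ⟨c, hc⟩

/-- The ambient real vector space. -/
abbrev HmE (n : ℕ) (I : Type) : Type := Matrix I I ℂ × (Fin n → Matrix I I ℂ)

/-- The cone of compressions of points of the free semialgebraic set. -/
def hmCone {n d : ℕ} (f : Matrix (Fin d) (Fin d) (FreeAlg n)) (I : Type) : Set (HmE n I) :=
  {x | ∃ (l : ℕ) (Y : Fin n → Matrix (Fin l) (Fin l) ℂ) (V : Matrix (Fin l) I ℂ),
    hmK f Y ∧ x.1 = Vᴴ * V ∧ ∀ j, x.2 j = Vᴴ * Y j * V}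

theorem hmCone_mk {n d : ℕ} (f : Matrix (Fin d) (Fin d) (FreeAlg n)) {I ι : Type} [Fintype ι]
    [DecidableEq ι] (Y : Fin n → Matrix ι ι ℂ) (V : Matrix ι I ℂ) (hY : hmK f Y) (x : HmE n I)
    (h1 : x.1 = Vᴴ * V) (h2 : ∀ j, x.2 j = Vᴴ * Y j * V) : x ∈ hmCone f I := by
  let e := Fintype.equivFin ι
  refine ⟨Fintype.card ι, fun j => (Y j).submatrix e.symm e.symm, V.submatrix e.symm id,
    hmK_reindex f e Y hY, ?_, fun j => ?_⟩
  · rw [Matrix.conjTranspose_submatrix, Matrix.submatrix_mul_equiv, h1, Matrix.submatrix_id_id]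
  · rw [Matrix.conjTranspose_submatrix, Matrix.submatrix_mul_equiv, Matrix.submatrix_mul_equiv, h2,
      Matrix.submatrix_id_id]

theorem hmCone_add {n d : ℕ} (f : Matrix (Fin d) (Fin d) (FreeAlg n)) {I : Type} (x y : HmE n I)
    (hx : x ∈ hmCone f I) (hy : y ∈ hmCone f I) : x + y ∈ hmCone f I := by
  obtain ⟨l, Y, V, hY, h1, h2⟩ := hx
  obtain ⟨l', Y', V', hY', h1', h2'⟩ := hy
  refine hmCone_mk f _ (Matrix.fromRows V V') (hmK_sum f Y hY Y' hY') _ ?_ fun j => ?_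
  · rw [Prod.fst_add, h1, h1', Matrix.conjTranspose_fromRows_eq_fromCols_conjTranspose,
      Matrix.fromCols_mul_fromRows]
  · rw [Prod.snd_add, Pi.add_apply, h2, h2', Matrix.conjTranspose_fromRows_eq_fromCols_conjTranspose,
      Matrix.fromCols_mul_fromBlocks, Matrix.fromCols_mul_fromRows]
    simp

theorem hmCone_smul {n d : ℕ} (f : Matrix (Fin d) (Fin d) (FreeAlg n)) {I : Type} (x : HmE n I)
    (hx : x ∈ hmCone f I) (r : ℝ) (hr : 0 ≤ r) : r • x ∈ hmCone f I := by
  obtain ⟨l, Y, V, hY, h1, h2⟩ := hx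
  have hs : Real.sqrt r * Real.sqrt r = r := Real.mul_self_sqrt hr
  refine ⟨l, Y, Real.sqrt r • V, hY, ?_, fun j => ?_⟩
  · rw [Prod.smul_fst, h1, Matrix.conjTranspose_smul, Matrix.smul_mul, Matrix.mul_smul, smul_smul]
    simp [hs]
  · rw [Prod.smul_snd, Pi.smul_apply, h2, Matrix.conjTranspose_smul, Matrix.smul_mul, Matrix.smul_mul,
      Matrix.mul_smul, smul_smul]
    simp [hs]

/-- Twice the hermitian part. -/
def hmHp {I : Type} (M : Matrix I I ℂ) : Matrix I I ℂ := M + Mᴴ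

theorem hmHp_add {I : Type} (M N : Matrix I I ℂ) : hmHp (M + N) = hmHp M + hmHp N := by
  simp only [hmHp, Matrix.conjTranspose_add]; abel

theorem hmHp_smul {I : Type} (r : ℝ) (M : Matrix I I ℂ) : hmHp (r • M) = r • hmHp M := by
  simp [hmHp, Matrix.conjTranspose_smul]

theorem hmHp_herm {I : Type} (M : Matrix I I ℂ) (h : M.IsHermitian) : hmHp M = (2 : ℝ) • M := by
  rw [hmHp, h.eq, two_smul]

theorem hmHp_anti {I : Type} (M : Matrix I I ℂ) (h : Mᴴ = -M) : hmHp M = 0 := by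
  rw [hmHp, h, add_neg_cancel]

/-- The subspace of Hankel tuples. -/
def hmH (n d δ : ℕ) : Submodule ℝ (HmE n (HmI n d δ)) where
  carrier := {x | ∀ (j : Fin n) (w : HmW n δ) (h : w.1.length < δ) (b : Fin d) (r : HmI n d δ),
    hmHp (x.2 j) r (w, b) = hmHp x.1 r (hmCons j w h, b)}
  add_mem' := by
    intro x y hx hy j w h b r
    simp [hmHp_add, hx j w h b r, hy j w h b r]
  zero_mem' := by
    intro j w h b r
    simp [hmHp]
  smul_mem' := by
    intro c x hx j w h b r
    simp [hmHp_smul, hx j w h b r]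

/-- The linear functional attached to `f`. -/
noncomputable def hmL {n d δ : ℕ} (c : Fin d → Fin d → HmW n δ → ℂ) : HmE n (HmI n d δ) →ₗ[ℝ] ℝ where
  toFun x := (∑ a, ∑ b, ∑ u, c a b u * hmHp x.1 (hmNil n δ, a) (u, b)).re
  map_add' x y := by
    simp only [Prod.fst_add, hmHp_add, Matrix.add_apply, mul_add, Finset.sum_add_distrib, Complex.add_re]
  map_smul' r x := by
    have : ∀ z w : ℂ, z * (r • w) = r • (z * w) := fun z w => mul_smul_comm r z w
    simp only [Prod.smul_fst, hmHp_smul, Matrix.smul_apply, this, ← Finset.smul_sum, Complex.smul_re,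
      RingHom.id_apply]

theorem hmL_eq {n d δ : ℕ} (f : Matrix (Fin d) (Fin d) (FreeAlg n)) (c : Fin d → Fin d → HmW n δ → ℂ)
    (hc : ∀ a b, f a b = ∑ u, c a b u • hmWord u.1) {ι : Type} [Fintype ι] [DecidableEq ι]
    (X : Fin n → Matrix ι ι ℂ) (V : Matrix ι (HmI n d δ) ℂ)
    (hV : ∀ j w h b s, (X j * V) s (w, b) = V s (hmCons j w h, b)) (x : HmE n (HmI n d δ))
    (hx : x.1 = Vᴴ * V) :
    hmL c x = 2 * (hmQ f X (fun a s => V s (hmNil n δ, a))).re := by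
  have key : ∀ (w : List (Fin n)) (h : w.length ≤ δ) (b : Fin d),
      hmEv X (hmWord w) *ᵥ (fun s => V s (hmNil n δ, b)) = fun s => V s (⟨w, h⟩, b) := by
    intro w
    induction w with
    | nil => intro h b; rw [hmEv_word_nil, Matrix.one_mulVec]; rfl
    | cons j w ih =>
      intro h b
      have h' : w.length < δ := by simpa using h
      rw [hmEv_word_cons, ← Matrix.mulVec_mulVec, ih h'.le]
      ext s
      exact hV j ⟨w, h'.le⟩ h' b s
  have hh : hmHp x.1 = (2 : ℝ) • (Vᴴ * V) := by
    rw [hx]; exact hmHp_herm _ (Matrix.isHermitian_conjTranspose_mul_self V)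
  have h2 : hmQ f X (fun a s => V s (hmNil n δ, a)) =
      ∑ a, ∑ b, ∑ u, c a b u * (Vᴴ * V) (hmNil n δ, a) (u, b) := by
    unfold hmQ
    refine Finset.sum_congr rfl fun a _ => Finset.sum_congr rfl fun b _ => ?_
    rw [hc a b, map_sum, Matrix.sum_mulVec, dotProduct_sum]
    refine Finset.sum_congr rfl fun u _ => ?_
    rw [map_smul, Matrix.smul_mulVec, key u.1 u.2, dotProduct_smul]
    rfl
  have : ∀ z w : ℂ, z * ((2 : ℝ) • w) = (2 : ℝ) • (z * w) := fun z w => mul_smul_comm _ z w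
  change (∑ a, ∑ b, ∑ u, c a b u * hmHp x.1 (hmNil n δ, a) (u, b)).re = _
  rw [hh, h2]
  simp only [Matrix.smul_apply, this, ← Finset.smul_sum, Complex.smul_re, smul_eq_mul]

theorem hmL_nonneg {n d δ : ℕ} (f : Matrix (Fin d) (Fin d) (FreeAlg n)) (hconv : hmConv f)
    (c : Fin d → Fin d → HmW n δ → ℂ)
    (hc : ∀ a b, f a b = ∑ u, c a b u • hmWord u.1) (x : HmE n (HmI n d δ)) (hx : x ∈ hmH n d δ)
    (hxc : x ∈ hmCone f (HmI n d δ)) : 0 ≤ hmL c x := by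
  obtain ⟨l, Y, V, hY, h1, h2⟩ := hxc
  obtain ⟨U, hU, hU2, hUV, hUz⟩ := hm_symm V
  have hC := hconv _ _ _ hY (hmK_unitary f Y hY U hU hU2)
  rw [hmL_eq f c hc _ V ?_ x h1]
  · exact mul_nonneg (by norm_num) (hC.2 _)
  intro j w h b s
  have hz := hUz (fun s => (Y j * V) s (w, b) - V s (hmCons j w h, b)) (by
    ext r
    have := hx j w h b r
    rw [h1, h2, hmHp_herm _ (Matrix.isHermitian_conjTranspose_mul_self V),
      hmHp_herm _ (Matrix.isHermitian_conjTranspose_mul_mul V (hY.1 j))] at this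
    simp only [Matrix.smul_apply] at this
    have h3 := smul_right_injective ℂ (two_ne_zero (α := ℝ)) this
    simp only [Matrix.mulVec, dotProduct, mul_sub, Finset.sum_sub_distrib, Pi.zero_apply]
    rw [sub_eq_zero]
    rw [Matrix.mul_assoc] at h3
    exact h3)
  have hz' := congrFun hz s
  have e1 : (U *ᵥ (fun s => (Y j * V) s (w, b) - V s (hmCons j w h, b))) s =
      (U * (Y j * V)) s (w, b) - (U * V) s (hmCons j w h, b) := by
    simp only [Matrix.mulVec, dotProduct, mul_sub, Finset.sum_sub_distrib]
    rfl
  rw [e1, hUV] at hz'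
  have e2 : ((2⁻¹ : ℂ) • (Y j + U * Y j * U)) * V = (2⁻¹ : ℂ) • (Y j * V + U * (Y j * V)) := by
    rw [Matrix.smul_mul, Matrix.add_mul, Matrix.mul_assoc (U * Y j), hUV, Matrix.mul_assoc U]
  rw [e2]
  simp only [Matrix.smul_apply, Matrix.add_apply, smul_eq_mul]
  simp only [Pi.neg_apply] at hz'
  linear_combination (2⁻¹ : ℂ) * hz'

/-- The truncated Fock space tuple. -/
noncomputable def hmFock (n d δ : ℕ) (j : Fin n) : Matrix (HmI n d δ) (HmI n d δ) ℂ :=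
  fun p q => if p.2 = q.2 ∧ (p.1.1 = j :: q.1.1 ∨ q.1.1 = j :: p.1.1) then 1 else 0

theorem hmFock_herm (n d δ : ℕ) (j : Fin n) : (hmFock n d δ j).IsHermitian := by
  ext p q
  simp only [hmFock, Matrix.conjTranspose_apply]
  rw [apply_ite star, star_one, star_zero]
  congr 1
  apply propext
  constructor
  · rintro ⟨h, h'⟩; exact ⟨h.symm, h'.symm⟩
  · rintro ⟨h, h'⟩; exact ⟨h.symm, h'.symm⟩

theorem hmFock_word {n d δ : ℕ} (t : ℂ) (u : List (Fin n)) : ∀ (w : HmW n δ) (a b : Fin d),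
    u.length ≤ w.1.length →
    hmEv (fun j => t • hmFock n d δ j) (hmWord u) (w, a) (hmNil n δ, b) =
      if u = w.1 ∧ a = b then t ^ u.length else 0 := by
  induction u with
  | nil =>
    intro w a b _
    rw [hmEv_word_nil, Matrix.one_apply]
    congr 1
    simp [hmNil, Subtype.ext_iff, eq_comm]
  | cons j u ih =>
    intro w a b h
    rw [hmEv_word_cons, Matrix.smul_mul, Matrix.smul_apply, Matrix.mul_apply]
    have hw : w.1 ≠ [] := by
      intro h0
      rw [h0] at h
      simp at h
    obtain ⟨i, w', hw'⟩ := List.exists_cons_of_ne_nil hw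
    have hlen : u.length ≤ w'.length := by rw [hw'] at h; simpa using h
    have hl2 : w'.length ≤ δ := by have := w.2; rw [hw'] at this; simp at this; omega
    rw [Finset.sum_eq_single ((⟨w', hl2⟩, a) : HmI n d δ)]
    · rw [ih ⟨w', hl2⟩ a b hlen]
      simp only [hmFock, hw', true_and]
      have hne : w' ≠ j :: i :: w' := by
        intro h0
        have := congrArg List.length h0
        simp at this
        omega
      by_cases hij : i = j
      · subst hij
        simp [pow_succ, mul_comm]
      · have : ¬ (j :: u = i :: w' ∧ a = b) := by
          rintro ⟨h0, -⟩
          simp at h0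
          exact hij h0.1.symm
        rw [if_neg this]
        simp [hij, hne]
    · rintro ⟨q, e⟩ - hq
      by_cases hc : a = e ∧ (w.1 = j :: q.1 ∨ q.1 = j :: w.1)
      · obtain ⟨rfl, h1 | h1⟩ := hc
        · exfalso
          apply hq
          rw [hw'] at h1
          simp only [List.cons.injEq] at h1
          ext1
          · exact Subtype.ext h1.2.symm
          · rfl
        · rw [ih q a b (by rw [h1]; simp at h ⊢; omega), if_neg, mul_zero]
          rintro ⟨h0, -⟩
          rw [h0, h1] at h
          simp at h
      · simp [hmFock, hc]
    · simp

/-- The cyclic matrix of the Fock tuple. -/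
noncomputable def hmFockV (n d δ : ℕ) (t : ℂ) : Matrix (HmI n d δ) (HmI n d δ) ℂ :=
  fun s q => hmEv (fun j => t • hmFock n d δ j) (hmWord q.1.1) s (hmNil n δ, q.2)

theorem hmFockV_inj (n d δ : ℕ) (t : ℂ) (ht : t ≠ 0) :
    Function.Injective (hmFockV n d δ t).mulVec := by
  have h0 : ∀ c : HmI n d δ → ℂ, hmFockV n d δ t *ᵥ c = 0 → c = 0 := by
    intro c hc
    have : ∀ m, ∀ p : HmI n d δ, δ - p.1.1.length = m → c p = 0 := by
      intro m
      induction m using Nat.strong_induction_on with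
      | _ m ih =>
        rintro ⟨w, a⟩ hp
        have h1 := congrFun hc (w, a)
        simp only [Matrix.mulVec, dotProduct, Pi.zero_apply] at h1
        rw [Finset.sum_eq_single (w, a)] at h1
        · simp only [hmFockV] at h1
          rw [hmFock_word t _ w a a le_rfl] at h1
          simpa [ht] using h1
        · rintro ⟨u, b⟩ - hne
          by_cases hl : u.1.length ≤ w.1.length
          · simp only [hmFockV]
            rw [hmFock_word t _ w a b hl, if_neg, zero_mul]
            rintro ⟨h2, rfl⟩
            exact hne (by rw [Subtype.ext h2])
          · rw [ih (δ - u.1.length) (by have := u.2; have := w.2; simp only at hp; omega) (u, b) rfl, mul_zero]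
        · simp
    ext p
    exact this _ p rfl
  intro x y hxy
  have := h0 (x - y) (by rw [Matrix.mulVec_sub]; exact sub_eq_zero.2 hxy)
  exact sub_eq_zero.1 this

theorem hmH_mem {n d δ : ℕ} {ι : Type} [Fintype ι] (X : Fin n → Matrix ι ι ℂ) (hX : ∀ j, (X j).IsHermitian)
    (V : Matrix ι (HmI n d δ) ℂ)
    (hV : ∀ j w h b s, (X j * V) s (w, b) = V s (hmCons j w h, b)) :
    ((Vᴴ * V, fun j => Vᴴ * X j * V) : HmE n (HmI n d δ)) ∈ hmH n d δ := by
  intro j w h b r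
  rw [hmHp_herm _ (Matrix.isHermitian_conjTranspose_mul_self V),
      hmHp_herm _ (Matrix.isHermitian_conjTranspose_mul_mul V (hX j)), Matrix.mul_assoc]
  simp only [Matrix.smul_apply]
  congr 1
  rw [Matrix.mul_apply, Matrix.mul_apply]
  refine Finset.sum_congr rfl fun s _ => ?_
  rw [hV j w h b s]

theorem hm_dense {n d δ : ℕ} (f : Matrix (Fin d) (Fin d) (FreeAlg n)) (hf : IsHermPoly f)
    (hf0 : (evalZero f).PosDef) (y : HmE n (HmI n d δ)) :
    ∃ x ∈ hmH n d δ, x + y ∈ hmCone f (HmI n d δ) := by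
  let T : Set (HmE n (HmI n d δ)) := {y | ∃ x ∈ hmH n d δ, x + y ∈ hmCone f (HmI n d δ)}
  have hadd : ∀ x y, x ∈ T → y ∈ T → x + y ∈ T := by
    rintro x y ⟨u, hu, hxu⟩ ⟨v, hv, hyv⟩
    refine ⟨u + v, add_mem hu hv, ?_⟩
    rw [add_add_add_comm]
    exact hmCone_add f _ _ hxu hyv
  have hsmul : ∀ (r : ℝ) x, 0 ≤ r → x ∈ T → r • x ∈ T := by
    rintro r x hr ⟨u, hu, hxu⟩
    refine ⟨r • u, Submodule.smul_mem _ _ hu, ?_⟩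
    rw [← smul_add]
    exact hmCone_smul f _ hxu r hr
  have hcone : ∀ x, x ∈ hmCone f (HmI n d δ) → x ∈ T := fun x hx =>
    ⟨0, zero_mem _, by rwa [zero_add]⟩
  -- zero tuple
  have hK0 : hmK f (fun _ : Fin n => (0 : Matrix (HmI n d δ) (HmI n d δ) ℂ)) := by
    obtain ⟨t, -, h⟩ := hmK_small f hf hf0 (fun _ : Fin n => (0 : Matrix (HmI n d δ) (HmI n d δ) ℂ))
      (fun j => by simp)
    simpa using h
  have hpsd0 : ∀ P : Matrix (HmI n d δ) (HmI n d δ) ℂ, P.PosSemidef →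
      ((P, 0) : HmE n (HmI n d δ)) ∈ hmCone f (HmI n d δ) := by
    intro P hP
    obtain ⟨V, rfl⟩ := hm_psd_factor P hP
    exact hmCone_mk f _ V hK0 _ rfl (fun j => by simp)
  have hpsd : ∀ P : Matrix (HmI n d δ) (HmI n d δ) ℂ, P.PosSemidef →
      ((P, 0) : HmE n (HmI n d δ)) ∈ T := fun P hP => hcone _ (hpsd0 P hP)
  have hH : ∀ x ∈ hmH n d δ, x ∈ T := by
    intro x hx
    refine ⟨-x, neg_mem hx, ?_⟩
    rw [neg_add_cancel]
    exact hpsd0 0 Matrix.PosSemidef.zero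
  -- minus identity
  have hneg1 : ∃ ρ : ℝ, 0 < ρ ∧ ((-(ρ • 1), 0) : HmE n (HmI n d δ)) ∈ T := by
    obtain ⟨t, ht, hK⟩ := hmK_small f hf hf0 (fun j => (2 : ℂ) • hmFock n d δ j) (fun j => by
      rw [Matrix.IsHermitian, Matrix.conjTranspose_smul, (hmFock_herm n d δ j).eq]; simp)
    have htc : (t : ℂ) ≠ 0 := by exact_mod_cast ht.ne'
    let V := hmFockV n d δ (t : ℂ)
    have hVp : (Vᴴ * V).PosDef := Matrix.PosDef.conjTranspose_mul_self V (hmFockV_inj n d δ _ htc)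
    obtain ⟨ρ, hρ, hP⟩ := hm_shift (Vᴴ * V) hVp 1 Matrix.isHermitian_one
    refine ⟨ρ / 2, by positivity, (Vᴴ * V, fun j => Vᴴ * ((t : ℂ) • hmFock n d δ j) * V), ?_, ?_⟩
    · refine hmH_mem _ (fun j => ?_) V ?_
      · rw [Matrix.IsHermitian, Matrix.conjTranspose_smul, (hmFock_herm n d δ j).eq]; simp
      · intro j w h b s
        change _ = hmEv _ (hmWord (j :: w.1)) s _
        rw [hmEv_word_cons]
        rfl
    · have h1 : ((Vᴴ * V, fun j => Vᴴ * ((t : ℂ) • (2 : ℂ) • hmFock n d δ j) * V) : HmE n (HmI n d δ)) ∈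
          hmCone f (HmI n d δ) := hmCone_mk f _ V hK _ rfl (fun j => rfl)
      have h2 := hmCone_add f _ _ (hmCone_smul f _ h1 (1 / 2) (by norm_num))
        (hmCone_smul f _ (hpsd0 _ hP) (1 / 2) (by norm_num))
      convert h2 using 1
      ext1
      · simp only [Prod.fst_add, Prod.smul_fst]
        have : ((ρ : ℂ) • (1 : Matrix (HmI n d δ) (HmI n d δ) ℂ)) = ρ • 1 := by
          ext p q; simp
        rw [this]
        module
      · funext j
        simp only [Prod.snd_add, Prod.smul_snd, Pi.add_apply, Pi.smul_apply, Pi.zero_apply, smul_zero, add_zero,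
          Matrix.mul_smul, Matrix.smul_mul]
        ext p q
        simp only [Matrix.smul_apply, smul_eq_mul, Complex.real_smul]
        push_cast
        ring
  obtain ⟨ρ, hρ, hρT⟩ := hneg1
  have hneg : ∀ r : ℝ, 0 ≤ r → ((-(r • 1), 0) : HmE n (HmI n d δ)) ∈ T := by
    intro r hr
    have := hsmul (r / ρ) _ (by positivity) hρT
    convert this using 1
    ext1
    · simp only [Prod.smul_fst, smul_neg, smul_smul]
      rw [div_mul_cancel₀ _ hρ.ne']
    · simp
  have hshift : ∀ H : Matrix (HmI n d δ) (HmI n d δ) ℂ, H.IsHermitian →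
      ∃ r : ℝ, 0 ≤ r ∧ (H + r • 1).PosSemidef := by
    intro H hH
    obtain ⟨t, ht, hP⟩ := hm_shift 1 Matrix.PosDef.one (-H) hH.neg
    refine ⟨t⁻¹, by positivity, ?_⟩
    have := hP.smul (show (0 : ℝ) ≤ t⁻¹ by positivity)
    convert this using 1
    ext p q
    have : (t : ℂ) ≠ 0 := by exact_mod_cast ht.ne'
    simp
    field_simp
    ring
  have hherm0 : ∀ H : Matrix (HmI n d δ) (HmI n d δ) ℂ, H.IsHermitian →
      ((H, 0) : HmE n (HmI n d δ)) ∈ T := by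
    intro H hH
    obtain ⟨r, hr, hP⟩ := hshift H hH
    have := hadd _ _ (hpsd _ hP) (hneg r hr)
    convert this using 1
    ext1 <;> simp
  have hpsdj : ∀ (ε : ℝ) (j : Fin n) (P : Matrix (HmI n d δ) (HmI n d δ) ℂ), P.PosSemidef →
      ((0, Pi.single j (ε • P)) : HmE n (HmI n d δ)) ∈ T := by
    intro ε j P hP
    obtain ⟨t, ht, hK⟩ := hmK_small f hf hf0
      (fun i => Pi.single (M := fun _ => Matrix (HmI n d δ) (HmI n d δ) ℂ) j (ε • 1) i) (fun i => by
        by_cases h : i = j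
        · subst h
          rw [Pi.single_eq_same, Matrix.IsHermitian, Matrix.conjTranspose_smul]
          simp
        · rw [Pi.single_eq_of_ne h]; simp)
    have hneg' := hherm0 (-P) hP.1.neg
    obtain ⟨V, rfl⟩ := hm_psd_factor P hP
    have h1 := hcone _ (hmCone_mk f _ V hK (Vᴴ * V, t • Pi.single j (ε • (Vᴴ * V))) rfl (fun i => by
        by_cases h : i = j
        · subst h
          ext p q
          simp [Matrix.mul_smul, Matrix.smul_mul]
        · simp [Pi.single_eq_of_ne h]))
    have h2 := hsmul t⁻¹ _ (by positivity) (hadd _ _ h1 hneg')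
    convert h2 using 1
    ext1
    · simp
    · simp only [Prod.smul_snd, Prod.snd_add, add_zero, smul_smul]
      rw [inv_mul_cancel₀ ht.ne', one_smul]
  have hhermj : ∀ (j : Fin n) (H : Matrix (HmI n d δ) (HmI n d δ) ℂ), H.IsHermitian →
      ((0, Pi.single j H) : HmE n (HmI n d δ)) ∈ T := by
    intro j H hH
    obtain ⟨r, hr, hP⟩ := hshift H hH
    have := hadd _ _ (hpsdj 1 j _ hP) (hpsdj (-r) j 1 Matrix.PosSemidef.one)
    convert this using 1
    ext1
    · simp
    · simp only [Prod.snd_add]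
      rw [← Pi.single_add]
      congr 1
      module
  have hhermt : ∀ H : Fin n → Matrix (HmI n d δ) (HmI n d δ) ℂ, (∀ j, (H j).IsHermitian) →
      ((0, H) : HmE n (HmI n d δ)) ∈ T := by
    intro H hHj
    have h1 : ∀ s : Finset (Fin n), (∑ j ∈ s, ((0, Pi.single j (H j)) : HmE n (HmI n d δ))) ∈ T := by
      intro s
      induction s using Finset.induction_on with
      | empty => simpa using hH 0 (zero_mem _)
      | insert a s ha ih => rw [Finset.sum_insert ha]; exact hadd _ _ (hhermj a _ (hHj a)) ih
    have h2 := h1 Finset.univ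
    convert h2 using 1
    ext1
    · simp [Prod.fst_sum]
    · rw [Prod.snd_sum]
      exact (Finset.univ_sum_single H).symm
  have hfin : y = ((2⁻¹ : ℝ) • (hmHp y.1), (0 : Fin n → Matrix (HmI n d δ) (HmI n d δ) ℂ)) +
      (0, fun j => (2⁻¹ : ℝ) • hmHp (y.2 j)) +
      ((2⁻¹ : ℝ) • (y.1 - (y.1)ᴴ), fun j => (2⁻¹ : ℝ) • (y.2 j - (y.2 j)ᴴ)) := by
    ext1
    · simp only [Prod.fst_add, hmHp]
      module
    · funext j
      simp only [Prod.snd_add, Pi.add_apply, Pi.zero_apply, hmHp]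
      module
  have hhp : ∀ M : Matrix (HmI n d δ) (HmI n d δ) ℂ, ((2⁻¹ : ℝ) • hmHp M).IsHermitian := by
    intro M
    rw [Matrix.IsHermitian, Matrix.conjTranspose_smul, hmHp, Matrix.conjTranspose_add,
      Matrix.conjTranspose_conjTranspose, add_comm]
    simp
  have hha : ∀ M : Matrix (HmI n d δ) (HmI n d δ) ℂ, hmHp ((2⁻¹ : ℝ) • (M - Mᴴ)) = 0 := by
    intro M
    rw [hmHp_smul, hmHp_anti, smul_zero]
    rw [Matrix.conjTranspose_sub, Matrix.conjTranspose_conjTranspose]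
    abel
  have : y ∈ T := by
    rw [hfin]
    refine hadd _ _ (hadd _ _ (hherm0 _ (hhp _)) (hhermt _ fun j => hhp _)) (hH _ ?_)
    intro j w h b r
    simp only [hha]
    rfl
  exact this

theorem hm_conv {n d : ℕ} (f : Matrix (Fin d) (Fin d) (FreeAlg n)) (hf : IsHermPoly f)
    (h : ∀ (k : ℕ) (X Y : Fin n → Matrix (Fin k) (Fin k) ℂ),
        (∀ j, (X j).IsHermitian) → (∀ j, (Y j).IsHermitian) →
        (evalM f X).PosSemidef → (evalM f Y).PosSemidef →
        ∀ t : ℝ, 0 ≤ t → t ≤ 1 →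
          (evalM f (fun j => (t : ℂ) • X j + ((1 - t : ℝ) : ℂ) • Y j)).PosSemidef) : hmConv f := by
  intro ι _ _ X Y hX hY
  let e := Fintype.equivFin ι
  have hX' := hmK_reindex f e X hX
  have hY' := hmK_reindex f e Y hY
  have h1 := h _ _ _ hX'.1 hY'.1 (by rw [hm_evalM_eq, hmK_iff f hf _ hX'.1]; exact hX')
    (by rw [hm_evalM_eq, hmK_iff f hf _ hY'.1]; exact hY') (1 / 2) (by norm_num) (by norm_num)
  have he : (fun j => ((1 / 2 : ℝ) : ℂ) • (X j).submatrix e.symm e.symm +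
      ((1 - 1 / 2 : ℝ) : ℂ) • (Y j).submatrix e.symm e.symm) =
      fun j => ((2⁻¹ : ℂ) • (X j + Y j)).submatrix e.symm e.symm := by
    funext j
    ext p q
    simp only [Matrix.smul_apply, Matrix.add_apply, Matrix.submatrix_apply, smul_eq_mul]
    push_cast
    ring
  have hherm : ∀ j, ((2⁻¹ : ℂ) • (X j + Y j)).IsHermitian := by
    intro j
    rw [Matrix.IsHermitian, Matrix.conjTranspose_smul, Matrix.conjTranspose_add, (hX.1 j).eq, (hY.1 j).eq]
    simp
  rw [he, hm_evalM_eq, hmK_iff f hf _ (fun j => (hherm j).submatrix _)] at h1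
  have h2 := hmK_reindex f e.symm _ h1
  have h3 : (fun j => (((2⁻¹ : ℂ) • (X j + Y j)).submatrix e.symm e.symm).submatrix e.symm.symm e.symm.symm) =
      fun j => (2⁻¹ : ℂ) • (X j + Y j) := by
    funext j
    rw [Matrix.submatrix_submatrix]
    ext p q
    simp only [Matrix.submatrix_apply, Function.comp_apply, Equiv.symm_symm, Equiv.symm_apply_apply]
  rwa [h3] at h2

theorem hm_rep {I : Type} [Fintype I] [DecidableEq I] (φ : Matrix I I ℂ →ₗ[ℝ] ℝ)
    (h : ∀ M : Matrix I I ℂ, Mᴴ = -M → φ M = 0) :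
    ∃ B : Matrix I I ℂ, B.IsHermitian ∧ ∀ M, φ M = (∑ p, ∑ q, B p q * M p q).re := by
  refine ⟨fun p q => (φ (Matrix.single p q 1) : ℂ) - Complex.I * (φ (Matrix.single p q Complex.I) : ℂ),
    ?_, ?_⟩
  · ext p q
    have h1 := h (Matrix.single p q 1 - Matrix.single q p 1) (by
      simp [Matrix.conjTranspose_sub, Matrix.conjTranspose_single])
    have h2 := h (Matrix.single p q Complex.I + Matrix.single q p Complex.I) (by
      rw [Matrix.conjTranspose_add, Matrix.conjTranspose_single, Matrix.conjTranspose_single]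
      ext a b
      simp [Matrix.single_apply]
      split_ifs <;> simp)
    rw [map_sub] at h1
    rw [map_add] at h2
    have h1' : φ (Matrix.single p q 1) = φ (Matrix.single q p 1) := by linarith
    have h2' : φ (Matrix.single p q Complex.I) = - φ (Matrix.single q p Complex.I) := by linarith
    change star ((φ (Matrix.single q p 1) : ℂ) - Complex.I * (φ (Matrix.single q p Complex.I) : ℂ)) =
      (φ (Matrix.single p q 1) : ℂ) - Complex.I * (φ (Matrix.single p q Complex.I) : ℂ)
    rw [h1', h2']
    simp
  · intro M
    have hs : ∀ (p q : I) (z : ℂ), (Matrix.single p q z : Matrix I I ℂ) =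
        z.re • Matrix.single p q 1 + z.im • Matrix.single p q Complex.I := by
      intro p q z
      rw [Matrix.smul_single, Matrix.smul_single, ← Matrix.single_add]
      congr 1
      simp
    conv_lhs => rw [Matrix.matrix_eq_sum_single M]
    simp only [map_sum, Complex.re_sum]
    refine Finset.sum_congr rfl fun p _ => Finset.sum_congr rfl fun q _ => ?_
    rw [hs, map_add, map_smul, map_smul]
    simp
    ring

theorem hm_kron {I κ : Type} [Fintype I] [Fintype κ] (B : Matrix I I ℂ) (M : Matrix κ κ ℂ) (u : I × κ → ℂ)
    (V : Matrix κ I ℂ) (hV : ∀ s p, V s p = u (p, s)) :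
    star u ⬝ᵥ ((B ⊗ₖ M) *ᵥ u) = ∑ p, ∑ q, B p q * (Vᴴ * M * V) p q := by
  simp only [dotProduct, Matrix.mulVec, Fintype.sum_prod_type, Pi.star_apply, Matrix.kroneckerMap_apply,
    Matrix.mul_assoc]
  simp only [Matrix.mul_apply, Matrix.conjTranspose_apply, hV, Finset.mul_sum]
  refine Finset.sum_congr rfl fun p _ => ?_
  rw [Finset.sum_comm]
  refine Finset.sum_congr rfl fun q _ => Finset.sum_congr rfl fun s _ => Finset.sum_congr rfl fun t _ => ?_
  ring

/-- The pencil over an arbitrary finite index type. -/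
noncomputable def hmPen {n k : ℕ} {I : Type} (B0 : Matrix I I ℂ) (B : Fin n → Matrix I I ℂ)
    (X : Fin n → Matrix (Fin k) (Fin k) ℂ) : Matrix (I × Fin k) (I × Fin k) ℂ :=
  B0 ⊗ₖ (1 : Matrix (Fin k) (Fin k) ℂ) + ∑ j, B j ⊗ₖ X j

theorem hm_herm_kron {I κ : Type} (B : Matrix I I ℂ) (M : Matrix κ κ ℂ)
    (hB : B.IsHermitian) (hM : M.IsHermitian) : (B ⊗ₖ M).IsHermitian := by
  rw [Matrix.IsHermitian, Matrix.conjTranspose_kronecker, hB.eq, hM.eq]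

theorem hmPen_herm {n k : ℕ} {I : Type} (B0 : Matrix I I ℂ) (B : Fin n → Matrix I I ℂ)
    (X : Fin n → Matrix (Fin k) (Fin k) ℂ) (h0 : B0.IsHermitian) (hB : ∀ j, (B j).IsHermitian)
    (hX : ∀ j, (X j).IsHermitian) : (hmPen B0 B X).IsHermitian := by
  refine (hm_herm_kron _ _ h0 Matrix.isHermitian_one).add ?_
  rw [Matrix.IsHermitian, Matrix.conjTranspose_sum]
  exact Finset.sum_congr rfl fun j _ => (hm_herm_kron _ _ (hB j) (hX j)).eq

theorem hm_exists_functional {n d δ : ℕ} (f : Matrix (Fin d) (Fin d) (FreeAlg n)) (hf : IsHermPoly f)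
    (hf0 : (evalZero f).PosDef) (hconv : hmConv f) (c : Fin d → Fin d → HmW n δ → ℂ)
    (hc : ∀ a b, f a b = ∑ u, c a b u • hmWord u.1) :
    ∃ g : HmE n (HmI n d δ) →ₗ[ℝ] ℝ, (∀ x ∈ hmH n d δ, g x = hmL c x) ∧
      ∀ x ∈ hmCone f (HmI n d δ), 0 ≤ g x := by
  have hz : (0 : HmE n (HmI n d δ)) ∈ hmCone f (HmI n d δ) := by
    obtain ⟨x, -, hx⟩ := hm_dense (δ := δ) f hf hf0 0
    have := hmCone_smul f _ hx 0 le_rfl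
    rwa [zero_smul] at this
  let s : PointedCone ℝ (HmE n (HmI n d δ)) :=
    { carrier := hmCone f (HmI n d δ)
      add_mem' := fun {x y} hx hy => hmCone_add f x y hx hy
      zero_mem' := hz
      smul_mem' := fun r x hx => hmCone_smul f x hx (r : ℝ) r.2 }
  obtain ⟨g, hg1, hg2⟩ := riesz_extension s ⟨hmH n d δ, (hmL c).domRestrict (hmH n d δ)⟩
    (fun x hx => hmL_nonneg f hconv c hc x.1 x.2 hx)
    (fun y => by
      obtain ⟨x, hx, hxy⟩ := hm_dense f hf hf0 y
      exact ⟨⟨x, hx⟩, hxy⟩)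
  exact ⟨g, fun x hx => hg1 ⟨x, hx⟩, hg2⟩

theorem hm_main {n d : ℕ} (f : Matrix (Fin d) (Fin d) (FreeAlg n)) (hf : IsHermPoly f)
    (hf0 : (evalZero f).PosDef) (hconv : hmConv f) :
    ∃ (I : Type) (_ : Fintype I) (B0 : Matrix I I ℂ) (B : Fin n → Matrix I I ℂ),
        B0.IsHermitian ∧ (∀ j, (B j).IsHermitian) ∧
        ∀ (k : ℕ) (X : Fin n → Matrix (Fin k) (Fin k) ℂ), (∀ j, (X j).IsHermitian) →
          ((evalM f X).PosSemidef ↔ (hmPen B0 B X).PosSemidef) := by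
  obtain ⟨δ, c, hc⟩ := hm_coeff f
  obtain ⟨g, hg1, hg2⟩ := hm_exists_functional f hf hf0 hconv c hc
  have hanti : ∀ x : HmE n (HmI n d δ), x.1ᴴ = -x.1 → (∀ j, (x.2 j)ᴴ = - x.2 j) → g x = 0 := by
    intro x h1 h2
    rw [hg1 x]
    · change (∑ a, ∑ b, ∑ u, c a b u * hmHp x.1 (hmNil n δ, a) (u, b)).re = 0
      simp [hmHp_anti _ h1]
    · intro j w h b r
      rw [hmHp_anti _ h1, hmHp_anti _ (h2 j)]
      rfl
  obtain ⟨B0, hB0, hB0'⟩ := hm_rep (g.comp (LinearMap.inl ℝ _ _)) (fun M hM => by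
    refine hanti (M, 0) hM (fun j => by simp))
  have hj : ∀ j, ∃ B : Matrix (HmI n d δ) (HmI n d δ) ℂ, B.IsHermitian ∧
      ∀ M, g (0, Pi.single j M) = (∑ p, ∑ q, B p q * M p q).re := by
    intro j
    refine hm_rep (g.comp ((LinearMap.inr ℝ _ _).comp
      (LinearMap.single ℝ (fun _ : Fin n => Matrix (HmI n d δ) (HmI n d δ) ℂ) j))) (fun M hM => ?_)
    refine hanti (0, Pi.single j M) (by simp) (fun i => ?_)
    by_cases h : i = j
    · subst h; simpa using hM
    · simp [Pi.single_eq_of_ne h]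
  choose B hB hB' using hj
  have hrep : ∀ x : HmE n (HmI n d δ), g x =
      (∑ p, ∑ q, B0 p q * x.1 p q).re + ∑ j, (∑ p, ∑ q, B j p q * x.2 j p q).re := by
    intro x
    have hx : x = (x.1, 0) + ∑ j, (0, Pi.single j (x.2 j)) := by
      ext1
      · simp [Prod.fst_sum]
      · rw [Prod.snd_add, Prod.snd_sum, zero_add]
        exact (Finset.univ_sum_single x.2).symm
    conv_lhs => rw [hx, map_add, map_sum]
    rw [← hB0' x.1]
    simp only [hB']
    rfl
  have hquad : ∀ (k : ℕ) (X : Fin n → Matrix (Fin k) (Fin k) ℂ) (u : HmI n d δ × Fin k → ℂ)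
      (V : Matrix (Fin k) (HmI n d δ) ℂ) (_ : ∀ s p, V s p = u (p, s)),
      (star u ⬝ᵥ (hmPen B0 B X *ᵥ u)).re = g (Vᴴ * V, fun j => Vᴴ * X j * V) := by
    intro k X u V hV
    rw [hrep, hmPen, Matrix.add_mulVec, dotProduct_add, Matrix.sum_mulVec, dotProduct_sum, Complex.add_re,
      Complex.re_sum, hm_kron _ _ u V hV, Matrix.mul_one]
    congr 1
    exact Finset.sum_congr rfl fun j _ => by rw [hm_kron _ _ u V hV]
  refine ⟨HmI n d δ, inferInstance, B0, B, hB0, hB, fun k X hX => ?_⟩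
  rw [hm_evalM_eq, hmK_iff f hf X hX, hm_psd_iff _ (hmPen_herm B0 B X hB0 hB hX)]
  constructor
  · intro hK u
    rw [hquad k X u (fun s p => u (p, s)) (fun _ _ => rfl)]
    exact hg2 _ (hmCone_mk f X _ hK _ rfl (fun j => rfl))
  · intro hP
    refine ⟨hX, fun v => ?_⟩
    let V : Matrix (Fin k) (HmI n d δ) ℂ := fun s p => (hmEv X (hmWord p.1.1) *ᵥ v p.2) s
    have hV : ∀ j w h b s, (X j * V) s (w, b) = V s (hmCons j w h, b) := by
      intro j w h b s
      change _ = (hmEv X (hmWord (j :: w.1)) *ᵥ v b) s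
      rw [hmEv_word_cons, ← Matrix.mulVec_mulVec]
      rfl
    have h1 := hP (fun z => V z.2 z.1)
    rw [hquad k X _ V (fun _ _ => rfl), hg1 _ (hmH_mem X hX V hV), hmL_eq f c hc X V hV _ rfl] at h1
    have h2 : (fun a s => V s (hmNil n δ, a)) = v := by
      funext a s
      change (hmEv X (hmWord []) *ᵥ v a) s = _
      rw [hmEv_word_nil, Matrix.one_mulVec]
    rw [h2] at h1
    linarith

theorem hm_comb_herm {κ : Type} (t s : ℝ) (X Y : Matrix κ κ ℂ) (hX : X.IsHermitian) (hY : Y.IsHermitian) :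
    ((t : ℂ) • X + (s : ℂ) • Y).IsHermitian := by
  rw [Matrix.IsHermitian, Matrix.conjTranspose_add, Matrix.conjTranspose_smul, Matrix.conjTranspose_smul,
    hX.eq, hY.eq]
  simp

end HM

/-- Helton–McCullough: for `f = f*` with `f(0) ≻ 0`, the free semialgebraic
set `D_f` is (levelwise) convex iff it is a free spectrahedron. -/
theorem helton_mccullough_convex_iff_freeSpectrahedron {n d : ℕ}
    (f : Matrix (Fin d) (Fin d) (FreeAlg n)) (hf : IsHermPoly f)
    (hf0 : (evalZero f).PosDef) :
    (∀ (k : ℕ) (X Y : Fin n → Matrix (Fin k) (Fin k) ℂ),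
        (∀ j, (X j).IsHermitian) → (∀ j, (Y j).IsHermitian) →
        (evalM f X).PosSemidef → (evalM f Y).PosSemidef →
        ∀ t : ℝ, 0 ≤ t → t ≤ 1 →
          (evalM f (fun j => (t : ℂ) • X j + ((1 - t : ℝ) : ℂ) • Y j)).PosSemidef) ↔
      (∃ (e : ℕ) (B0 : Matrix (Fin e) (Fin e) ℂ) (B : Fin n → Matrix (Fin e) (Fin e) ℂ),
        B0.IsHermitian ∧ (∀ j, (B j).IsHermitian) ∧
        ∀ (k : ℕ) (X : Fin n → Matrix (Fin k) (Fin k) ℂ), (∀ j, (X j).IsHermitian) →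
          ((evalM f X).PosSemidef ↔ (pencilK B0 B X).PosSemidef)) := by
  constructor
  · intro h
    obtain ⟨I, hI, B0, B, hB0, hB, hmain⟩ := hm_main f hf hf0 (hm_conv f hf h)
    let e := Fintype.equivFin I
    refine ⟨Fintype.card I, B0.submatrix e.symm e.symm, fun j => (B j).submatrix e.symm e.symm,
      hB0.submatrix _, fun j => (hB j).submatrix _, fun k X hX => ?_⟩
    rw [hmain k X hX]
    have he : pencilK (B0.submatrix e.symm e.symm) (fun j => (B j).submatrix e.symm e.symm) X =
        (hmPen B0 B X).submatrix (Equiv.prodCongr e.symm (Equiv.refl _))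
          (Equiv.prodCongr e.symm (Equiv.refl _)) := by
      ext p q
      simp [pencilK, hmPen, Matrix.sum_apply, Matrix.kroneckerMap_apply]
      exact Or.inl rfl
    rw [he, Matrix.posSemidef_submatrix_equiv]
  · rintro ⟨e, B0, B, hB0, hB, h⟩ k X Y hX hY hfX hfY t ht ht1
    rw [h k _ (fun j => hm_comb_herm t (1 - t) _ _ (hX j) (hY j))]
    rw [h k X hX] at hfX
    rw [h k Y hY] at hfY
    have he : pencilK B0 B (fun j => (t : ℂ) • X j + ((1 - t : ℝ) : ℂ) • Y j) =
        t • pencilK B0 B X + (1 - t) • pencilK B0 B Y := by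
      ext p q
      simp only [pencilK, Matrix.add_apply, Matrix.smul_apply, Matrix.sum_apply, Matrix.kroneckerMap_apply,
        smul_eq_mul, Complex.real_smul, mul_add, Finset.mul_sum, Finset.sum_add_distrib]
      have e1 : ∀ (r : ℂ) j, B j p.1 q.1 * (r * X j p.2 q.2) = r * (B j p.1 q.1 * X j p.2 q.2) :=
        fun r j => by ring
      have e2 : ∀ (r : ℂ) j, B j p.1 q.1 * (r * Y j p.2 q.2) = r * (B j p.1 q.1 * Y j p.2 q.2) :=
        fun r j => by ring
      simp only [e1, e2]
      push_cast
      ring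
    rw [he]
    exact (hfX.smul ht).add (hfY.smul (by linarith))
end

section
/- Free Hilbert 17th problem (Helton; McCullough): let f = f* ∈ M_d(ℂ⟨x⟩) and set δ = ⌊(deg f)/2⌋. Then f(X) is positive semidefinite for every k ∈ ℕ and every n-tuple X of hermitian k×k complex matrices if and only if there exist finitely many s₁,…,s_M ∈ M_d(ℂ⟨x⟩), each of degree at most δ, such that f = Σ_{i=1}^M sᵢ*sᵢ in M_d(ℂ⟨x⟩). -/
open scoped Kronecker Matrix ComplexOrder

namespace FH

/-- The word `w` as an element of the free algebra. -/
noncomputable def word {n : ℕ} (w : List (Fin n)) : FreeAlg n := (w.map (FreeAlgebra.ι ℂ)).prod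

/-- coefficient of a word. -/
noncomputable def cf {n : ℕ} (w : List (Fin n)) : FreeAlg n →ₗ[ℂ] ℂ where
  toFun a := ((FreeAlgebra.equivMonoidAlgebraFreeMonoid) a).coeff (FreeMonoid.ofList w)
  map_add' a b := by simp
  map_smul' c a := by simp

lemma equiv_word {n : ℕ} (w : List (Fin n)) :
    (FreeAlgebra.equivMonoidAlgebraFreeMonoid) (word w) =
      MonoidAlgebra.single (FreeMonoid.ofList w) (1 : ℂ) := by
  induction w with
  | nil => simp [word, MonoidAlgebra.one_def]
  | cons a w ih =>
    have : word (a :: w) = FreeAlgebra.ι ℂ a * word w := by simp [word]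
    rw [this, map_mul, ih]
    simp [FreeAlgebra.equivMonoidAlgebraFreeMonoid, MonoidAlgebra.single_mul_single,
      FreeMonoid.ofList_cons]

lemma cf_word {n : ℕ} (w v : List (Fin n)) : cf w (word v) = if v = w then 1 else 0 := by
  classical
  change ((FreeAlgebra.equivMonoidAlgebraFreeMonoid) (word v)).coeff (FreeMonoid.ofList w) = _
  rw [equiv_word]
  change (Finsupp.single (FreeMonoid.ofList v) (1:ℂ)) (FreeMonoid.ofList w) = _
  rw [Finsupp.single_apply]
  simp

lemma cf_ext {n : ℕ} {a b : FreeAlg n} (h : ∀ w, cf w a = cf w b) : a = b := by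
  apply (FreeAlgebra.equivMonoidAlgebraFreeMonoid (R := ℂ) (X := Fin n)).injective
  apply MonoidAlgebra.coeff_injective
  ext w
  exact h (FreeMonoid.toList w)

lemma word_append {n : ℕ} (u v : List (Fin n)) : word (u ++ v) = word u * word v := by
  simp [word]

lemma cf_nstar {n : ℕ} (w : List (Fin n)) (a : FreeAlg n) :
    cf w (nstar a) = star (cf w.reverse a) := by
  have : FreeMonoid.ofList w = FreeMonoid.reverse (FreeMonoid.ofList w.reverse) := by
    simp [FreeMonoid.reverse]
    exact (List.reverse_reverse w).symm
  change ((FreeAlgebra.equivMonoidAlgebraFreeMonoid) (nstar a)).coeff (FreeMonoid.ofList w) = _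
  rw [nstar, AlgEquiv.apply_symm_apply, MonoidAlgebra.coeff_ofCoeff, this,
    Finsupp.mapDomain_apply]
  · rfl
  · intro x y h
    exact List.reverse_injective h

lemma nstar_add {n : ℕ} (a b : FreeAlg n) : nstar (a + b) = nstar a + nstar b := by
  apply cf_ext; intro w; simp [cf_nstar]

lemma nstar_smul {n : ℕ} (c : ℂ) (a : FreeAlg n) : nstar (c • a) = star c • nstar a := by
  apply cf_ext; intro w; simp [cf_nstar]

lemma nstar_zero {n : ℕ} : nstar (0 : FreeAlg n) = 0 := by
  apply cf_ext; intro w; simp [cf_nstar]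

lemma nstar_sum {n : ℕ} {ι : Type*} (s : Finset ι) (g : ι → FreeAlg n) :
    nstar (∑ i ∈ s, g i) = ∑ i ∈ s, nstar (g i) := by
  apply cf_ext; intro w; simp [cf_nstar]

lemma nstar_word {n : ℕ} (w : List (Fin n)) : nstar (word w) = word w.reverse := by
  apply cf_ext; intro v
  rw [cf_nstar, cf_word, cf_word]
  by_cases h : w = v.reverse
  · subst h; simp
  · rw [if_neg h, if_neg]; simp
    rintro rfl; simp at h

lemma degLE_mono {n a b : ℕ} (h : a ≤ b) : degLE n a ≤ degLE n b := by
  apply Submodule.span_mono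
  rintro x ⟨w, hw, rfl⟩
  exact ⟨w, hw.trans h, rfl⟩

lemma word_mem {n δ : ℕ} {w : List (Fin n)} (h : w.length ≤ δ) : word w ∈ degLE n δ :=
  Submodule.subset_span ⟨w, h, rfl⟩

lemma exists_degLE {n : ℕ} (a : FreeAlg n) : ∃ δ, a ∈ degLE n δ := by
  have key : ∀ x : MonoidAlgebra ℂ (FreeMonoid (Fin n)),
      ∃ δ, (FreeAlgebra.equivMonoidAlgebraFreeMonoid).symm x ∈ degLE n δ := by
    intro x
    induction x using MonoidAlgebra.induction_linear with
    | zero => exact ⟨0, by simp⟩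
    | add f g hf hg =>
      obtain ⟨p, hp⟩ := hf
      obtain ⟨q, hq⟩ := hg
      refine ⟨max p q, ?_⟩
      rw [map_add]
      exact Submodule.add_mem _ (degLE_mono (le_max_left _ _) hp) (degLE_mono (le_max_right _ _) hq)
    | single w c =>
      refine ⟨(FreeMonoid.toList w).length, ?_⟩
      have : MonoidAlgebra.single w c =
          (FreeAlgebra.equivMonoidAlgebraFreeMonoid) (c • word (FreeMonoid.toList w)) := by
        rw [map_smul, equiv_word]
        simp [MonoidAlgebra.smul_single]
      rw [this, AlgEquiv.symm_apply_apply]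
      exact Submodule.smul_mem _ _ (word_mem le_rfl)
  obtain ⟨δ, h⟩ := key (FreeAlgebra.equivMonoidAlgebraFreeMonoid a)
  exact ⟨δ, by simpa using h⟩

lemma matDegLE_matDeg {n d : ℕ} (f : Matrix (Fin d) (Fin d) (FreeAlg n)) :
    matDegLE f (matDeg f) := by
  apply Nat.sInf_mem (s := {δ | matDegLE f δ})
  choose g hg using fun p : Fin d × Fin d => exists_degLE (f p.1 p.2)
  exact ⟨Finset.univ.sup g, fun i j => degLE_mono (Finset.le_sup (f := g) (Finset.mem_univ (i, j)))
    (hg (i, j))⟩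

lemma cf_eq_zero {n δ : ℕ} {a : FreeAlg n} (h : a ∈ degLE n δ) {w : List (Fin n)}
    (hw : δ < w.length) : cf w a = 0 := by
  have : degLE n δ ≤ LinearMap.ker (cf w) := by
    rw [degLE, Submodule.span_le]
    rintro x ⟨v, hv, rfl⟩
    change cf w (word v) = 0
    rw [cf_word, if_neg]
    rintro rfl
    omega
  exact this h

/-- words of bounded length -/
abbrev W (n m : ℕ) := {w : List (Fin n) // w.length ≤ m}

noncomputable instance (n m : ℕ) : Fintype (W n m) :=
  Set.Finite.fintype (s := {w : List (Fin n) | w.length ≤ m}) (List.finite_length_le _ _)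

lemma expand {n m : ℕ} {a : FreeAlg n} (h : a ∈ degLE n m) :
    a = ∑ w : W n m, cf w.1 a • word w.1 := by
  apply cf_ext
  intro v
  simp only [map_sum, map_smul, cf_word, smul_eq_mul, mul_ite, mul_one, mul_zero]
  by_cases hv : v.length ≤ m
  · rw [Finset.sum_eq_single (⟨v, hv⟩ : W n m)]
    · simp
    · rintro b - hb
      rw [if_neg]
      rintro rfl; exact hb rfl
    · simp
  · rw [Finset.sum_eq_zero, cf_eq_zero h (by omega)]
    rintro b -
    rw [if_neg]
    rintro rfl
    exact hv b.2

/-! ### Evaluation -/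

lemma lift_word {n k : ℕ} (X : Fin n → Matrix (Fin k) (Fin k) ℂ) (w : List (Fin n)) :
    FreeAlgebra.lift ℂ X (word w) = (w.map X).prod := by
  rw [word, map_list_prod, List.map_map]
  congr 2
  ext; simp

lemma prod_herm {n : ℕ} {κ : Type*} [Fintype κ] [DecidableEq κ]
    (X : Fin n → Matrix κ κ ℂ) (hX : ∀ j, (X j).IsHermitian)
    (w : List (Fin n)) : ((w.map X).prod)ᴴ = (w.reverse.map X).prod := by
  induction w with
  | nil => simp
  | cons a w ih => simp [Matrix.conjTranspose_mul, ih, (hX a).eq]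

lemma lift_nstar {n k : ℕ} (X : Fin n → Matrix (Fin k) (Fin k) ℂ) (hX : ∀ j, (X j).IsHermitian)
    (a : FreeAlg n) : FreeAlgebra.lift ℂ X (nstar a) = (FreeAlgebra.lift ℂ X a)ᴴ := by
  obtain ⟨δ, h⟩ := exists_degLE a
  rw [expand h, nstar_sum]
  simp only [nstar_smul, nstar_word, map_sum, map_smul, lift_word, Matrix.conjTranspose_sum,
    Matrix.conjTranspose_smul, prod_herm X hX]

lemma evalM_sq {n d k : ℕ} (X : Fin n → Matrix (Fin k) (Fin k) ℂ) (hX : ∀ j, (X j).IsHermitian)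
    (s : Matrix (Fin d) (Fin d) (FreeAlg n)) :
    evalM (adjM s * s) X = (evalM s X)ᴴ * evalM s X := by
  ext p q
  simp only [evalM, Matrix.mul_apply, adjM, map_sum, map_mul, lift_nstar X hX, Matrix.sum_apply,
    Matrix.conjTranspose_apply, Fintype.sum_prod_type]

lemma easy {n d k : ℕ} (X : Fin n → Matrix (Fin k) (Fin k) ℂ) (hX : ∀ j, (X j).IsHermitian)
    {M : ℕ} (s : Fin M → Matrix (Fin d) (Fin d) (FreeAlg n)) :
    (evalM (∑ i, adjM (s i) * s i) X).PosSemidef := by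
  have : evalM (∑ i, adjM (s i) * s i) X = ∑ i, (evalM (s i) X)ᴴ * evalM (s i) X := by
    simp_rw [← evalM_sq X hX]
    ext p q
    simp only [evalM, Matrix.sum_apply, map_sum]
  rw [this]
  exact Matrix.posSemidef_sum _ fun i _ => Matrix.posSemidef_conjTranspose_mul_self _


/-! ### Gram matrices -/

/-- The Gram map, from matrices indexed by basis vectors `eᵢ ⊗ u` to coefficient arrays. -/
noncomputable def Phi {n d m : ℕ} :
    Matrix (Fin d × W n m) (Fin d × W n m) ℂ →ₗ[ℂ] (Fin d × Fin d × List (Fin n) → ℂ) where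
  toFun G := ∑ a, ∑ b, G a b • Pi.single (a.1, b.1, a.2.1.reverse ++ b.2.1) 1
  map_add' G G' := by simp [add_smul, Finset.sum_add_distrib]
  map_smul' c G := by simp [mul_smul, Finset.smul_sum]

lemma Phi_def {n d m : ℕ} (G : Matrix (Fin d × W n m) (Fin d × W n m) ℂ) :
    Phi G = ∑ a, ∑ b, G a b • Pi.single (a.1, b.1, a.2.1.reverse ++ b.2.1) 1 := rfl

lemma Phi_apply {n d m : ℕ} (G : Matrix (Fin d × W n m) (Fin d × W n m) ℂ)
    (t : Fin d × Fin d × List (Fin n)) :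
    Phi G t = ∑ a, ∑ b, if t = (a.1, b.1, a.2.1.reverse ++ b.2.1) then G a b else 0 := by
  rw [Phi_def]
  simp only [Finset.sum_apply, Pi.smul_apply, Pi.single_apply, smul_eq_mul, mul_ite, mul_one,
    mul_zero]

lemma psd_sqrt {κ : Type*} [Fintype κ] [DecidableEq κ] {G : Matrix κ κ ℂ} (h : G.PosSemidef) :
    ∃ B : Matrix κ κ ℂ, G = Bᴴ * B := by
  open scoped MatrixOrder in
  obtain ⟨B, rfl⟩ := CStarAlgebra.nonneg_iff_eq_star_mul_self.mp h.nonneg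
  exact ⟨B, rfl⟩

lemma diag_aux {n d m D : ℕ} (B : Matrix (Fin d × W n m) (Fin d × W n m) ℂ)
    (h : ∀ j w, D ≤ w.length → Phi (Bᴴ * B) (j, j, w) = 0) :
    ∀ (t : ℕ) (j : Fin d) (u : W n m), m - u.1.length = t → D ≤ 2 * u.1.length →
      ∀ r, B r (j, u) = 0 := by
  intro t
  induction t using Nat.strong_induction_on with
  | _ t ih =>
  intro j u hu hD
  have hlong : ∀ (a : Fin d × W n m), u.1.length < a.2.1.length → ∀ r, B r a = 0 := by
    rintro ⟨i, v⟩ hv r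
    have := v.2
    exact ih (m - v.1.length) (by simp only at hv; omega) i v rfl (by simp only at hv; omega) r
  have key : ∀ a b : Fin d × W n m, (j, j, u.1.reverse ++ u.1) =
      (a.1, b.1, a.2.1.reverse ++ b.2.1) → (a = (j, u) ∧ b = (j, u)) ∨ (Bᴴ * B) a b = 0 := by
    rintro ⟨i, v⟩ ⟨i', v'⟩ hab
    simp only [Prod.mk.injEq] at hab
    obtain ⟨rfl, rfl, hw⟩ := hab
    have hl := congrArg List.length hw
    simp only [List.length_append, List.length_reverse] at hl
    rcases lt_trichotomy v.1.length u.1.length with hlt | heq | hgt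
    · right
      rw [Matrix.mul_apply]
      apply Finset.sum_eq_zero
      intro r _
      rw [hlong (j, v') (by simp only; omega) r, mul_zero]
    · left
      have := List.append_inj hw (by simp [heq])
      have h1 : v = u := Subtype.ext (by simpa using this.1.symm)
      have h2 : v' = u := Subtype.ext this.2.symm
      simp [h1, h2]
    · right
      rw [Matrix.mul_apply]
      apply Finset.sum_eq_zero
      intro r _
      rw [Matrix.conjTranspose_apply, hlong (j, v) hgt r, star_zero, zero_mul]
  have h0 := h j (u.1.reverse ++ u.1) (by simp; omega)
  rw [Phi_apply, Finset.sum_eq_single (j, u), Finset.sum_eq_single (j, u), if_pos rfl,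
    Matrix.mul_apply] at h0
  · intro r
    have h1 : ∑ r, ‖B r (j, u)‖ ^ 2 = 0 := by
      have : ((∑ r, ‖B r (j, u)‖ ^ 2 : ℝ) : ℂ) = 0 := by
        rw [← h0]; push_cast
        apply Finset.sum_congr rfl
        intro r _
        rw [Matrix.conjTranspose_apply]
        exact (Complex.conj_mul' _).symm
      exact_mod_cast this
    rw [Finset.sum_eq_zero_iff_of_nonneg (fun _ _ => by positivity)] at h1
    simpa using h1 r (Finset.mem_univ r)
  · intro b _ hb
    split_ifs with hc
    · rcases key _ _ hc with h' | h'
      · exact absurd h'.2 hb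
      · exact h'
    · rfl
  · simp
  · intro a _ ha
    apply Finset.sum_eq_zero
    intro b _
    split_ifs with hc
    · rcases key _ _ hc with h' | h'
      · exact absurd h'.1 ha
      · exact h'
    · rfl
  · simp

/-- From a Gram matrix to a sum of squares. -/
lemma sos_of_gram {n d m : ℕ} (f : Matrix (Fin d) (Fin d) (FreeAlg n))
    (B : Matrix (Fin d × W n m) (Fin d × W n m) ℂ)
    (h : ∀ i j w, Phi (Bᴴ * B) (i, j, w) = cf w (f i j)) :
    ∃ (M : ℕ) (s : Fin M → Matrix (Fin d) (Fin d) (FreeAlg n)),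
        (∀ i, matDegLE (s i) (matDeg f / 2)) ∧ f = ∑ i, adjM (s i) * s i := by
  have hz : ∀ (j : Fin d) (u : W n m), matDeg f < 2 * u.1.length → ∀ r, B r (j, u) = 0 := by
    intro j u hu
    refine diag_aux (D := matDeg f + 1) B ?_ _ j u rfl hu
    intro j w hw
    rw [h]
    exact cf_eq_zero (matDegLE_matDeg f j j) hw
  let s : W n m → Matrix (Fin d) (Fin d) (FreeAlg n) :=
    fun u a j => ∑ v : W n m, B (a, u) (j, v) • word v.1
  refine ⟨Fintype.card (W n m), fun i => s ((Fintype.equivFin _).symm i), ?_, ?_⟩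
  · intro i a j
    apply Submodule.sum_mem
    intro v _
    by_cases hv : v.1.length ≤ matDeg f / 2
    · exact Submodule.smul_mem _ _ (word_mem hv)
    · rw [hz j v (by omega), zero_smul]
      exact Submodule.zero_mem _
  · rw [Equiv.sum_comp (Fintype.equivFin (W n m)).symm (fun u => adjM (s u) * s u)]
    have hsq : ∀ u i j w, cf w ((adjM (s u) * s u) i j) = ∑ a : Fin d, ∑ v : W n m, ∑ v' : W n m,
        (if v.1.reverse ++ v'.1 = w then star (B (a, u) (i, v)) * B (a, u) (j, v') else 0) := by
      intro u i j w
      rw [Matrix.mul_apply, map_sum]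
      refine Finset.sum_congr rfl fun a _ => ?_
      simp only [adjM, s, nstar_sum, nstar_smul, nstar_word,
        Finset.sum_mul_sum, smul_mul_smul_comm, ← word_append, map_sum, map_smul, cf_word,
        smul_eq_mul, mul_ite, mul_one, mul_zero]
    ext i j
    apply cf_ext
    intro w
    rw [← h, Phi_apply, Matrix.sum_apply, map_sum]
    simp only [hsq]
    simp only [Matrix.mul_apply, Fintype.sum_prod_type, Prod.mk.injEq, Matrix.conjTranspose_apply]
    rw [Finset.sum_eq_single i]
    · calc _ = ∑ v : W n m, ∑ v' : W n m, ∑ u : W n m, ∑ a : Fin d,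
            (if v.1.reverse ++ v'.1 = w then star (B (a, u) (i, v)) * B (a, u) (j, v') else 0) := by
            apply Finset.sum_congr rfl
            intro v _
            rw [Finset.sum_eq_single j]
            · apply Finset.sum_congr rfl
              intro v' _
              simp only [true_and]
              by_cases hc : v.1.reverse ++ v'.1 = w
              · simp only [hc, if_true]
                rw [Finset.sum_comm]
              · rw [if_neg (fun h => hc h.symm)]
                simp [hc]
            · intro b _ hb
              simp [Ne.symm hb]
            · simp
        _ = _ := by
            symm
            rw [Finset.sum_congr rfl (fun u _ => Finset.sum_comm)]
            rw [Finset.sum_comm]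
            apply Finset.sum_congr rfl
            intro v _
            rw [Finset.sum_congr rfl (fun u _ => Finset.sum_comm)]
            rw [Finset.sum_comm]
    · intro b _ hb
      simp [Ne.symm hb]
    · simp


/-! ### GNS construction -/

lemma gns {n d m : ℕ} (l : Fin d → Fin d → List (Fin n) → ℂ)
    (hl : ∀ i j w, star (l i j w) = l j i w.reverse)
    (hH : (Matrix.of fun a b : Fin d × W n m => l a.1 b.1 (a.2.1.reverse ++ b.2.1)).PosDef) :
    ∃ (k : ℕ) (X : Fin n → Matrix (Fin k) (Fin k) ℂ) (y : Fin d → Fin k → ℂ),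
      (∀ j, (X j).IsHermitian) ∧ ∀ i j w, w.length ≤ 2 * m →
        star (y i) ⬝ᵥ ((w.map X).prod *ᵥ y j) = l i j w := by
  let e := Fintype.equivFin (Fin d × W n m)
  set H := Matrix.of fun a b : Fin d × W n m => l a.1 b.1 (a.2.1.reverse ++ b.2.1) with hHdef
  have hH' : (H.submatrix e.symm e.symm).PosDef := hH.submatrix e.symm.injective
  obtain ⟨B, hB⟩ := psd_sqrt hH'.posSemidef
  have hBu : IsUnit B := by
    have h1 : IsUnit (Bᴴ * B).det := by
      rw [← hB]; exact (Matrix.isUnit_iff_isUnit_det _).1 hH'.isUnit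
    rw [Matrix.det_mul] at h1
    exact (Matrix.isUnit_iff_isUnit_det _).2 (isUnit_of_mul_isUnit_right h1)
  obtain ⟨C, hBC, hCB⟩ := hBu.exists_left_inv |>.elim fun C hC =>
    (⟨C, mul_eq_one_comm.1 hC, hC⟩ : ∃ C, B * C = 1 ∧ C * B = 1)
  have hCBh : Cᴴ * Bᴴ = 1 := by rw [← Matrix.conjTranspose_mul, hBC, Matrix.conjTranspose_one]
  let T : Fin n → Matrix (Fin (Fintype.card (Fin d × W n m))) (Fin (Fintype.card (Fin d × W n m))) ℂ :=
    fun x => Matrix.of fun p q => l (e.symm p).1 (e.symm q).1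
      ((e.symm p).2.1.reverse ++ (x :: (e.symm q).2.1))
  have hT : ∀ x, (T x).IsHermitian := by
    intro x
    ext p q
    simp only [Matrix.conjTranspose_apply, T, Matrix.of_apply, hl]
    simp
  let X := fun x => Cᴴ * T x * C
  have hX : ∀ x, (X x).IsHermitian := fun x => Matrix.isHermitian_conjTranspose_mul_mul C (hT x)
  let y : Fin d → W n m → Fin (Fintype.card (Fin d × W n m)) → ℂ :=
    fun i u => B *ᵥ Pi.single (e (i, u)) 1
  have hstep : ∀ (i : Fin d) (x : Fin n) (v : List (Fin n)) (hv : (x :: v).length ≤ m),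
      X x *ᵥ y i ⟨v, by simp at hv; omega⟩ = y i ⟨x :: v, hv⟩ := by
    intro i x v hv
    have h1 : T x *ᵥ Pi.single (e (i, ⟨v, by simp at hv; omega⟩)) 1 =
        (Bᴴ * B) *ᵥ Pi.single (e (i, ⟨x :: v, hv⟩)) 1 := by
      rw [← hB, Matrix.mulVec_single_one, Matrix.mulVec_single_one]
      ext p
      simp [T, H, Matrix.col_apply]
    simp only [X, y]
    rw [Matrix.mulVec_mulVec, Matrix.mul_assoc, hCB, Matrix.mul_one, ← Matrix.mulVec_mulVec, h1,
      Matrix.mulVec_mulVec, ← Matrix.mul_assoc, hCBh, Matrix.one_mul]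
  have hword : ∀ (i : Fin d) (w : List (Fin n)) (hw : w.length ≤ m),
      (w.map X).prod *ᵥ y i ⟨[], Nat.zero_le _⟩ = y i ⟨w, hw⟩ := by
    intro i w
    induction w with
    | nil => intro hw; simp
    | cons x v ih =>
      intro hw
      rw [List.map_cons, List.prod_cons, ← Matrix.mulVec_mulVec,
        ih (by simp at hw; omega), hstep]
  refine ⟨_, X, fun i => y i ⟨[], Nat.zero_le _⟩, hX, ?_⟩
  intro i j w hw
  obtain ⟨u, v, hu, hv, rfl⟩ : ∃ u v : List (Fin n), u.length ≤ m ∧ v.length ≤ m ∧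
      w = u.reverse ++ v :=
    ⟨(w.take m).reverse, w.drop m, by simp, by simp; omega, by simp⟩
  rw [List.map_append, List.prod_append, ← Matrix.mulVec_mulVec, hword j v hv,
    ← prod_herm X hX, Matrix.dotProduct_mulVec, ← Matrix.star_mulVec, hword i u hu]
  simp only [y]
  rw [Matrix.star_mulVec, ← Matrix.dotProduct_mulVec, Matrix.mulVec_mulVec, ← hB,
    Matrix.mulVec_single_one]
  have : star (Pi.single (e (i, (⟨u, hu⟩ : W n m))) (1 : ℂ) :
      Fin (Fintype.card (Fin d × W n m)) → ℂ) = Pi.single (e (i, ⟨u, hu⟩)) 1 := by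
    rw [← Pi.single_star, star_one]
  rw [this, single_one_dotProduct]
  simp [H, Matrix.col_apply]

/-! ### Separation -/

lemma trace_re {κ : Type*} [Fintype κ] (B : Matrix κ κ ℂ) :
    ((Bᴴ * B).trace).re = ∑ i, ∑ j, ‖B i j‖ ^ 2 := by
  rw [Finset.sum_comm]
  simp only [Matrix.trace, Matrix.diag, Matrix.mul_apply, Matrix.conjTranspose_apply,
    Complex.re_sum]
  refine Finset.sum_congr rfl fun i _ => Finset.sum_congr rfl fun j _ => ?_
  have : star (B j i) * B j i = ((‖B j i‖ ^ 2 : ℝ) : ℂ) := by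
    push_cast; exact Complex.conj_mul' _
  rw [this, Complex.ofReal_re]

lemma scale_sq {κ : Type*} [Fintype κ] (B : Matrix κ κ ℂ) (c : ℝ) :
    ((c : ℂ) • B)ᴴ * ((c : ℂ) • B) = ((c ^ 2 : ℝ) : ℂ) • (Bᴴ * B) := by
  rw [Matrix.conjTranspose_smul, Matrix.smul_mul, Matrix.mul_smul, smul_smul]
  congr 1
  simp [sq]

lemma compact_set {κ : Type*} [Fintype κ] :
    IsCompact {p : Matrix κ κ ℂ × ℝ | ((p.1ᴴ * p.1).trace).re + p.2 ^ 2 = 1} := by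
  have hK : IsCompact ((Set.univ.pi fun _ : κ => Set.univ.pi fun _ : κ =>
      Metric.closedBall (0 : ℂ) 1) ×ˢ Set.Icc (-1 : ℝ) 1) :=
    (isCompact_univ_pi fun _ => isCompact_univ_pi fun _ => isCompact_closedBall _ _).prod
      isCompact_Icc
  refine IsCompact.of_isClosed_subset hK ?_ ?_
  · refine isClosed_eq ?_ continuous_const
    refine Continuous.add (Complex.continuous_re.comp ?_) (by fun_prop)
    exact ((continuous_fst.matrix_conjTranspose).matrix_mul continuous_fst).matrix_trace
  · rintro ⟨B, b⟩ h
    simp only [Set.mem_setOf_eq, trace_re] at h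
    have h0 : 0 ≤ ∑ i, ∑ j, ‖B i j‖ ^ 2 := by positivity
    refine ⟨?_, ?_⟩
    · intro i _ j _
      rw [mem_closedBall_zero_iff]
      have h1 : ‖B i j‖ ^ 2 ≤ ∑ i, ∑ j, ‖B i j‖ ^ 2 :=
        (Finset.single_le_sum (f := fun j => ‖B i j‖ ^ 2) (fun _ _ => by positivity)
          (Finset.mem_univ j)).trans
        (Finset.single_le_sum (f := fun i => ∑ j, ‖B i j‖ ^ 2) (fun _ _ => by positivity)
          (Finset.mem_univ i))
      nlinarith [norm_nonneg (B i j), sq_nonneg b]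
    · constructor <;> nlinarith

lemma sep {n d m : ℕ} (fV : Fin d × Fin d × List (Fin n) → ℂ) (hf0 : fV ≠ 0)
    (hn : ∀ B : Matrix (Fin d × W n m) (Fin d × W n m) ℂ, Phi (Bᴴ * B) ≠ fV) :
    ∃ L : StrongDual ℂ (Fin d × Fin d × List (Fin n) → ℂ),
      (∀ B : Matrix (Fin d × W n m) (Fin d × W n m) ℂ, B ≠ 0 → 0 < (L (Phi (Bᴴ * B))).re) ∧
        (L fV).re < 0 := by
  have h0 : ∀ B : Matrix (Fin d × W n m) (Fin d × W n m) ℂ, Phi (Bᴴ * B) = 0 → B = 0 := by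
    intro B hB
    ext r ⟨j, u⟩
    exact diag_aux (D := 0) B (fun j w _ => by rw [hB]; rfl) _ j u rfl (Nat.zero_le _) r
  let S0 := {p : Matrix (Fin d × W n m) (Fin d × W n m) ℂ × ℝ |
    ((p.1ᴴ * p.1).trace).re + p.2 ^ 2 = 1}
  let g : Matrix (Fin d × W n m) (Fin d × W n m) ℂ × ℝ → (Fin d × Fin d × List (Fin n) → ℂ) :=
    fun p => Phi (p.1ᴴ * p.1) - ((p.2 ^ 2 : ℝ) : ℂ) • fV
  have hgc : Continuous g := by
    refine Continuous.sub ?_ ?_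
    · refine continuous_pi fun x => ?_
      simp only [Phi_apply]
      refine continuous_finset_sum _ fun a _ => continuous_finset_sum _ fun b _ => ?_
      split_ifs
      · exact ((continuous_fst.matrix_conjTranspose).matrix_mul continuous_fst).matrix_elem a b
      · exact continuous_const
    · exact (Complex.continuous_ofReal.comp (continuous_snd.pow 2)).smul continuous_const
  have hcomp : IsCompact (g '' S0) := compact_set.image hgc
  have hconv : Convex ℝ (g '' S0) := by
    rintro _ ⟨⟨B1, b1⟩, h1, rfl⟩ _ ⟨⟨B2, b2⟩, h2, rfl⟩ s t hs ht hst
    simp only [S0, Set.mem_setOf_eq] at h1 h2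
    have hpsd : (((s : ℝ) : ℂ) • (B1ᴴ * B1) + ((t : ℝ) : ℂ) • (B2ᴴ * B2)).PosSemidef :=
      ((Matrix.posSemidef_conjTranspose_mul_self B1).smul (by exact_mod_cast hs)).add
        ((Matrix.posSemidef_conjTranspose_mul_self B2).smul (by exact_mod_cast ht))
    obtain ⟨B, hB⟩ := psd_sqrt hpsd
    have hb : (√(s * b1 ^ 2 + t * b2 ^ 2)) ^ 2 = s * b1 ^ 2 + t * b2 ^ 2 :=
      Real.sq_sqrt (by positivity)
    refine ⟨(B, √(s * b1 ^ 2 + t * b2 ^ 2)), ?_, ?_⟩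
    · simp only [S0, Set.mem_setOf_eq, ← hB, hb, Matrix.trace_add, Matrix.trace_smul,
        Complex.add_re, smul_eq_mul, Complex.re_ofReal_mul]
      nlinarith
    · simp only [g, ← hB, hb, map_add, map_smul]
      ext x
      simp only [Pi.sub_apply, Pi.add_apply, Pi.smul_apply, smul_eq_mul, Complex.real_smul]
      push_cast
      ring
  have hz : (0 : Fin d × Fin d × List (Fin n) → ℂ) ∉ g '' S0 := by
    rintro ⟨⟨B, b⟩, hb, hg⟩
    simp only [S0, Set.mem_setOf_eq] at hb
    simp only [g, sub_eq_zero] at hg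
    by_cases hb0 : b = 0
    · subst hb0
      have : B = 0 := h0 B (by rw [hg]; simp)
      subst this
      simp at hb
    · apply hn (((b⁻¹ : ℝ) : ℂ) • B)
      rw [scale_sq, map_smul, hg, smul_smul, ← Complex.ofReal_mul]
      have : b⁻¹ ^ 2 * b ^ 2 = 1 := by field_simp
      rw [this]; simp
  obtain ⟨L, u, hu, hL⟩ := RCLike.geometric_hahn_banach_point_closed (𝕜 := ℂ) hconv
    hcomp.isClosed hz
  have hu0 : 0 < u := by simpa using hu
  refine ⟨L, ?_, ?_⟩
  · intro B hB
    have htr : 0 < ((Bᴴ * B).trace).re := by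
      rcases (show (0:ℝ) ≤ ((Bᴴ * B).trace).re by rw [trace_re]; positivity).lt_or_eq with h | h
      · exact h
      · exfalso
        apply hB
        rw [trace_re, eq_comm, Finset.sum_eq_zero_iff_of_nonneg (fun _ _ => by positivity)] at h
        ext i j
        have h' := h i (Finset.mem_univ i)
        rw [Finset.sum_eq_zero_iff_of_nonneg (fun _ _ => by positivity)] at h'
        simpa using h' j (Finset.mem_univ j)
    set τ := ((Bᴴ * B).trace).re with hτ
    have hs : (√τ)⁻¹ ^ 2 = τ⁻¹ := by rw [inv_pow, Real.sq_sqrt htr.le]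
    have hmem : ((((√τ)⁻¹ : ℝ) : ℂ) • B, (0 : ℝ)) ∈ S0 := by
      simp only [S0, Set.mem_setOf_eq, scale_sq, Matrix.trace_smul, smul_eq_mul,
        Complex.re_ofReal_mul, hs, ← hτ]
      field_simp
      ring
    have := hL _ ⟨_, hmem, rfl⟩
    simp only [g, scale_sq, hs] at this
    simp only [map_smul, smul_eq_mul, ne_eq, OfNat.ofNat_ne_zero, not_false_eq_true, zero_pow,
      Complex.ofReal_zero, zero_smul, sub_zero, RCLike.re_eq_complex_re,
      Complex.re_ofReal_mul] at this
    have h2 := hu0.trans this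
    exact (pos_iff_pos_of_mul_pos h2).1 (by positivity)
  · have hmem : ((0 : Matrix (Fin d × W n m) (Fin d × W n m) ℂ), (1 : ℝ)) ∈ S0 := by
      simp [S0]
    have := hL _ ⟨_, hmem, rfl⟩
    simp [g] at this
    linarith


lemma hard {n d : ℕ} (f : Matrix (Fin d) (Fin d) (FreeAlg n)) (hf : IsHermPoly f)
    (hpos : ∀ (k : ℕ) (X : Fin n → Matrix (Fin k) (Fin k) ℂ), (∀ j, (X j).IsHermitian) →
        (evalM f X).PosSemidef) :
    ∃ B : Matrix (Fin d × W n (matDeg f)) (Fin d × W n (matDeg f)) ℂ,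
      ∀ i j w, Phi (Bᴴ * B) (i, j, w) = cf w (f i j) := by
  set m := matDeg f with hm
  have hdeg : ∀ i j, f i j ∈ degLE n m := matDegLE_matDeg f
  let fV : Fin d × Fin d × List (Fin n) → ℂ := fun t => cf t.2.2 (f t.1 t.2.1)
  by_contra hcon
  have hn : ∀ B : Matrix (Fin d × W n m) (Fin d × W n m) ℂ, Phi (Bᴴ * B) ≠ fV := by
    intro B hB
    exact hcon ⟨B, fun i j w => by rw [hB]⟩
  have hf0 : fV ≠ 0 := by
    intro h
    apply hn 0
    rw [h]; simp
  obtain ⟨L, hL1, hL2⟩ := sep fV hf0 hn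
  let l0 : Fin d → Fin d → List (Fin n) → ℂ := fun i j w => L (Pi.single (i, j, w) 1)
  let l : Fin d → Fin d → List (Fin n) → ℂ := fun i j w => l0 i j w + star (l0 j i w.reverse)
  have hl : ∀ i j w, star (l i j w) = l j i w.reverse := by
    intro i j w
    simp only [l, star_add, star_star, List.reverse_reverse]
    ring
  have hfexp : fV = ∑ i, ∑ j, ∑ w : W n m, cf w.1 (f i j) • Pi.single (i, j, w.1) (1 : ℂ) := by
    ext ⟨i, j, v⟩
    simp only [Finset.sum_apply, Pi.smul_apply, Pi.single_apply, smul_eq_mul, mul_ite, mul_one,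
      mul_zero, Prod.mk.injEq]
    rw [Finset.sum_eq_single i, Finset.sum_eq_single j]
    · change cf v (f i j) = _
      conv_lhs => rw [expand (hdeg i j)]
      simp only [map_sum, map_smul, cf_word, smul_eq_mul, mul_ite, mul_one, mul_zero, true_and]
      refine Finset.sum_congr rfl fun w _ => ?_
      simp only [eq_comm]
    · intro b _ hb; simp [Ne.symm hb]
    · simp
    · intro b _ hb; simp [Ne.symm hb]
    · simp
  have hLf : L fV = ∑ i, ∑ j, ∑ w : W n m, cf w.1 (f i j) * l0 i j w.1 := by
    conv_lhs => rw [hfexp]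
    simp only [map_sum, map_smul, smul_eq_mul, l0]
  let rev : W n m ≃ W n m :=
    { toFun := fun w => ⟨w.1.reverse, by simpa using w.2⟩
      invFun := fun w => ⟨w.1.reverse, by simpa using w.2⟩
      left_inv := fun w => by simp
      right_inv := fun w => by simp }
  have hsum : ∑ i, ∑ j, ∑ w : W n m, cf w.1 (f i j) * l i j w.1 = L fV + star (L fV) := by
    rw [hLf]
    simp only [l, mul_add, Finset.sum_add_distrib, star_sum]
    congr 1
    rw [Finset.sum_comm]
    refine Finset.sum_congr rfl fun i _ => Finset.sum_congr rfl fun j _ => ?_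
    rw [← Equiv.sum_comp rev]
    refine Finset.sum_congr rfl fun w _ => ?_
    simp only [rev, Equiv.coe_fn_mk, List.reverse_reverse, star_mul']
    rw [hf j i, cf_nstar, List.reverse_reverse]
  have hH : (Matrix.of fun a b : Fin d × W n m =>
      l a.1 b.1 (a.2.1.reverse ++ b.2.1)).PosDef := by
    refine Matrix.PosDef.of_dotProduct_mulVec_pos ?_ ?_
    · ext a b
      simp only [Matrix.conjTranspose_apply, Matrix.of_apply, hl]
      simp
    · intro p hp
      -- the matrix all of whose rows vanish except one equal to `p`
      obtain ⟨a0, ha0⟩ : ∃ a, p a ≠ 0 := by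
        by_contra h; push Not at h; exact hp (funext h)
      let B : Matrix (Fin d × W n m) (Fin d × W n m) ℂ :=
        Matrix.of fun r a => if r = a0 then p a else 0
      have hB0 : B ≠ 0 := by
        intro h
        have := congrFun (congrFun h a0) a0
        simp [B] at this
        exact ha0 this
      have hBB : ∀ a b, (Bᴴ * B) a b = star (p a) * p b := by
        intro a b
        rw [Matrix.mul_apply, Finset.sum_eq_single a0]
        · simp [B]
        · intro r _ hr; simp [B, hr]
        · simp
      have h1 := hL1 B hB0
      set z := L (Phi (Bᴴ * B)) with hz
      have hz' : z = ∑ a, ∑ b, star (p a) * p b * l0 a.1 b.1 (a.2.1.reverse ++ b.2.1) := by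
        rw [hz, Phi_def]
        simp only [map_sum, map_smul, smul_eq_mul, hBB, l0]
      have hq : star p ⬝ᵥ ((Matrix.of fun a b : Fin d × W n m =>
          l a.1 b.1 (a.2.1.reverse ++ b.2.1)) *ᵥ p) = z + star z := by
        conv_rhs => rw [hz']
        simp only [dotProduct, Matrix.mulVec, Matrix.of_apply, Finset.mul_sum, l, star_sum,
          Pi.star_apply]
        rw [Finset.sum_comm (f := fun a b => star (star (p a) * p b *
          l0 a.1 b.1 (a.2.1.reverse ++ b.2.1))), ← Finset.sum_add_distrib]
        refine Finset.sum_congr rfl fun a _ => ?_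
        rw [← Finset.sum_add_distrib]
        refine Finset.sum_congr rfl fun b _ => ?_
        simp only [star_mul', star_star, List.reverse_append, List.reverse_reverse]
        ring
      rw [hq]
      have : z + star z = ((2 * z.re : ℝ) : ℂ) := Complex.add_conj z
      rw [this]
      exact_mod_cast (by positivity : (0 : ℝ) < 2 * z.re)
  obtain ⟨k, X, y, hX, hy⟩ := gns l hl hH
  have hp := (hpos k X hX).dotProduct_mulVec_nonneg (fun q => y q.1 q.2)
  have heq : star (fun q : Fin d × Fin k => y q.1 q.2) ⬝ᵥ
      (evalM f X *ᵥ fun q : Fin d × Fin k => y q.1 q.2) =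
      ∑ i, ∑ j, ∑ w : W n m, cf w.1 (f i j) * l i j w.1 := by
    calc _ = ∑ i, ∑ j, star (y i) ⬝ᵥ (FreeAlgebra.lift ℂ X (f i j) *ᵥ y j) := by
          simp only [dotProduct, Matrix.mulVec, evalM, Fintype.sum_prod_type, Pi.star_apply,
            Finset.mul_sum]
          refine Finset.sum_congr rfl fun i _ => ?_
          rw [Finset.sum_comm]
      _ = _ := by
          refine Finset.sum_congr rfl fun i _ => Finset.sum_congr rfl fun j _ => ?_
          conv_lhs => rw [expand (hdeg i j)]
          simp only [map_sum, map_smul, lift_word, Matrix.sum_mulVec, Matrix.smul_mulVec,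
            dotProduct_sum, dotProduct_smul, smul_eq_mul]
          refine Finset.sum_congr rfl fun w _ => ?_
          rw [hy i j w.1 (by have := w.2; omega)]
  rw [heq, hsum] at hp
  have h2 : L fV + star (L fV) = ((2 * (L fV).re : ℝ) : ℂ) := Complex.add_conj _
  rw [h2] at hp
  have h3 : (0 : ℝ) ≤ 2 * (L fV).re := by exact_mod_cast hp
  linarith

end FH

/-- free Hilbert 17th problem, Helton; McCullough: `f = f*` is positive
semidefinite at all hermitian matrix tuples iff it is a sum of hermitian squares with
degrees at most `⌊deg f / 2⌋`. -/
theorem free_hilbert_17th {n d : ℕ}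
    (f : Matrix (Fin d) (Fin d) (FreeAlg n)) (hf : IsHermPoly f) :
    (∀ (k : ℕ) (X : Fin n → Matrix (Fin k) (Fin k) ℂ), (∀ j, (X j).IsHermitian) →
        (evalM f X).PosSemidef) ↔
      (∃ (M : ℕ) (s : Fin M → Matrix (Fin d) (Fin d) (FreeAlg n)),
        (∀ i, matDegLE (s i) (matDeg f / 2)) ∧
        f = ∑ i, adjM (s i) * s i) := by
  constructor
  · intro h
    obtain ⟨B, hB⟩ := FH.hard f hf h
    exact FH.sos_of_gram f B hB
  · rintro ⟨M, s, -, hs⟩ k X hX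
    rw [hs]
    exact FH.easy X hX s
end
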